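/- Let Ω ⊂ ℝⁿ be a bounded Lipschitz domain, let f ∈ C¹([0,∞)) be convex with f(0) = f'(0) = 0 and of linear growth νt − L ≤ f(t) ≤ L(t+1) for all t ≥ 0, and let T₀ ∈ L^∞(Ω;ℝ^{N×n}) satisfy ‖T₀‖_{L^∞(Ω;ℝ^{N×n})} < f^∞(1). Let u_k ∈ W^{1,2}(Ω;ℝ^N) be, for each k ∈ ℕ, the minimiser of 𝔉_k with (u_k)_Ω = 0. Then (u_k) is a minimising sequence for 𝔉 in W^{1,1}(Ω;ℝ^N), with lim_{k→∞} inf_{W^{1,2}(Ω;ℝ^N)} 𝔉_k = inf_{W^{1,1}(Ω;ℝ^N)} 𝔉; moreover k^{−1/2} ∇u_k → 0 strongly in L²(Ω;ℝ^{N×n}) and sup_{k∈ℕ} (‖u_k‖_{W^{1,1}(Ω;ℝ^N)} + k⁻¹‖u_k‖²_{W^{1,2}(Ω;ℝ^N)}) < ∞. -/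

import Mathlib

open MeasureTheory Filter Topology Set
open scoped ENNReal RealInnerProductSpace

noncomputable section

/-- Euclidean space `ℝⁿ`. -/
abbrev EVec (n : ℕ) := EuclideanSpace ℝ (Fin n)

/-- Frobenius inner product of two "matrices". -/
def mdot {ι κ : Type*} [Fintype ι] [Fintype κ] (A B : ι → κ → ℝ) : ℝ :=
  ∑ a, ∑ i, A a i * B a i

/-- Frobenius norm. -/
noncomputable def mnorm {ι κ : Type*} [Fintype ι] [Fintype κ] (A : ι → κ → ℝ) : ℝ :=
  Real.sqrt (mdot A A)

/-- Euclidean norm of a vector given as a tuple. -/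
noncomputable def vnorm {ι : Type*} [Fintype ι] (v : ι → ℝ) : ℝ :=
  Real.sqrt (∑ a, v a ^ 2)

/-- `Ω ⊆ ℝⁿ` is a (nonempty, open, connected) Lipschitz domain: every boundary point has
a neighbourhood on which `Ω` can be flattened to a half space by a bi-Lipschitz map. -/
def IsLipschitzDomain {n : ℕ} (Ω : Set (EVec n)) : Prop :=
  IsOpen Ω ∧ Ω.Nonempty ∧ IsConnected Ω ∧
  ∀ x ∈ frontier Ω, ∃ (U : Set (EVec n)) (h hinv : EVec n → EVec n) (K : NNReal)
      (e : EVec n),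
    ‖e‖ = 1 ∧ IsOpen U ∧ x ∈ U ∧ LipschitzOnWith K h U ∧
    LipschitzOnWith K hinv (h '' U) ∧ (∀ y ∈ U, hinv (h y) = y) ∧
    h '' (U ∩ Ω) = (h '' U) ∩ {y : EVec n | 0 < ⟪e, y⟫}

/-- `Du` is the weak (distributional) gradient of `u` on `Ω`, and both are integrable;
i.e. `u ∈ W^{1,1}(Ω; ℝ^ι)` with weak gradient `Du`. -/
def HasWeakDerivOn {n : ℕ} {ι : Type*} [Fintype ι] (Ω : Set (EVec n))
    (u : EVec n → ι → ℝ) (Du : EVec n → ι → Fin n → ℝ) : Prop :=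
  IntegrableOn u Ω volume ∧ IntegrableOn Du Ω volume ∧
  ∀ φ : EVec n → ℝ, ContDiff ℝ 1 φ → HasCompactSupport φ → tsupport φ ⊆ Ω →
    ∀ (a : ι) (i : Fin n),
      ∫ x in Ω, u x a * fderiv ℝ φ x (EuclideanSpace.single i 1) =
        - ∫ x in Ω, Du x a i * φ x

/-- `u ∈ W^{1,2}(Ω;ℝ^ι)` with weak gradient `Du`. -/
def MemW12 {n : ℕ} {ι : Type*} [Fintype ι] (Ω : Set (EVec n))
    (u : EVec n → ι → ℝ) (Du : EVec n → ι → Fin n → ℝ) : Prop :=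
  HasWeakDerivOn Ω u Du ∧ IntegrableOn (fun x => vnorm (u x) ^ 2) Ω volume ∧
    IntegrableOn (fun x => mnorm (Du x) ^ 2) Ω volume

/-- vanishing mean value `(u)_Ω = 0`. -/
def ZeroMean {n : ℕ} {ι : Type*} [Fintype ι] (Ω : Set (EVec n))
    (u : EVec n → ι → ℝ) : Prop :=
  ∀ a : ι, ∫ x in Ω, u x a = 0

/-- The `L^∞(Ω)` norm of a matrix field (w.r.t. the pointwise Frobenius norm). -/
noncomputable def linfNormOn {n N : ℕ} (Ω : Set (EVec n))
    (T : EVec n → Fin N → Fin n → ℝ) : ℝ≥0∞ :=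
  essSup (fun x => ENNReal.ofReal (mnorm (T x))) (volume.restrict Ω)

/-- `T ∈ W^{1,∞}(Ω)`: bounded and Lipschitz on `Ω`. -/
def MemW1inf {n N : ℕ} (Ω : Set (EVec n)) (T : EVec n → Fin N → Fin n → ℝ) : Prop :=
  ∃ C : NNReal, (∀ x ∈ Ω, ‖T x‖ ≤ C) ∧ LipschitzOnWith C T Ω

/-- `T ∈ W^{2,∞}(Ω)`: `T` is bounded with bounded Lipschitz derivative on `Ω`. -/
def MemW2inf {n N : ℕ} (Ω : Set (EVec n)) (T : EVec n → Fin N → Fin n → ℝ) : Prop :=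
  ∃ (C : NNReal) (DT : EVec n → EVec n →L[ℝ] (Fin N → Fin n → ℝ)),
    (∀ x ∈ Ω, ‖T x‖ ≤ C) ∧ (∀ x ∈ Ω, HasFDerivWithinAt T (DT x) Ω x) ∧
    (∀ x ∈ Ω, ‖DT x‖ ≤ C) ∧ LipschitzOnWith C DT Ω

/-- The nonlinear map `A(z) = f'(|z|) z / |z|` (equal to `0` at `z = 0`). -/
noncomputable def Amap {N n : ℕ} (f' : ℝ → ℝ) (z : Fin N → Fin n → ℝ) :
    Fin N → Fin n → ℝ :=
  fun a i => (f' (mnorm z) / mnorm z) * z a i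

/-- `u` is a weak solution of the Neumann problem for the integrand `f(|·|)` and datum `T₀`. -/
def IsWeakSolution {n N : ℕ} (Ω : Set (EVec n)) (f' : ℝ → ℝ)
    (T₀ : EVec n → Fin N → Fin n → ℝ)
    (u : EVec n → Fin N → ℝ) (Du : EVec n → Fin N → Fin n → ℝ) : Prop :=
  HasWeakDerivOn Ω u Du ∧
  ∀ φ Dφ, HasWeakDerivOn Ω φ Dφ →
    ∫ x in Ω, mdot (Amap f' (Du x)) (Dφ x) = ∫ x in Ω, mdot (T₀ x) (Dφ x)

/-- The functional `𝔉[w] = ∫_Ω (f(|∇w|) − T₀ · ∇w) dx` (as a function of the gradient). -/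
noncomputable def FF {n N : ℕ} (Ω : Set (EVec n)) (f : ℝ → ℝ)
    (T₀ : EVec n → Fin N → Fin n → ℝ) (Du : EVec n → Fin N → Fin n → ℝ) : ℝ :=
  ∫ x in Ω, (f (mnorm (Du x)) - mdot (T₀ x) (Du x))

/-- The regularised functional `𝔉_k[w] = 𝔉[w] + (2k)⁻¹ ∫_Ω |∇w|² dx`. -/
noncomputable def FFk {n N : ℕ} (Ω : Set (EVec n)) (f : ℝ → ℝ)
    (T₀ : EVec n → Fin N → Fin n → ℝ) (k : ℕ)
    (Du : EVec n → Fin N → Fin n → ℝ) : ℝ :=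
  FF Ω f T₀ Du + (2 * (k : ℝ))⁻¹ * ∫ x in Ω, mnorm (Du x) ^ 2

end

open scoped NNReal

/-!
Convexity, `f'(0) = 0` and linear growth make `f` globally Lipschitz on `[0, ∞)`, so `𝔉` is
Lipschitz with respect to the `L¹` distance of gradients, and `‖T₀‖_∞ < f^∞(1)` makes `𝔉` coercive
in `‖∇w‖_{L¹}`. Lipschitz functions are dense in `W^{1,1}(Ω)`, hence every value `𝔉[w]` is
approached by competitors in `W^{1,2}(Ω)`. Testing the minimality of `u_k` with such a fixed
competitor and letting `k → ∞` gives `lim 𝔉_k[u_k] = inf 𝔉`; since `inf 𝔉 ≤ 𝔉[u_k] ≤ 𝔉_k[u_k]`, the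
regularising term vanishes in the limit. Coercivity and the Poincaré inequality give the uniform
bounds.

Density is proved by a partition of unity: inside a bi-Lipschitz boundary chart the function is
pulled back to the half space, translated inwards and mollified. This needs the chart images to be
open, i.e. invariance of domain for Lipschitz maps with a Lipschitz left inverse. It follows from
the absence of a Lipschitz retraction of the ball onto the sphere, because the Jacobian of a
Lipschitz map fixing the sphere integrates to the volume of the ball. The Poincaré inequality is
first shown on convex sets and transported through the charts; overlapping pieces are then chained
along the connected set `Ω`.
-/

section LipschitzJacobian

theorem eval_eq_sum_eval_mul_eval_lagrange_basis {F ι : Type*} [Field F] [Fintype ι]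
    [DecidableEq ι] {v : ι → F} (hv : Function.Injective v) {p : Polynomial F}
    (hp : p.natDegree < Fintype.card ι) (x : F) :
    p.eval x = ∑ j, p.eval (v j) * (Lagrange.basis Finset.univ v j).eval x := by
  have hdeg : p.degree < (Finset.univ : Finset ι).card :=
    Polynomial.degree_le_natDegree.trans_lt (by exact_mod_cast hp)
  conv_lhs => rw [Lagrange.eq_interpolate hv.injOn hdeg]
  simp [Lagrange.interpolate_apply, Polynomial.eval_finsetSum]

theorem bijective_id_add_of_lipschitzWith {E : Type*} [NormedAddCommGroup E] [CompleteSpace E]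
    {c : ℝ≥0} (hc : c < 1) {ψ : E → E} (hψ : LipschitzWith c ψ) :
    Function.Bijective fun x => x + ψ x := by
  refine Function.bijective_iff_existsUnique _ |>.2 fun y => ?_
  have hcontr : ContractingWith c fun x => y - ψ x :=
    ⟨hc, by simpa using (LipschitzWith.const y).sub hψ⟩
  refine ⟨_, eq_sub_iff_add_eq.1 hcontr.fixedPoint_isFixedPt.symm, fun x hx => ?_⟩
  exact hcontr.fixedPoint_unique (eq_sub_iff_add_eq.2 hx).symm

theorem image_eq_self_of_bijective_of_eqOn_compl {α : Type*} {g : α → α} {s : Set α}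
    (hg : Function.Bijective g) (h : EqOn g id sᶜ) : g '' s = s := by
  rw [← compl_inj_iff, ← image_compl_eq hg, h.image_eq, image_id]

variable {E : Type*} [NormedAddCommGroup E] [NormedSpace ℝ E] [FiniteDimensional ℝ E]

theorem det_id_add_nonneg_of_norm_lt_one {A : E →L[ℝ] E} (hA : ‖A‖ < 1) :
    0 ≤ (ContinuousLinearMap.id ℝ E + A).det := by
  have : CompleteSpace E := FiniteDimensional.complete ℝ E
  by_contra! hneg
  have hcont : Continuous fun t : ℝ => (ContinuousLinearMap.id ℝ E + t • A).det :=
    ContinuousLinearMap.continuous_det.comp (by fun_prop)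
  obtain ⟨t, ht, hdet⟩ : ∃ t ∈ Icc (0 : ℝ) 1, (ContinuousLinearMap.id ℝ E + t • A).det = 0 :=
    intermediate_value_Icc' zero_le_one hcont.continuousOn
      ⟨by simpa using hneg.le, by simp [ContinuousLinearMap.det]⟩
  have hsmall : ‖-(t • A)‖ < 1 := by
    rw [norm_neg, norm_smul, Real.norm_of_nonneg ht.1]
    exact (mul_le_of_le_one_left (norm_nonneg A) ht.2).trans_lt hA
  have hunit : IsUnit (ContinuousLinearMap.id ℝ E + t • A) := by
    rw [← sub_neg_eq_add]
    exact isUnit_one_sub_of_norm_lt_one hsmall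
  exact (LinearMap.isUnit_det _ (hunit.map ContinuousLinearMap.toLinearMapRingHom)).ne_zero hdet

theorem measurable_det_smul_id_add_fderiv [MeasurableSpace E] [BorelSpace E] (ψ : E → E) (s : ℝ) :
    Measurable fun x => (s • ContinuousLinearMap.id ℝ E + fderiv ℝ ψ x).det :=
  ContinuousLinearMap.continuous_det.measurable.comp ((measurable_fderiv ℝ ψ).const_add _)

variable [MeasurableSpace E] [BorelSpace E] (μ : Measure E)

theorem integrableOn_det_smul_id_add_fderiv {M : ℝ≥0} {ψ : E → E} (hψ : LipschitzWith M ψ)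
    {s : Set E} (hs : μ s ≠ ∞) (t : ℝ) :
    IntegrableOn (fun x => (t • ContinuousLinearMap.id ℝ E + fderiv ℝ ψ x).det) s μ := by
  have hcont : Continuous fun A : E →L[ℝ] E => (t • ContinuousLinearMap.id ℝ E + A).det :=
    ContinuousLinearMap.continuous_det.comp (by fun_prop)
  obtain ⟨C, hC⟩ := ((isCompact_closedBall (0 : E →L[ℝ] E) M).image hcont).isBounded.exists_norm_le
  refine Measure.integrableOn_of_bounded (M := C) hs
    (measurable_det_smul_id_add_fderiv ψ t).aestronglyMeasurable (ae_of_all _ fun x => hC _ ?_)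
  exact mem_image_of_mem _ (by simpa using norm_fderiv_le_of_lipschitz ℝ hψ)

variable [μ.IsAddHaarMeasure]

theorem addHaar_image_le_of_lipschitzOnWith {K : ℝ≥0} {g : E → E} {s : Set E}
    (hg : LipschitzOnWith K g s) :
    μ (g '' s) ≤ (K : ℝ≥0∞) ^ Module.finrank ℝ E * μ s := by
  have hH := hg.hausdorffMeasure_image_le (d := Module.finrank ℝ E) (by positivity)
  rw [ENNReal.rpow_natCast] at hH
  rw [Measure.isAddLeftInvariant_eq_smul μ (Measure.hausdorffMeasure (Module.finrank ℝ E : ℝ)),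
    Measure.smul_apply, Measure.smul_apply, mul_smul_comm]
  gcongr

theorem lintegral_abs_det_fderiv_of_lipschitz {K : ℝ≥0} {g : E → E} (hg : LipschitzWith K g)
    {s : Set E} (hs : MeasurableSet s) (hinj : InjOn g s) :
    ∫⁻ x in s, ENNReal.ofReal |(fderiv ℝ g x).det| ∂μ = μ (g '' s) := by
  set D := {x | DifferentiableAt ℝ g x}
  have hD : MeasurableSet D := measurableSet_of_differentiableAt ℝ g
  have hnull : μ (s \ D) = 0 := measure_mono_null inter_subset_right hg.ae_differentiableAt
  have himage_null : μ (g '' (s \ D)) = 0 := by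
    simpa [hnull] using addHaar_image_le_of_lipschitzOnWith μ (hg.lipschitzOnWith (s := s \ D))
  have hsD : (s ∩ D : Set E) =ᵐ[μ] s := by
    rw [← Set.sdiff_sdiff_right_self]
    exact sdiff_null_ae_eq_self hnull
  calc ∫⁻ x in s, ENNReal.ofReal |(fderiv ℝ g x).det| ∂μ
      = ∫⁻ x in s ∩ D, ENNReal.ofReal |(fderiv ℝ g x).det| ∂μ := (setLIntegral_congr hsD).symm
    _ = μ (g '' (s ∩ D)) := lintegral_abs_det_fderiv_eq_addHaar_image μ (hs.inter hD)
        (fun x hx => hx.2.hasFDerivAt.hasFDerivWithinAt) (hinj.mono inter_subset_left)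
    _ = μ (g '' (s ∩ D) ∪ g '' (s \ D)) := (measure_congr <|
        union_ae_eq_left_of_ae_eq_empty (ae_eq_empty.2 himage_null)).symm
    _ = μ (g '' s) := by rw [← image_union, inter_union_sdiff]

theorem integral_det_id_add_fderiv_of_lipschitz_lt_one {c : ℝ≥0} (hc : c < 1) {ψ : E → E}
    (hψ : LipschitzWith c ψ) {s : Set E} (hs : MeasurableSet s) (hzero : ∀ x ∉ s, ψ x = 0) :
    ∫ x in s, (ContinuousLinearMap.id ℝ E + fderiv ℝ ψ x).det ∂μ = μ.real s := by
  have : CompleteSpace E := FiniteDimensional.complete ℝ E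
  have hbij := bijective_id_add_of_lipschitzWith hc hψ
  have himage : (fun x => x + ψ x) '' s = s :=
    image_eq_self_of_bijective_of_eqOn_compl hbij fun x hx => by simp [hzero x hx]
  have hnonneg x : 0 ≤ (ContinuousLinearMap.id ℝ E + fderiv ℝ ψ x).det :=
    det_id_add_nonneg_of_norm_lt_one ((norm_fderiv_le_of_lipschitz ℝ hψ).trans_lt hc)
  have hmeas : Measurable fun x => (ContinuousLinearMap.id ℝ E + fderiv ℝ ψ x).det := by
    simpa using measurable_det_smul_id_add_fderiv ψ 1
  have hfderiv : ∀ᵐ x ∂μ.restrict s, ENNReal.ofReal (ContinuousLinearMap.id ℝ E + fderiv ℝ ψ x).det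
      = ENNReal.ofReal |(fderiv ℝ (fun x => x + ψ x) x).det| := by
    filter_upwards [ae_restrict_of_ae hψ.ae_differentiableAt] with x hx
    rw [fderiv_fun_add differentiableAt_fun_id hx, fderiv_fun_id, abs_of_nonneg (hnonneg x)]
  have hlip : LipschitzWith (1 + c) fun x => x + ψ x := LipschitzWith.id.add hψ
  rw [integral_eq_lintegral_of_nonneg_ae (ae_of_all _ hnonneg) hmeas.aestronglyMeasurable,
    lintegral_congr_ae hfderiv,
    lintegral_abs_det_fderiv_of_lipschitz μ hlip hs hbij.injective.injOn, himage, Measure.real]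

theorem integral_det_smul_id_add_fderiv_of_lipschitz_lt {M : ℝ≥0} {ψ : E → E}
    (hψ : LipschitzWith M ψ) {s : Set E} (hs : MeasurableSet s) (hzero : ∀ x ∉ s, ψ x = 0)
    {t : ℝ} (ht : M < t) :
    ∫ x in s, (t • ContinuousLinearMap.id ℝ E + fderiv ℝ ψ x).det ∂μ
      = t ^ Module.finrank ℝ E * μ.real s := by
  have ht0 : 0 < t := M.coe_nonneg.trans_lt ht
  have hscale : LipschitzWith (‖t⁻¹‖₊ * M) (t⁻¹ • ψ) := (lipschitzWith_smul t⁻¹).comp hψ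
  have hlt : ‖t⁻¹‖₊ * M < 1 := by
    rw [← NNReal.coe_lt_coe]
    simpa [abs_of_pos ht0, inv_mul_lt_iff₀ ht0] using ht
  rw [← integral_det_id_add_fderiv_of_lipschitz_lt_one μ hlt hscale hs
    fun x hx => by simp [hzero x hx], ← integral_const_mul]
  refine integral_congr_ae (ae_of_all _ fun x => ?_)
  have : t • ContinuousLinearMap.id ℝ E + fderiv ℝ ψ x
      = t • (ContinuousLinearMap.id ℝ E + fderiv ℝ (t⁻¹ • ψ) x) := by
    rw [fderiv_const_smul_field, smul_add, Pi.smul_apply, smul_inv_smul₀ ht0.ne']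
  simp only [this]
  exact LinearMap.det_smul _ _

/- Both sides of `integral_det_smul_id_add_fderiv_of_lipschitz_lt` are polynomials in `t` of degree
at most `dim E`; they agree for large `t`, hence at `t = 1`. -/
theorem integral_det_id_add_fderiv_of_lipschitz {M : ℝ≥0} {ψ : E → E}
    (hψ : LipschitzWith M ψ) {s : Set E} (hs : MeasurableSet s) (hsfin : μ s ≠ ∞)
    (hzero : ∀ x ∉ s, ψ x = 0) :
    ∫ x in s, (ContinuousLinearMap.id ℝ E + fderiv ℝ ψ x).det ∂μ = μ.real s := by
  classical
  set d := Module.finrank ℝ E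
  let v : Fin (d + 1) → ℝ := fun j => M + 1 + j
  let w : Fin (d + 1) → ℝ := fun j => (Lagrange.basis Finset.univ v j).eval 1
  have hv : Function.Injective v := fun i j h => Fin.ext (by simpa [v] using h)
  have hpow : ∑ j, v j ^ d * w j = 1 := by
    simpa using (eval_eq_sum_eval_mul_eval_lagrange_basis hv
      (p := Polynomial.X ^ d) (by simp) 1).symm
  have hdet x : (ContinuousLinearMap.id ℝ E + fderiv ℝ ψ x).det
      = ∑ j, (v j • ContinuousLinearMap.id ℝ E + fderiv ℝ ψ x).det * w j := by
    have heval (t : ℝ) : (-(fderiv ℝ ψ x : E →ₗ[ℝ] E)).charpoly.eval t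
        = (t • ContinuousLinearMap.id ℝ E + fderiv ℝ ψ x).det := by
      rw [LinearMap.eval_charpoly, sub_neg_eq_add, Algebra.algebraMap_eq_smul_one]
      rfl
    simpa [heval] using eval_eq_sum_eval_mul_eval_lagrange_basis hv
      (p := (-(fderiv ℝ ψ x : E →ₗ[ℝ] E)).charpoly) (by simp [LinearMap.charpoly_natDegree, d]) 1
  calc ∫ x in s, (ContinuousLinearMap.id ℝ E + fderiv ℝ ψ x).det ∂μ
      = ∑ j, (∫ x in s, (v j • ContinuousLinearMap.id ℝ E + fderiv ℝ ψ x).det ∂μ) * w j := by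
        simp_rw [hdet, ← integral_mul_const]
        exact integral_finsetSum _ fun j _ =>
          (integrableOn_det_smul_id_add_fderiv μ hψ hsfin (v j)).mul_const (w j)
    _ = ∑ j, v j ^ d * w j * μ.real s := Finset.sum_congr rfl fun j _ => by
        rw [integral_det_smul_id_add_fderiv_of_lipschitz_lt μ hψ hs hzero
          (by simp only [v]; linarith [(j : ℕ).cast_nonneg (α := ℝ)]), mul_right_comm]
    _ = μ.real s := by rw [← Finset.sum_mul, hpow, one_mul]

end LipschitzJacobian

section InvarianceOfDomain

theorem lipschitzWith_smul_of_bounded {α F : Type*} [PseudoMetricSpace α] [NormedAddCommGroup F]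
    [NormedSpace ℝ F] {a : α → ℝ} {b : α → F} {Ka Kb A B : ℝ≥0} (ha : LipschitzWith Ka a)
    (hb : LipschitzWith Kb b) (hA : ∀ x, |a x| ≤ A) (hB : ∀ x, a x ≠ 0 → ‖b x‖ ≤ B) :
    LipschitzWith (A * Kb + Ka * B) fun x => a x • b x := by
  have key x y (hy : a y ≠ 0) : dist (a x • b x) (a y • b y) ≤ (A * Kb + Ka * B) * dist x y := by
    have hsplit : a x • b x - a y • b y = a x • (b x - b y) + (a x - a y) • b y := by
      simp [smul_sub, sub_smul]
    calc dist (a x • b x) (a y • b y) ≤ |a x| * dist (b x) (b y) + dist (a x) (a y) * ‖b y‖ := by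
          rw [dist_eq_norm, hsplit, dist_eq_norm, dist_eq_norm, ← Real.norm_eq_abs, ← norm_smul,
            ← norm_smul]
          exact norm_add_le _ _
      _ ≤ A * (Kb * dist x y) + Ka * dist x y * B := by
          gcongr
          exacts [hA x, hb.dist_le_mul x y, ha.dist_le_mul x y, hB y hy]
      _ = (A * Kb + Ka * B) * dist x y := by ring
  refine LipschitzWith.of_dist_le_mul fun x y => ?_
  push_cast
  by_cases hy : a y = 0
  · by_cases hx : a x = 0
    · simp only [hx, hy, zero_smul, dist_self]
      positivity
    · rw [dist_comm, dist_comm x y]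
      exact key y x hx
  · exact key x y hy

theorem lipschitzWith_inv_max {δ : ℝ} (hδ : 0 < δ) :
    LipschitzWith (Real.toNNReal (δ ^ 2)⁻¹) fun r : ℝ => (max δ r)⁻¹ := by
  refine LipschitzWith.of_dist_le_mul fun r s => ?_
  have hr : δ ≤ max δ r := le_max_left _ _
  have hs : δ ≤ max δ s := le_max_left _ _
  have hmax : dist (max δ r) (max δ s) ≤ dist r s := by
    simpa using (LipschitzWith.id.const_max δ).dist_le_mul r s
  rw [dist_inv_inv₀ (hδ.trans_le hr).ne' (hδ.trans_le hs).ne',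
    Real.norm_of_nonneg (hδ.le.trans hr), Real.norm_of_nonneg (hδ.le.trans hs),
    Real.coe_toNNReal _ (by positivity), sq, inv_mul_eq_div]
  gcongr

theorem exists_lipschitz_radial_expansion {E : Type*} [NormedAddCommGroup E] [NormedSpace ℝ E]
    (y : E) {δ R : ℝ} (hδ : 0 < δ) (hR : 0 < R) :
    ∃ (ρ : E → E) (K : ℝ≥0), LipschitzWith K ρ ∧
      (∀ z, δ ≤ dist z y → dist z y ≤ R → dist (ρ z) y = R) ∧ ∀ z, R ≤ dist z y → ρ z = z := by
  let a : E → ℝ := fun z => max 0 (R * (max δ (dist z y))⁻¹ - 1)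
  have ha_zero z (hz : R ≤ dist z y) : a z = 0 := by
    refine max_eq_left (sub_nonpos.2 ?_)
    rw [mul_inv_le_iff₀ (lt_max_of_lt_left hδ), one_mul]
    exact hz.trans (le_max_right _ _)
  have ha : LipschitzWith (‖R‖₊ * (Real.toNNReal (δ ^ 2)⁻¹ * 1)) a := by
    simpa using (((lipschitzWith_smul R).comp
      ((lipschitzWith_inv_max hδ).comp (LipschitzWith.dist_left y))).sub
        (LipschitzWith.const (1 : ℝ))).const_max 0
  have ha_le z : |a z| ≤ Real.toNNReal (R * δ⁻¹) := by
    rw [abs_of_nonneg (le_max_left _ _), Real.coe_toNNReal _ (by positivity)]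
    refine max_le (by positivity) ((sub_le_self _ zero_le_one).trans ?_)
    gcongr
    exact le_max_left _ _
  have hsub : LipschitzWith (1 + 0) fun z : E => z - y := LipschitzWith.id.sub (.const y)
  have hlip := lipschitzWith_smul_of_bounded (B := Real.toNNReal R) ha hsub ha_le fun z hz => by
    rw [Real.coe_toNNReal _ hR.le, ← dist_eq_norm]
    exact (not_le.1 (mt (ha_zero z) hz)).le
  refine ⟨fun z => z + a z • (z - y), _, LipschitzWith.id.add hlip, fun z hδz hzR => ?_,
    fun z hz => by simp [ha_zero z hz]⟩
  have hz : 0 < dist z y := hδ.trans_le hδz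
  have haz : a z = R / dist z y - 1 := by
    simp only [a, max_eq_right hδz, ← div_eq_mul_inv]
    exact max_eq_right (sub_nonneg.2 ((one_le_div hz).2 hzR))
  have hscale : z + a z • (z - y) - y = (R / dist z y) • (z - y) := by
    rw [haz, sub_smul, one_smul]
    abel
  rw [dist_eq_norm, hscale, norm_smul, Real.norm_of_nonneg (by positivity), ← dist_eq_norm,
    div_mul_cancel₀ _ hz.ne']

variable {E : Type*} [NormedAddCommGroup E] [InnerProductSpace ℝ E] [FiniteDimensional ℝ E]

theorem det_fderiv_eq_zero_of_eventually_mem_sphere {g : E → E} {x y : E} {R : ℝ} (hR : R ≠ 0)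
    (hg : DifferentiableAt ℝ g x) (hsphere : ∀ᶠ z in 𝓝 x, g z ∈ Metric.sphere y R) :
    (fderiv ℝ g x).det = 0 := by
  by_contra hdet
  have hconst : (fun z => ‖g z - y‖ ^ 2) =ᶠ[𝓝 x] fun _ => R ^ 2 :=
    hsphere.mono fun z hz => by simp only [mem_sphere_iff_norm.1 hz]
  have hderiv : 2 • (innerSL ℝ (g x - y)) ∘SL fderiv ℝ g x = 0 :=
    (hg.hasFDerivAt.sub_const y).norm_sq.unique
      ((hasFDerivAt_const (R ^ 2) x).congr_of_eventuallyEq hconst)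
  obtain ⟨v, hv⟩ := (LinearMap.equivOfDetNeZero _ hdet).surjective (g x - y)
  have hv' : fderiv ℝ g x v = g x - y := hv
  have hinner : 2 • ⟪g x - y, g x - y⟫ = 0 := by
    nth_rw 2 [← hv']
    exact DFunLike.congr_fun hderiv v
  rw [real_inner_self_eq_norm_sq, mem_sphere_iff_norm.1 hsphere.self_of_nhds] at hinner
  simp [hR] at hinner

theorem not_exists_lipschitz_retraction_onto_sphere {M : ℝ≥0} {g : E → E} (hg : LipschitzWith M g)
    {y : E} {R : ℝ} (hR : 0 < R) (hid : EqOn g id (Metric.ball y R)ᶜ) :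
    ¬ MapsTo g (Metric.ball y R) (Metric.sphere y R) := by
  intro hmaps
  let : MeasurableSpace E := borel E
  have : BorelSpace E := ⟨rfl⟩
  let μ : Measure E := Measure.addHaar
  have hψ : LipschitzWith (M + 1) fun x => g x - x := hg.sub LipschitzWith.id
  have hdegree := integral_det_id_add_fderiv_of_lipschitz μ hψ Metric.isOpen_ball.measurableSet
    (Metric.isBounded_ball (x := y) (r := R)).measure_lt_top.ne
    fun x hx => by simpa [sub_eq_zero] using hid hx
  have hjacobian : ∀ᵐ x ∂μ.restrict (Metric.ball y R),
      (ContinuousLinearMap.id ℝ E + fderiv ℝ (fun x => g x - x) x).det = 0 := by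
    rw [ae_restrict_iff' Metric.isOpen_ball.measurableSet]
    filter_upwards [hg.ae_differentiableAt (μ := μ)] with x hx hxB
    rw [fderiv_fun_sub hx differentiableAt_fun_id, fderiv_fun_id, add_sub_cancel]
    exact det_fderiv_eq_zero_of_eventually_mem_sphere hR.ne' hx
      (eventually_of_mem (Metric.isOpen_ball.mem_nhds hxB) hmaps)
  rw [integral_congr_ae hjacobian, integral_zero] at hdegree
  exact (ENNReal.toReal_pos (Metric.measure_ball_pos μ y hR).ne'
    Metric.isBounded_ball.measure_lt_top.ne).ne hdegree

theorem surjective_of_lipschitz_of_eqOn_id_compl {M : ℝ≥0} {g : E → E} (hg : LipschitzWith M g)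
    {s : Set E} (hs : Bornology.IsBounded s) (hid : EqOn g id sᶜ) : Function.Surjective g := by
  intro y
  by_contra! hy
  have hproper : Tendsto g (cocompact E) (cocompact E) :=
    tendsto_id.congr' <| by
      rw [← Metric.cobounded_eq_cocompact]
      exact eventually_of_mem (Bornology.isBounded_def.1 hs) fun x hx => (hid hx).symm
  have hclosed : IsClosed (range g) :=
    (isProperMap_iff_tendsto_cocompact.2 ⟨hg.continuous, hproper⟩).isClosedMap.isClosed_range
  obtain ⟨δ, hδ, hball⟩ := Metric.isOpen_iff.1 hclosed.isOpen_compl y fun ⟨x, hx⟩ => hy x hx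
  have hdist x : δ ≤ dist (g x) y := not_lt.1 fun h => hball h (mem_range_self x)
  obtain ⟨R, hR, hsub⟩ := (hs.union (hg.isBounded_image hs)).subset_ball_lt 0 y
  obtain ⟨ρ, K, hρ, hexpand, hfix⟩ := exists_lipschitz_radial_expansion y hδ hR
  refine not_exists_lipschitz_retraction_onto_sphere (hρ.comp hg) hR (fun x hx => ?_)
    fun x hx => hexpand _ (hdist x) ?_
  · have hgx : g x = x := hid fun hxs => hx (hsub (Or.inl hxs))
    simpa [hgx] using hfix x (not_lt.1 hx)
  · by_cases hxs : x ∈ s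
    · exact (hsub (Or.inr (mem_image_of_mem g hxs))).le
    · rw [hid hxs]
      exact (Metric.mem_ball.1 hx).le

theorem ball_subset_image_of_lipschitz_of_dist_le {M : ℝ≥0} {Φ : E → E} (hΦ : LipschitzWith M Φ)
    {x₀ : E} {r : ℝ} (hr : 0 < r) (hclose : ∀ x ∈ Metric.ball x₀ r, dist (Φ x) x ≤ r / 4) :
    Metric.ball x₀ (r / 4) ⊆ Φ '' Metric.ball x₀ r := by
  intro y hy
  let χ : ContDiffBump x₀ := ⟨r / 2, r, by positivity, by linarith⟩
  obtain ⟨K, hχ⟩ := ContDiff.lipschitzWith_of_hasCompactSupport (𝕂 := ℝ) χ.hasCompactSupport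
    (χ.contDiff (n := 1)) one_ne_zero
  have hsupp x (hx : χ x ≠ 0) : ‖Φ x - x‖ ≤ r / 4 := by
    rw [← dist_eq_norm]
    exact hclose x (χ.support_eq ▸ hx)
  have hlip := lipschitzWith_smul_of_bounded (A := 1) (B := Real.toNNReal (r / 4)) hχ
    (hΦ.sub LipschitzWith.id) (fun x => by simp [abs_of_nonneg χ.nonneg, χ.le_one])
    fun x hx => by simpa [Real.coe_toNNReal _ (by positivity : 0 ≤ r / 4)] using hsupp x hx
  obtain ⟨x, hx⟩ := surjective_of_lipschitz_of_eqOn_id_compl (LipschitzWith.id.add hlip)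
    Metric.isBounded_ball (s := Metric.ball x₀ r)
    (fun x hx => by simp [χ.zero_of_le_dist (not_lt.1 hx)]) y
  have hdisp : ‖χ x • (Φ x - x)‖ ≤ r / 4 := by
    rw [norm_smul, Real.norm_of_nonneg χ.nonneg]
    by_cases h0 : χ x = 0
    · simp only [h0, zero_mul]
      positivity
    · exact (mul_le_of_le_one_left (norm_nonneg _) χ.le_one).trans (hsupp x h0)
  have hxy : dist x y ≤ r / 4 := by
    rw [← hx, dist_eq_norm, ← norm_neg]
    simpa using hdisp
  have hx₀ : dist x x₀ < r / 2 := by linarith [dist_triangle x y x₀, Metric.mem_ball.1 hy]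
  have hχ1 : χ x = 1 := χ.one_of_mem_closedBall hx₀.le
  exact ⟨x, by rw [Metric.mem_ball]; linarith, by simpa [hχ1] using hx⟩

/- Pushing the image of `H` radially away from the missed point `y` onto the sphere and mapping back
with `Hinv` moves points by at most `r / 4`, hence covers the ball around `x₀`; points whose image
is close to `y` can only be covered from the sphere. -/
theorem ball_inter_preimage_subset_image_sphere {M K : ℝ≥0} {H Hinv : E → E}
    (hH : LipschitzWith M H) (hHinv : LipschitzWith K Hinv) {x₀ y : E} {r ε : ℝ} (hr : 0 < r)
    (hε : 0 < ε) (hKε : K * (2 * ε) ≤ r / 4) (hinv : LeftInvOn Hinv H (Metric.closedBall x₀ r))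
    (hy : y ∉ H '' Metric.closedBall x₀ r) :
    Metric.ball x₀ (r / 4) ∩ H ⁻¹' Metric.ball y ε ⊆ Hinv '' Metric.sphere y ε := by
  have hclosed := ((isCompact_closedBall x₀ r).image hH.continuous).isClosed
  obtain ⟨δ, hδ, hball⟩ := Metric.isOpen_iff.1 hclosed.isOpen_compl y hy
  have hdist x (hx : x ∈ Metric.closedBall x₀ r) : δ ≤ dist (H x) y :=
    not_lt.1 fun h => hball h (mem_image_of_mem H hx)
  obtain ⟨ρ, Kρ, hρ, hexpand, hfix⟩ := exists_lipschitz_radial_expansion y hδ hε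
  have hmove x (hx : x ∈ Metric.closedBall x₀ r) : dist (ρ (H x)) (H x) ≤ 2 * ε := by
    rcases le_total (dist (H x) y) ε with h | h
    · linarith [dist_triangle_right (ρ (H x)) (H x) y, hexpand _ (hdist x hx) h]
    · simpa [hfix _ h] using hε.le
  have hcover := ball_subset_image_of_lipschitz_of_dist_le (hHinv.comp (hρ.comp hH)) hr
    fun x hx => by
      have hx' := Metric.ball_subset_closedBall hx
      calc dist (Hinv (ρ (H x))) x = dist (Hinv (ρ (H x))) (Hinv (H x)) := by rw [hinv hx']
        _ ≤ K * (2 * ε) := (hHinv.dist_le_mul _ _).trans (by gcongr; exact hmove x hx')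
        _ ≤ r / 4 := hKε
  rintro z ⟨hzball, hzH⟩
  obtain ⟨x, hx, rfl⟩ := hcover hzball
  have hx' := Metric.ball_subset_closedBall hx
  rcases le_total (dist (H x) y) ε with h | h
  · exact ⟨ρ (H x), hexpand _ (hdist x hx') h, rfl⟩
  · simp only [Function.comp_apply, hfix _ h, hinv hx', mem_preimage] at hzH
    exact absurd h (not_le.2 hzH)

theorem image_closedBall_mem_nhds_of_lipschitz {M K : ℝ≥0} {H Hinv : E → E}
    (hH : LipschitzWith M H) (hHinv : LipschitzWith K Hinv) {x₀ : E} {r : ℝ} (hr : 0 < r)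
    (hinv : LeftInvOn Hinv H (Metric.closedBall x₀ r)) :
    H '' Metric.closedBall x₀ r ∈ 𝓝 (H x₀) := by
  let : MeasurableSpace E := borel E
  have : BorelSpace E := ⟨rfl⟩
  let μ : Measure E := Measure.addHaar
  set ε := r / (8 * (K + 1)) with hεdef
  have hε : 0 < ε := by positivity
  have hKε : K * (2 * ε) ≤ r / 4 := by
    rw [hεdef, show K * (2 * (r / (8 * (K + 1)))) = r / 4 * (K / (K + 1)) by field_simp; ring]
    exact mul_le_of_le_one_right (by positivity) ((div_le_one (by positivity)).2 (by simp))
  refine Metric.mem_nhds_iff.2 ⟨ε, hε, fun y hy => ?_⟩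
  by_contra hyS
  have hnull : μ (Hinv '' Metric.sphere y ε) = 0 := by
    simpa [Measure.addHaar_sphere_of_ne_zero μ y hε.ne'] using
      addHaar_image_le_of_lipschitzOnWith μ (hHinv.lipschitzOnWith (s := Metric.sphere y ε))
  have hopen : IsOpen (Metric.ball x₀ (r / 4) ∩ H ⁻¹' Metric.ball y ε) :=
    Metric.isOpen_ball.inter (Metric.isOpen_ball.preimage hH.continuous)
  have hx₀ : x₀ ∈ Metric.ball x₀ (r / 4) ∩ H ⁻¹' Metric.ball y ε :=
    ⟨Metric.mem_ball_self (by positivity), by rwa [mem_preimage, Metric.mem_ball']⟩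
  exact (hopen.measure_pos μ ⟨x₀, hx₀⟩).ne' <| measure_mono_null
    (ball_inter_preimage_subset_image_sphere hH hHinv hr hε hKε hinv hyS) hnull

end InvarianceOfDomain

section Pushforward

/-- A measurable map `f` whose pushforward of `m` is bounded by a multiple of `m'`, so that
composition with `f` is bounded from `Lᵖ(m')` to `Lᵖ(m)`. -/
structure HasBoundedPushforward {α β : Type*} [MeasurableSpace α] [MeasurableSpace β]
    (f : α → β) (m : Measure α) (m' : Measure β) : Prop where
  measurable : Measurable f
  exists_map_le : ∃ C : ℝ≥0, m.map f ≤ C • m'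

namespace HasBoundedPushforward

variable {α β F : Type*} [MeasurableSpace α] [MeasurableSpace β] [NormedAddCommGroup F]
  {f : α → β} {m : Measure α} {m' : Measure β}

theorem quasiMeasurePreserving (hf : HasBoundedPushforward f m m') :
    Measure.QuasiMeasurePreserving f m m' := by
  obtain ⟨C, hC⟩ := hf.exists_map_le
  exact ⟨hf.measurable,
    (Measure.absolutelyContinuous_of_le hC).trans Measure.smul_absolutelyContinuous⟩

theorem mono_left (hf : HasBoundedPushforward f m m') {n : Measure α} (hn : n ≤ m) :
    HasBoundedPushforward f n m' where
  measurable := hf.measurable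
  exists_map_le := hf.exists_map_le.imp fun _ hC => (Measure.map_mono hn hf.measurable).trans hC

theorem exists_eLpNorm_comp_le (hf : HasBoundedPushforward f m m') {p : ℝ≥0∞} (hp : p ≠ ∞) :
    ∃ C : ℝ≥0, ∀ v : β → F, AEStronglyMeasurable v m' →
      eLpNorm (v ∘ f) p m ≤ C * eLpNorm v p m' := by
  obtain ⟨C, hC⟩ := hf.exists_map_le
  refine ⟨C ^ p.toReal⁻¹, fun v hv => ?_⟩
  rw [← eLpNorm_map_measure (hv.mono_ac hf.quasiMeasurePreserving.absolutelyContinuous)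
    hf.measurable.aemeasurable]
  refine (eLpNorm_mono_measure v hC).trans_eq ?_
  rw [eLpNorm_smul_measure_of_ne_top' hp, ENNReal.smul_def, smul_eq_mul]

theorem memLp_comp (hf : HasBoundedPushforward f m m') {p : ℝ≥0∞} (hp : p ≠ ∞) {v : β → F}
    (hv : MemLp v p m') : MemLp (v ∘ f) p m := by
  obtain ⟨C, hC⟩ := hf.exists_eLpNorm_comp_le (F := F) hp
  exact ⟨hv.1.comp_quasiMeasurePreserving hf.quasiMeasurePreserving,
    (hC v hv.1).trans_lt (ENNReal.mul_lt_top ENNReal.coe_lt_top hv.2)⟩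

end HasBoundedPushforward

theorem hasBoundedPushforward_of_leftInvOn {E : Type*} [NormedAddCommGroup E] [NormedSpace ℝ E]
    [FiniteDimensional ℝ E] [MeasurableSpace E] [BorelSpace E] (μ : Measure E)
    [μ.IsAddHaarMeasure] {f g : E → E} {K : ℝ≥0} {A Q : Set E} (hf : Measurable f)
    (hg : LipschitzWith K g) (hmaps : MapsTo f A Q) (hleft : LeftInvOn g f A) :
    HasBoundedPushforward f (μ.restrict A) (μ.restrict Q) where
  measurable := hf
  exists_map_le := by
    refine ⟨K ^ Module.finrank ℝ E, Measure.le_iff.2 fun s hs => ?_⟩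
    rw [Measure.map_apply hf hs, Measure.restrict_apply (hf hs), Measure.smul_apply,
      Measure.restrict_apply hs, ENNReal.smul_def, smul_eq_mul, ENNReal.coe_pow]
    have hsub : f ⁻¹' s ∩ A ⊆ g '' (s ∩ Q) := fun y hy => ⟨f y, ⟨hy.1, hmaps hy.2⟩, hleft hy.2⟩
    exact (measure_mono hsub).trans (addHaar_image_le_of_lipschitzOnWith μ hg.lipschitzOnWith)

end Pushforward

section Charts

/-- A bi-Lipschitz chart of `Ω` around `x`: the neighbourhood `source` of `x` is mapped onto the
ball of radius `2 * radius` around the image of `x`, and there `Ω` corresponds to the convex open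
set `model`, whose closure is pushed inside by translations along `direction`. The map and its
inverse are globally defined Lipschitz maps, but invert each other only locally. -/
structure LipschitzChart {E : Type*} [NormedAddCommGroup E] [NormedSpace ℝ E]
    (Ω : Set E) (x : E) where
  toFun : E → E
  invFun : E → E
  lipConst : ℝ≥0
  direction : E
  model : Set E
  source : Set E
  radius : ℝ
  lipschitz : LipschitzWith lipConst toFun
  lipschitz_inv : LipschitzWith lipConst invFun
  radius_pos : 0 < radius
  isOpen_source : IsOpen source
  mem_source : x ∈ source
  mapsTo : MapsTo toFun source (Metric.ball (toFun x) (2 * radius))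
  mapsTo_inv : MapsTo invFun (Metric.ball (toFun x) (2 * radius)) source
  leftInvOn : LeftInvOn invFun toFun source
  rightInvOn : RightInvOn invFun toFun (Metric.ball (toFun x) (2 * radius))
  isOpen_model : IsOpen model
  convex_model : Convex ℝ model
  mem_iff : ∀ y ∈ source, y ∈ Ω ↔ toFun y ∈ model
  add_smul_mem_model : ∀ z ∈ closure model, ∀ s : ℝ, 0 < s → z + s • direction ∈ model
  norm_direction_le : ‖direction‖ ≤ 1

theorem exists_lipschitzChart_of_mem {E : Type*} [NormedAddCommGroup E] [NormedSpace ℝ E]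
    {Ω : Set E} (hΩ : IsOpen Ω) {x : E} (hx : x ∈ Ω) : Nonempty (LipschitzChart Ω x) := by
  obtain ⟨ρ, hρ, hball⟩ := Metric.isOpen_iff.1 hΩ x hx
  have hball' : Metric.ball x (2 * (ρ / 2)) ⊆ Ω := by rwa [mul_div_cancel₀ ρ two_ne_zero]
  exact ⟨{
    toFun := id
    invFun := id
    lipConst := 1
    direction := 0
    model := univ
    source := Metric.ball x (2 * (ρ / 2))
    radius := ρ / 2
    lipschitz := LipschitzWith.id
    lipschitz_inv := LipschitzWith.id
    radius_pos := by positivity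
    isOpen_source := Metric.isOpen_ball
    mem_source := Metric.mem_ball_self (by positivity)
    mapsTo := mapsTo_id _
    mapsTo_inv := mapsTo_id _
    leftInvOn := fun _ _ => rfl
    rightInvOn := fun _ _ => rfl
    isOpen_model := isOpen_univ
    convex_model := convex_univ
    mem_iff := fun y hy => by simp [hball' hy]
    add_smul_mem_model := fun _ _ _ _ => mem_univ _
    norm_direction_le := by simp }⟩

theorem mem_iff_of_image_inter_eq {α β : Type*} {h : α → β} {U Ω : Set α} {P : Set β}
    (hinj : InjOn h U) (himage : h '' (U ∩ Ω) = h '' U ∩ P) {y : α} (hy : y ∈ U) :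
    y ∈ Ω ↔ h y ∈ P := by
  have hmem : h y ∈ h '' (U ∩ Ω) ↔ h y ∈ h '' U ∩ P := by rw [himage]
  rw [hinj.mem_image_iff inter_subset_left hy] at hmem
  exact ⟨fun h' => (hmem.1 ⟨hy, h'⟩).2, fun h' => (hmem.2 ⟨mem_image_of_mem h hy, h'⟩).2⟩

theorem inner_add_smul_pos_of_mem_closure {E : Type*} [NormedAddCommGroup E]
    [InnerProductSpace ℝ E] {e z : E} (he : e ≠ 0) (hz : z ∈ closure {y : E | 0 < ⟪e, y⟫}) {s : ℝ}
    (hs : 0 < s) : 0 < ⟪e, z + s • e⟫ := by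
  have hz' : 0 ≤ ⟪e, z⟫ :=
    closure_minimal (fun _ hy => le_of_lt hy)
      (isClosed_le continuous_const (by fun_prop : Continuous fun y : E => ⟪e, y⟫)) hz
  rw [inner_add_right, inner_smul_right]
  have := mul_pos hs (real_inner_self_pos.2 he)
  linarith

theorem exists_lipschitzChart_of_flattening {E : Type*} [NormedAddCommGroup E]
    [InnerProductSpace ℝ E] [FiniteDimensional ℝ E] {Ω U : Set E} {x e : E} {h hinv : E → E}
    {K : ℝ≥0} (he : ‖e‖ = 1) (hU : IsOpen U) (hx : x ∈ U) (hh : LipschitzOnWith K h U)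
    (hhinv : LipschitzOnWith K hinv (h '' U)) (hleft : LeftInvOn hinv h U)
    (himage : h '' (U ∩ Ω) = h '' U ∩ {y : E | 0 < ⟪e, y⟫}) : Nonempty (LipschitzChart Ω x) := by
  borelize E
  obtain ⟨H, hH, hHeq⟩ := hh.extend_finite_dimension
  obtain ⟨Hinv, hHinv, hHinveq⟩ := hhinv.extend_finite_dimension
  have hHleft : LeftInvOn Hinv H U := fun y hy => by
    rw [← hHeq hy, ← hHinveq (mem_image_of_mem h hy), hleft hy]
  obtain ⟨ρ, hρ, hρU⟩ := Metric.nhds_basis_closedBall.mem_iff.1 (hU.mem_nhds hx)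
  obtain ⟨r, hr, hrH⟩ := Metric.nhds_basis_ball.mem_iff.1
    (image_closedBall_mem_nhds_of_lipschitz hH hHinv hρ (hHleft.mono hρU))
  rw [← mul_div_cancel₀ r two_ne_zero] at hrH
  exact ⟨{
    toFun := H
    invFun := Hinv
    lipConst := _
    direction := e
    model := {y : E | 0 < ⟪e, y⟫}
    source := U ∩ H ⁻¹' Metric.ball (H x) (2 * (r / 2))
    radius := r / 2
    lipschitz := hH
    lipschitz_inv := hHinv
    radius_pos := by positivity
    isOpen_source := hU.inter (Metric.isOpen_ball.preimage hH.continuous)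
    mem_source := ⟨hx, Metric.mem_ball_self (by positivity)⟩
    mapsTo := fun y hy => hy.2
    mapsTo_inv := fun z hz => by
      obtain ⟨y, hy, rfl⟩ := hrH hz
      rw [hHleft (hρU hy)]
      exact ⟨hρU hy, hz⟩
    leftInvOn := hHleft.mono inter_subset_left
    rightInvOn := fun z hz => by
      obtain ⟨y, hy, rfl⟩ := hrH hz
      rw [hHleft (hρU hy)]
    isOpen_model := isOpen_lt continuous_const (by fun_prop)
    convex_model := convex_halfSpace_gt (innerSL ℝ e).toLinearMap.isLinear 0
    mem_iff := fun y hy => by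
      rw [← hHeq hy.1]
      exact mem_iff_of_image_inter_eq hleft.injOn himage hy.1
    add_smul_mem_model := fun z hz s hs =>
      inner_add_smul_pos_of_mem_closure (norm_ne_zero_iff.1 (by simp [he])) hz hs
    norm_direction_le := he.le }⟩

namespace LipschitzChart

variable {E : Type*} [NormedAddCommGroup E] [NormedSpace ℝ E] {Ω : Set E} {x : E}
  (c : LipschitzChart Ω x)

/-- The part of the chart domain lying over the ball of half the radius, so that small translations
of its image stay inside the range of the chart. -/
def core : Set E := c.source ∩ c.toFun ⁻¹' Metric.ball (c.toFun x) c.radius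

theorem isOpen_core : IsOpen c.core :=
  c.isOpen_source.inter (Metric.isOpen_ball.preimage c.lipschitz.continuous)

theorem mem_core : x ∈ c.core := ⟨c.mem_source, Metric.mem_ball_self c.radius_pos⟩

theorem invFun_mem {z : E} (hz : z ∈ Metric.ball (c.toFun x) (2 * c.radius) ∩ c.model) :
    c.invFun z ∈ Ω := by
  rw [c.mem_iff _ (c.mapsTo_inv hz.1), c.rightInvOn hz.1]
  exact hz.2

end LipschitzChart

/-- Every point of `closure Ω` has a bi-Lipschitz chart. -/
def HasLipschitzCharts {E : Type*} [NormedAddCommGroup E] [NormedSpace ℝ E] (Ω : Set E) : Prop :=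
  ∀ x ∈ closure Ω, Nonempty (LipschitzChart Ω x)

end Charts

section Minkowski

theorem rpow_lintegral_le_lintegral_rpow {α : Type*} [MeasurableSpace α] (m : Measure α)
    [IsProbabilityMeasure m] {q : ℝ} (hq : 1 ≤ q) {g : α → ℝ≥0∞} (hg : AEMeasurable g m) :
    (∫⁻ a, g a ∂m) ^ q ≤ ∫⁻ a, g a ^ q ∂m := by
  have hq0 : 0 < q := by linarith
  have hmono := eLpNorm'_le_eLpNorm'_of_exponent_le one_pos hq m hg.aestronglyMeasurable
  have hpow := ENNReal.rpow_le_rpow hmono hq0.le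
  rw [← lintegral_rpow_enorm_eq_rpow_eLpNorm' hq0] at hpow
  simpa [eLpNorm'] using hpow

theorem lintegral_rpow_enorm_le_iff_eLpNorm_le {α F : Type*} [MeasurableSpace α]
    [NormedAddCommGroup F] {m : Measure α} {p : ℝ≥0∞} (hp0 : p ≠ 0) (hp : p ≠ ∞) {v : α → F}
    {S : ℝ≥0∞} : ∫⁻ x, ‖v x‖ₑ ^ p.toReal ∂m ≤ S ^ p.toReal ↔ eLpNorm v p m ≤ S := by
  have hpr : 0 < p.toReal := ENNReal.toReal_pos hp0 hp
  rw [lintegral_rpow_enorm_eq_rpow_eLpNorm' hpr, ENNReal.rpow_le_rpow_iff hpr,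
    eLpNorm_eq_eLpNorm' hp0 hp]

variable {α β F : Type*} [MeasurableSpace α] [MeasurableSpace β] [NormedAddCommGroup F]
  [NormedSpace ℝ F]

theorem eLpNorm_integral_le_of_ae_eLpNorm_le {m : Measure α} [SFinite m] {ν : Measure β}
    [IsProbabilityMeasure ν] {p : ℝ≥0∞} (hp1 : 1 ≤ p) (hp : p ≠ ∞) {f : α → β → F}
    (hf : AEStronglyMeasurable (Function.uncurry f) (m.prod ν)) {S : ℝ≥0∞}
    (hS : ∀ᵐ b ∂ν, eLpNorm (fun x => f x b) p m ≤ S) :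
    eLpNorm (fun x => ∫ b, f x b ∂ν) p m ≤ S := by
  have hp0 : p ≠ 0 := (one_pos.trans_le hp1).ne'
  have hpr : 1 ≤ p.toReal := by simpa using ENNReal.toReal_mono hp hp1
  rw [← lintegral_rpow_enorm_le_iff_eLpNorm_le hp0 hp]
  calc ∫⁻ x, ‖∫ b, f x b ∂ν‖ₑ ^ p.toReal ∂m
      ≤ ∫⁻ x, ∫⁻ b, ‖f x b‖ₑ ^ p.toReal ∂ν ∂m := by
        refine lintegral_mono_ae ?_
        filter_upwards [hf.prodMk_left] with x hx
        exact (ENNReal.rpow_le_rpow (enorm_integral_le_lintegral_enorm _) (by positivity)).trans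
          (rpow_lintegral_le_lintegral_rpow ν hpr hx.enorm)
    _ = ∫⁻ b, ∫⁻ x, ‖f x b‖ₑ ^ p.toReal ∂m ∂ν :=
        lintegral_lintegral_swap (hf.enorm.pow_const p.toReal)
    _ ≤ ∫⁻ _, S ^ p.toReal ∂ν := by
        refine lintegral_mono_ae (hS.mono fun b hb => ?_)
        rwa [lintegral_rpow_enorm_le_iff_eLpNorm_le hp0 hp]
    _ = S ^ p.toReal := by simp

end Minkowski

section Mollification

open scoped Convolution

variable {E F : Type*} [NormedAddCommGroup E] [NormedSpace ℝ E] [FiniteDimensional ℝ E]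
  [MeasurableSpace E] [BorelSpace E] {μ : Measure E} [μ.IsAddHaarMeasure]
  [NormedAddCommGroup F] {p : ℝ≥0∞}

theorem tendsto_eLpNorm_translate_sub (hp1 : 1 ≤ p) (hp : p ≠ ∞) {v : E → F} (hv : MemLp v p μ) :
    Tendsto (fun h : E => eLpNorm (fun x => v (h + x) - v x) p μ) (𝓝 0) (𝓝 0) := by
  have : Fact (1 ≤ p) := ⟨hp1⟩
  have : Fact (p ≠ ∞) := ⟨hp⟩
  have hcont : Continuous fun h : E => DomAddAct.mk h +ᵥ hv.toLp v :=
    DomAddAct.continuous_mk.vadd continuous_const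
  have hlim := (hcont.tendsto 0).edist (tendsto_const_nhds (x := hv.toLp v))
  rw [DomAddAct.mk_zero, zero_vadd, edist_self] at hlim
  refine hlim.congr fun h => ?_
  rw [DomAddAct.mk_vadd_toLp, Lp.edist_toLp_toLp]
  rfl

variable [NormedSpace ℝ F]

theorem integral_normed_withDensity_eq_convolution_sub [CompleteSpace F] (φ : ContDiffBump (0 : E))
    {v : E → F} (hv : LocallyIntegrable v μ) (x : E) :
    ∫ h, (v (x - h) - v x) ∂(μ.withDensity fun h => ENNReal.ofReal (φ.normed μ h)) =
      (φ.normed μ ⋆[ContinuousLinearMap.lsmul ℝ ℝ, μ] v) x - v x := by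
  have hconv : Integrable (fun h => φ.normed μ h • v (x - h)) μ :=
    φ.hasCompactSupport_normed.convolutionExists_left (ContinuousLinearMap.lsmul ℝ ℝ)
      φ.continuous_normed hv x
  rw [integral_withDensity_eq_integral_toReal_smul φ.continuous_normed.measurable.ennreal_ofReal
    (ae_of_all _ fun _ => ENNReal.ofReal_lt_top)]
  simp_rw [ENNReal.toReal_ofReal (φ.nonneg_normed _), smul_sub]
  rw [integral_sub hconv (φ.integrable_normed.smul_const (v x)), integral_smul_const,
    φ.integral_normed, one_smul, convolution_lsmul]

theorem eLpNorm_normed_convolution_sub_le [CompleteSpace F] (hp1 : 1 ≤ p) (hp : p ≠ ∞)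
    (φ : ContDiffBump (0 : E)) {v : E → F} (hv : MemLp v p μ) {S : ℝ≥0∞}
    (hS : ∀ h ∈ Metric.ball (0 : E) φ.rOut, eLpNorm (fun x => v (h + x) - v x) p μ ≤ S) :
    eLpNorm (fun x => (φ.normed μ ⋆[ContinuousLinearMap.lsmul ℝ ℝ, μ] v) x - v x) p μ ≤ S := by
  set ν : Measure E := μ.withDensity fun h => ENNReal.ofReal (φ.normed μ h) with hν
  have hdens : Measurable fun h => ENNReal.ofReal (φ.normed μ h) :=
    φ.continuous_normed.measurable.ennreal_ofReal
  have : IsProbabilityMeasure ν := ⟨by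
    rw [hν, withDensity_apply _ MeasurableSet.univ, Measure.restrict_univ,
      ← ofReal_integral_eq_lintegral_ofReal φ.integrable_normed (ae_of_all _ φ.nonneg_normed),
      φ.integral_normed, ENNReal.ofReal_one]⟩
  simp_rw [← integral_normed_withDensity_eq_convolution_sub φ (hv.locallyIntegrable hp1)]
  refine eLpNorm_integral_le_of_ae_eLpNorm_le hp1 hp ?_ ?_
  · exact (hv.1.comp_quasiMeasurePreserving
      (quasiMeasurePreserving_sub_of_right_invariant μ ν)).sub hv.1.comp_fst
  · refine (ae_withDensity_iff hdens).2 (ae_of_all _ fun h hh => ?_)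
    have hmem : h ∈ Function.support (φ.normed μ) := fun h0 => hh (by simp [h0])
    rw [φ.support_normed_eq, mem_ball_zero_iff] at hmem
    simp_rw [sub_eq_neg_add _ h]
    exact hS (-h) (by simpa using hmem)

/-- `G` is the distributional derivative of `u` on `Ω`. -/
def IsWeakFDerivOn (μ : Measure E) (Ω : Set E) (u : E → F) (G : E → E →L[ℝ] F) : Prop :=
  ∀ φ : E → ℝ, ContDiff ℝ 1 φ → HasCompactSupport φ → tsupport φ ⊆ Ω → ∀ v : E,
    ∫ x in Ω, fderiv ℝ φ x v • u x ∂μ = -∫ x in Ω, φ x • G x v ∂μ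

theorem fderiv_convolution_apply {ρ : E → ℝ} (hρ : ContDiff ℝ 1 ρ) (hρs : HasCompactSupport ρ)
    {u : E → F} (hu : LocallyIntegrable u μ) (x v : E) :
    fderiv ℝ (ρ ⋆[ContinuousLinearMap.lsmul ℝ ℝ, μ] u) x v =
      ∫ t, fderiv ℝ ρ (x - t) v • u t ∂μ := by
  rw [(hρs.hasFDerivAt_convolution_left (ContinuousLinearMap.lsmul ℝ ℝ) hρ hu x).fderiv,
    convolution_eq_swap, ContinuousLinearMap.integral_apply]
  · rfl
  · exact ((hρs.fderiv ℝ).convolutionExists_left _ (hρ.continuous_fderiv one_ne_zero) hu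
      x).integrable_swap

theorem convolution_lsmul_apply {ρ : E → ℝ} (hρ : Continuous ρ) (hρs : HasCompactSupport ρ)
    {G : E → E →L[ℝ] F} (hG : LocallyIntegrable G μ) (x v : E) :
    (ρ ⋆[ContinuousLinearMap.lsmul ℝ ℝ, μ] G) x v = ∫ t, ρ (x - t) • G t v ∂μ := by
  rw [convolution_lsmul_swap, ContinuousLinearMap.integral_apply]
  · rfl
  · exact (hρs.convolutionExists_left (ContinuousLinearMap.lsmul ℝ ℝ) hρ hG x).integrable_swap

theorem IsWeakFDerivOn.fderiv_convolution_indicator {Ω : Set E} (hΩ : MeasurableSet Ω) {u : E → F}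
    {G : E → E →L[ℝ] F} (hw : IsWeakFDerivOn μ Ω u G) (hu : LocallyIntegrable (Ω.indicator u) μ)
    (hG : LocallyIntegrable (Ω.indicator G) μ) {ρ : E → ℝ} (hρ : ContDiff ℝ 1 ρ)
    (hρs : HasCompactSupport ρ) {x : E} (hx : tsupport (fun t => ρ (x - t)) ⊆ Ω) :
    fderiv ℝ (ρ ⋆[ContinuousLinearMap.lsmul ℝ ℝ, μ] Ω.indicator u) x =
      (ρ ⋆[ContinuousLinearMap.lsmul ℝ ℝ, μ] Ω.indicator G) x := by
  ext v
  have hweak := hw (fun t => ρ (x - t)) (hρ.comp (contDiff_const.sub contDiff_id))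
    (hρs.comp_homeomorph (Homeomorph.subLeft x)) hx v
  have hfderiv (t : E) : fderiv ℝ (fun s => ρ (x - s)) t v = -fderiv ℝ ρ (x - t) v := by
    have hcomp : HasFDerivAt (fun s => ρ (x - s)) _ t :=
      (hρ.differentiable one_ne_zero (x - t)).hasFDerivAt.comp t ((hasFDerivAt_id t).const_sub x)
    simp [hcomp.fderiv]
  simp_rw [hfderiv, neg_smul, integral_neg, neg_inj] at hweak
  rw [fderiv_convolution_apply hρ hρs hu, convolution_lsmul_apply hρ.continuous hρs hG]
  convert hweak using 1
  · rw [← integral_indicator hΩ]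
    simp only [← indicator_smul]
  · rw [← integral_indicator hΩ]
    congr with t
    by_cases ht : t ∈ Ω <;> simp [ht]

end Mollification

section LipschitzApproximable

theorem exists_lipschitzWith_smul_of_hasCompactSupport {E F : Type*} [NormedAddCommGroup E]
    [NormedSpace ℝ E] [NormedAddCommGroup F] [NormedSpace ℝ F] {χ : E → ℝ} (hχ : ContDiff ℝ 1 χ)
    (hχc : HasCompactSupport χ) {w : E → F} {K : ℝ≥0} (hw : LipschitzWith K w) :
    ∃ K' : ℝ≥0, LipschitzWith K' fun x => χ x • w x := by
  obtain ⟨A, hA⟩ := hχ.continuous.bounded_above_of_compact_support hχc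
  obtain ⟨B, hB⟩ := hχc.isCompact.exists_bound_of_continuousOn hw.continuous.continuousOn
  obtain ⟨L, hL⟩ := hχ.lipschitzWith_of_hasCompactSupport hχc one_ne_zero
  exact ⟨_, lipschitzWith_smul_of_bounded hL hw
    (fun x => (hA x).trans (Real.le_coe_toNNReal A))
    fun x hx => (hB x (subset_tsupport χ hx)).trans (Real.le_coe_toNNReal B)⟩

section Bilinear

variable {E F₁ F₂ F₃ : Type*} [TopologicalSpace E] [MeasurableSpace E]
  [NormedAddCommGroup F₁] [NormedSpace ℝ F₁] [NormedAddCommGroup F₂] [NormedSpace ℝ F₂]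
  [NormedAddCommGroup F₃] [NormedSpace ℝ F₃] {m : Measure E} {V : Set E} {a : E → F₁}

theorem aestronglyMeasurable_bilin_of_restrict [OpensMeasurableSpace E]
    [SecondCountableTopologyEither E F₁] (L : F₁ →L[ℝ] F₂ →L[ℝ] F₃)
    (ha : Continuous a) (haV : tsupport a ⊆ V) (hV : MeasurableSet V) {v : E → F₂}
    (hv : AEStronglyMeasurable v (m.restrict V)) :
    AEStronglyMeasurable (fun x => L (a x) (v x)) m := by
  have hind : V.indicator (fun x => L (a x) (v x)) = fun x => L (a x) (v x) :=
    indicator_eq_self.2 fun x hx => haV (subset_tsupport a fun ha0 => hx (by simp [ha0]))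
  rw [← hind, aestronglyMeasurable_indicator_iff hV]
  exact L.aestronglyMeasurable_comp₂ ha.aestronglyMeasurable hv

theorem exists_eLpNorm_bilin_le_restrict (L : F₁ →L[ℝ] F₂ →L[ℝ] F₃) (ha : Continuous a)
    (hac : HasCompactSupport a) (haV : tsupport a ⊆ V) (p : ℝ≥0∞) :
    ∃ C : ℝ≥0, ∀ v : E → F₂,
      eLpNorm (fun x => L (a x) (v x)) p m ≤ C * eLpNorm v p (m.restrict V) := by
  obtain ⟨A, hA⟩ := ha.bounded_above_of_compact_support hac
  refine ⟨‖L‖₊ * A.toNNReal, fun v => ?_⟩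
  rw [← eLpNorm_restrict_eq_of_support_subset (s := V)
    fun x hx => haV (subset_tsupport a fun ha0 => hx (by simp [ha0]))]
  refine eLpNorm_le_nnreal_smul_eLpNorm_of_ae_le_mul (ae_of_all _ fun x => ?_) p
  calc ‖L (a x) (v x)‖ ≤ ‖L‖ * ‖a x‖ * ‖v x‖ := L.le_opNorm₂ _ _
    _ ≤ (‖L‖₊ * A.toNNReal : ℝ≥0) * ‖v x‖ := by
      push_cast
      gcongr
      exact (hA x).trans (Real.le_coe_toNNReal A)

end Bilinear

theorem eLpNorm_sub_le_eLpNorm_sub_add {α F : Type*} [MeasurableSpace α] [NormedAddCommGroup F]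
    {m : Measure α} {p : ℝ≥0∞} {f g h : α → F} (hf : AEStronglyMeasurable f m)
    (hg : AEStronglyMeasurable g m) (hh : AEStronglyMeasurable h m) (hp : 1 ≤ p) :
    eLpNorm (fun x => f x - h x) p m ≤
      eLpNorm (fun x => f x - g x) p m + eLpNorm (fun x => g x - h x) p m := by
  refine le_trans (eLpNorm_congr_ae (ae_of_all _ fun x => ?_)).le
    (eLpNorm_add_le (hf.sub hg) (hg.sub hh) hp)
  exact (sub_add_sub_cancel (f x) (g x) (h x)).symm

theorem fderiv_cutoff_smul_sub_ae_eq {E F : Type*} [NormedAddCommGroup E] [NormedSpace ℝ E]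
    [FiniteDimensional ℝ E] [MeasurableSpace E] [BorelSpace E] [NormedAddCommGroup F]
    [NormedSpace ℝ F] [FiniteDimensional ℝ F] {m μ : Measure E} [μ.IsAddHaarMeasure] (hm : m ≪ μ)
    {χ : E → ℝ} (hχ : ContDiff ℝ 1 χ) {w : E → F} {K : ℝ≥0} (hw : LipschitzWith K w) {u : E → F}
    {G : E → E →L[ℝ] F} :
    (fun x => fderiv ℝ (fun y => χ y • w y) x - (χ x • G x + (fderiv ℝ χ x).smulRight (u x)))
      =ᵐ[m] (fun x => χ x • (fderiv ℝ w x - G x)) +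
        fun x => (fderiv ℝ χ x).smulRight (w x - u x) := by
  filter_upwards [hm.ae_le hw.ae_differentiableAt] with x hx
  rw [fderiv_fun_smul (hχ.differentiable one_ne_zero x) hx]
  ext v
  simp [smul_sub, add_sub_add_comm]

/-- The pair `(u, G)` belongs to the closure of `{(w, Dw) | w Lipschitz}` in `Lᵖ(m)`. -/
structure LipschitzApproximable {E F : Type*} [NormedAddCommGroup E] [NormedSpace ℝ E]
    [MeasurableSpace E] [NormedAddCommGroup F] [NormedSpace ℝ F] (m : Measure E) (p : ℝ≥0∞)
    (u : E → F) (G : E → E →L[ℝ] F) : Prop where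
  aestronglyMeasurable : AEStronglyMeasurable u m
  aestronglyMeasurable_fderiv : AEStronglyMeasurable G m
  exists_eLpNorm_sub_le : ∀ ε : ℝ≥0∞, ε ≠ 0 → ∃ (w : E → F) (K : ℝ≥0), LipschitzWith K w ∧
    eLpNorm (fun x => w x - u x) p m ≤ ε ∧ eLpNorm (fun x => fderiv ℝ w x - G x) p m ≤ ε

namespace LipschitzApproximable

section Basic

variable {E F : Type*} [NormedAddCommGroup E] [NormedSpace ℝ E] [MeasurableSpace E]
  [NormedAddCommGroup F] [NormedSpace ℝ F] {m : Measure E} {p : ℝ≥0∞} {u u' : E → F}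
  {G G' : E → E →L[ℝ] F}

theorem of_exists_mul_le (C : ℝ≥0) (hu : AEStronglyMeasurable u m) (hG : AEStronglyMeasurable G m)
    (h : ∀ ε : ℝ≥0∞, ε ≠ 0 → ∃ (w : E → F) (K : ℝ≥0), LipschitzWith K w ∧
      eLpNorm (fun x => w x - u x) p m ≤ C * ε ∧
      eLpNorm (fun x => fderiv ℝ w x - G x) p m ≤ C * ε) :
    LipschitzApproximable m p u G where
  aestronglyMeasurable := hu
  aestronglyMeasurable_fderiv := hG
  exists_eLpNorm_sub_le ε hε := by
    obtain ⟨w, K, hw, hwu, hwG⟩ := h (ε / C) (ENNReal.div_ne_zero.2 ⟨hε, ENNReal.coe_ne_top⟩)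
    exact ⟨w, K, hw, hwu.trans ENNReal.mul_div_le, hwG.trans ENNReal.mul_div_le⟩

theorem congr_ae (h : LipschitzApproximable m p u G) (hu : u =ᵐ[m] u') (hG : G =ᵐ[m] G') :
    LipschitzApproximable m p u' G' where
  aestronglyMeasurable := h.aestronglyMeasurable.congr hu
  aestronglyMeasurable_fderiv := h.aestronglyMeasurable_fderiv.congr hG
  exists_eLpNorm_sub_le ε hε := by
    obtain ⟨w, K, hw, hwu, hwG⟩ := h.exists_eLpNorm_sub_le ε hε
    refine ⟨w, K, hw, (eLpNorm_congr_ae ?_).trans_le hwu, (eLpNorm_congr_ae ?_).trans_le hwG⟩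
    · filter_upwards [hu] with x hx using by rw [hx]
    · filter_upwards [hG] with x hx using by rw [hx]

theorem zero : LipschitzApproximable m p (0 : E → F) 0 where
  aestronglyMeasurable := aestronglyMeasurable_zero
  aestronglyMeasurable_fderiv := aestronglyMeasurable_zero
  exists_eLpNorm_sub_le ε _ := ⟨0, 0, LipschitzWith.const 0, by simp, by
    simp only [fderiv_zero, Pi.zero_apply, sub_zero]
    exact (eLpNorm_zero' (ε := E →L[ℝ] F)).trans_le zero_le⟩

end Basic

variable {E F : Type*} [NormedAddCommGroup E] [NormedSpace ℝ E] [FiniteDimensional ℝ E]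
  [MeasurableSpace E] [BorelSpace E] [NormedAddCommGroup F] [NormedSpace ℝ F]
  [FiniteDimensional ℝ F] {m m' μ : Measure E} {p : ℝ≥0∞} {u u₁ u₂ : E → F}
  {G G₁ G₂ : E → E →L[ℝ] F}

theorem of_forall_exists_eLpNorm_sub_le (hp : 1 ≤ p) (hu : AEStronglyMeasurable u m)
    (hG : AEStronglyMeasurable G m)
    (h : ∀ ε : ℝ≥0∞, ε ≠ 0 → ∃ u' G', LipschitzApproximable m p u' G' ∧
      eLpNorm (fun x => u' x - u x) p m ≤ ε ∧ eLpNorm (fun x => G' x - G x) p m ≤ ε) :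
    LipschitzApproximable m p u G := by
  have := FiniteDimensional.complete ℝ F
  refine of_exists_mul_le 2 hu hG fun ε hε => ?_
  obtain ⟨u', G', happrox, huu', hGG'⟩ := h ε hε
  obtain ⟨w, K, hw, hwu, hwG⟩ := happrox.exists_eLpNorm_sub_le ε hε
  have hw_meas : AEStronglyMeasurable w m := hw.continuous.aestronglyMeasurable
  have hDw_meas : AEStronglyMeasurable (fderiv ℝ w) m :=
    (measurable_fderiv ℝ w).stronglyMeasurable.aestronglyMeasurable
  rw [ENNReal.coe_ofNat, two_mul]
  exact ⟨w, K, hw,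
    (eLpNorm_sub_le_eLpNorm_sub_add hw_meas happrox.aestronglyMeasurable hu hp).trans
      (add_le_add hwu huu'),
    (eLpNorm_sub_le_eLpNorm_sub_add hDw_meas happrox.aestronglyMeasurable_fderiv hG hp).trans
      (add_le_add hwG hGG')⟩

theorem comp (hp : p ≠ ∞) [μ.IsAddHaarMeasure] (hm : m ≪ μ) (hm' : m' ≪ μ)
    (h : LipschitzApproximable m' p u G) {Φ : E → E} {L : ℝ≥0} (hΦ : LipschitzWith L Φ)
    (hpush : HasBoundedPushforward Φ m m') :
    LipschitzApproximable m p (u ∘ Φ) fun y => (G (Φ y)).comp (fderiv ℝ Φ y) := by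
  have := FiniteDimensional.complete ℝ F
  obtain ⟨C, hC⟩ := hpush.exists_eLpNorm_comp_le (F := F) hp
  obtain ⟨C', hC'⟩ := hpush.exists_eLpNorm_comp_le (F := E →L[ℝ] F) hp
  have hDΦ : AEStronglyMeasurable (fderiv ℝ Φ) m :=
    (measurable_fderiv ℝ Φ).stronglyMeasurable.aestronglyMeasurable
  refine of_exists_mul_le (C + L * C')
    (h.aestronglyMeasurable.comp_quasiMeasurePreserving hpush.quasiMeasurePreserving)
    ((ContinuousLinearMap.compL ℝ E E F).aestronglyMeasurable_comp₂
      (h.aestronglyMeasurable_fderiv.comp_quasiMeasurePreserving hpush.quasiMeasurePreserving) hDΦ)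
    fun ε hε => ?_
  obtain ⟨w, K, hw, hwu, hwG⟩ := h.exists_eLpNorm_sub_le ε hε
  have hDw : AEStronglyMeasurable (fderiv ℝ w) m' :=
    (measurable_fderiv ℝ w).stronglyMeasurable.aestronglyMeasurable
  refine ⟨w ∘ Φ, K * L, hw.comp hΦ, ?_, ?_⟩
  · calc eLpNorm ((fun x => w x - u x) ∘ Φ) p m
        ≤ C * eLpNorm (fun x => w x - u x) p m' :=
          hC _ (hw.continuous.aestronglyMeasurable.sub h.aestronglyMeasurable)
      _ ≤ (C + L * C' : ℝ≥0) * ε := by gcongr; exact le_self_add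
  · have hchain : ∀ᵐ y ∂m, ‖fderiv ℝ (w ∘ Φ) y - (G (Φ y)).comp (fderiv ℝ Φ y)‖ ≤
        L * ‖((fun x => fderiv ℝ w x - G x) ∘ Φ) y‖ := by
      filter_upwards [hm.ae_le hΦ.ae_differentiableAt, hpush.quasiMeasurePreserving.ae
        (hm'.ae_le hw.ae_differentiableAt)] with y hΦy hwy
      rw [fderiv_comp y hwy hΦy, ← ContinuousLinearMap.sub_comp, mul_comm]
      exact (ContinuousLinearMap.opNorm_comp_le _ _).trans
        (by gcongr; exacts [le_rfl, norm_fderiv_le_of_lipschitz ℝ hΦ])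
    calc _ ≤ L * eLpNorm ((fun x => fderiv ℝ w x - G x) ∘ Φ) p m :=
          eLpNorm_le_nnreal_smul_eLpNorm_of_ae_le_mul hchain p
      _ ≤ L * (C' * eLpNorm (fun x => fderiv ℝ w x - G x) p m') := by
          gcongr; exact hC' _ (hDw.sub h.aestronglyMeasurable_fderiv)
      _ ≤ (C + L * C' : ℝ≥0) * ε := by
          rw [← mul_assoc]; gcongr; exact_mod_cast le_add_self

theorem add (hp : 1 ≤ p) [μ.IsAddHaarMeasure] (hm : m ≪ μ) (h₁ : LipschitzApproximable m p u₁ G₁)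
    (h₂ : LipschitzApproximable m p u₂ G₂) :
    LipschitzApproximable m p (u₁ + u₂) (G₁ + G₂) := by
  have := FiniteDimensional.complete ℝ F
  refine of_exists_mul_le 2 (h₁.aestronglyMeasurable.add h₂.aestronglyMeasurable)
    (h₁.aestronglyMeasurable_fderiv.add h₂.aestronglyMeasurable_fderiv) fun ε hε => ?_
  obtain ⟨w₁, K₁, hw₁, hwu₁, hwG₁⟩ := h₁.exists_eLpNorm_sub_le ε hε
  obtain ⟨w₂, K₂, hw₂, hwu₂, hwG₂⟩ := h₂.exists_eLpNorm_sub_le ε hε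
  have hDw (w : E → F) : AEStronglyMeasurable (fderiv ℝ w) m :=
    (measurable_fderiv ℝ w).stronglyMeasurable.aestronglyMeasurable
  rw [ENNReal.coe_ofNat, two_mul]
  refine ⟨w₁ + w₂, K₁ + K₂, hw₁.add hw₂, ?_, ?_⟩
  · refine le_trans (eLpNorm_congr_ae (ae_of_all _ fun x => ?_)).le
      ((eLpNorm_add_le (hw₁.continuous.aestronglyMeasurable.sub h₁.aestronglyMeasurable)
        (hw₂.continuous.aestronglyMeasurable.sub h₂.aestronglyMeasurable) hp).trans
        (add_le_add hwu₁ hwu₂))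
    exact add_sub_add_comm _ _ _ _
  · refine le_trans (eLpNorm_congr_ae ?_).le
      ((eLpNorm_add_le ((hDw w₁).sub h₁.aestronglyMeasurable_fderiv)
        ((hDw w₂).sub h₂.aestronglyMeasurable_fderiv) hp).trans (add_le_add hwG₁ hwG₂))
    filter_upwards [hm.ae_le hw₁.ae_differentiableAt, hm.ae_le hw₂.ae_differentiableAt]
      with x hx₁ hx₂
    rw [fderiv_add hx₁ hx₂]
    exact add_sub_add_comm _ _ _ _

theorem sum {ι : Type*} (s : Finset ι) (hp : 1 ≤ p) [μ.IsAddHaarMeasure] (hm : m ≪ μ)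
    {v : ι → E → F} {H : ι → E → E →L[ℝ] F}
    (h : ∀ i ∈ s, LipschitzApproximable m p (v i) (H i)) :
    LipschitzApproximable m p (∑ i ∈ s, v i) (∑ i ∈ s, H i) := by
  induction s using Finset.cons_induction with
  | empty => exact zero
  | cons i s hi ih =>
    rw [Finset.sum_cons, Finset.sum_cons]
    exact (h i (Finset.mem_cons_self i s)).add hp hm
      (ih fun j hj => h j (Finset.mem_cons_of_mem hj))

theorem smul_cutoff (hp : 1 ≤ p) [μ.IsAddHaarMeasure] (hm : m ≪ μ) {V : Set E}
    (hV : MeasurableSet V) (h : LipschitzApproximable (m.restrict V) p u G) {χ : E → ℝ}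
    (hχ : ContDiff ℝ 1 χ) (hχc : HasCompactSupport χ) (hχV : tsupport χ ⊆ V) :
    LipschitzApproximable m p (fun x => χ x • u x)
      fun x => χ x • G x + (fderiv ℝ χ x).smulRight (u x) := by
  have := FiniteDimensional.complete ℝ F
  have hDχ : Continuous (fderiv ℝ χ) := hχ.continuous_fderiv one_ne_zero
  have hDχV : tsupport (fderiv ℝ χ) ⊆ V := (tsupport_fderiv_subset ℝ).trans hχV
  have hsmul {H : E → E →L[ℝ] F} (hH : AEStronglyMeasurable H (m.restrict V)) :
      AEStronglyMeasurable (fun x => χ x • H x) m :=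
    aestronglyMeasurable_bilin_of_restrict (.lsmul ℝ ℝ) hχ.continuous hχV hV hH
  have hsmulRight {v : E → F} (hv : AEStronglyMeasurable v (m.restrict V)) :
      AEStronglyMeasurable (fun x => (fderiv ℝ χ x).smulRight (v x)) m :=
    aestronglyMeasurable_bilin_of_restrict (.smulRightL ℝ E F) hDχ hDχV hV hv
  obtain ⟨C₀, hC₀⟩ := exists_eLpNorm_bilin_le_restrict (m := m)
    (.lsmul ℝ ℝ : ℝ →L[ℝ] F →L[ℝ] F) hχ.continuous hχc hχV p
  obtain ⟨C₁, hC₁⟩ := exists_eLpNorm_bilin_le_restrict (m := m)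
    (.lsmul ℝ ℝ : ℝ →L[ℝ] (E →L[ℝ] F) →L[ℝ] (E →L[ℝ] F)) hχ.continuous hχc hχV p
  obtain ⟨C₂, hC₂⟩ := exists_eLpNorm_bilin_le_restrict (m := m)
    (.smulRightL ℝ E F) hDχ (hχc.fderiv ℝ) hDχV p
  refine of_exists_mul_le (C₀ + (C₁ + C₂))
    (aestronglyMeasurable_bilin_of_restrict (.lsmul ℝ ℝ) hχ.continuous hχV hV
      h.aestronglyMeasurable)
    ((hsmul h.aestronglyMeasurable_fderiv).add (hsmulRight h.aestronglyMeasurable))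
    fun ε hε => ?_
  obtain ⟨w, K, hw, hwu, hwG⟩ := h.exists_eLpNorm_sub_le ε hε
  obtain ⟨K', hχw⟩ := exists_lipschitzWith_smul_of_hasCompactSupport hχ hχc hw
  rw [ENNReal.coe_add, add_mul]
  refine ⟨_, K', hχw, le_add_right ?_, le_add_left ?_⟩
  · simp_rw [← smul_sub]
    exact (hC₀ _).trans (by gcongr)
  · rw [eLpNorm_congr_ae (fderiv_cutoff_smul_sub_ae_eq hm hχ hw), ENNReal.coe_add, add_mul]
    have hDw : AEStronglyMeasurable (fderiv ℝ w) (m.restrict V) :=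
      (measurable_fderiv ℝ w).stronglyMeasurable.aestronglyMeasurable
    exact (eLpNorm_add_le (hsmul (hDw.sub h.aestronglyMeasurable_fderiv))
      (hsmulRight (hw.continuous.aestronglyMeasurable.sub h.aestronglyMeasurable)) hp).trans
      (add_le_add ((hC₁ _).trans (mul_le_mul' le_rfl hwG))
        ((hC₂ _).trans (mul_le_mul' le_rfl hwu)))

end LipschitzApproximable

end LipschitzApproximable

section InteriorApproximation

open scoped Convolution

theorem eLpNorm_restrict_sub_le_of_eqOn {α F : Type*} [MeasurableSpace α] [NormedAddCommGroup F]
    {m : Measure α} {p : ℝ≥0∞} {V : Set α} (hV : MeasurableSet V) {f f' g g' : α → F}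
    (hf : EqOn f f' V) (hg : EqOn g g' V) :
    eLpNorm (fun x => f x - g x) p (m.restrict V) ≤ eLpNorm (fun x => f' x - g' x) p m := by
  refine le_trans (eLpNorm_congr_ae ?_).le (eLpNorm_restrict_le _ p m V)
  filter_upwards [ae_restrict_mem hV] with x hx
  rw [hf hx, hg hx]

variable {E F : Type*} [NormedAddCommGroup E] [NormedSpace ℝ E] [FiniteDimensional ℝ E]
  [MeasurableSpace E] [BorelSpace E] [NormedAddCommGroup F] {μ : Measure E} [μ.IsAddHaarMeasure]
  {p : ℝ≥0∞}

theorem eventually_eLpNorm_translate_sub_le (hp1 : 1 ≤ p) (hp : p ≠ ∞) {v : E → F}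
    (hv : MemLp v p μ) {ε : ℝ≥0∞} (hε : ε ≠ 0) :
    ∀ᶠ h in 𝓝 (0 : E), eLpNorm (fun x => v (h + x) - v x) p μ ≤ ε :=
  (tendsto_eLpNorm_translate_sub hp1 hp hv).eventually (Iic_mem_nhds (pos_iff_ne_zero.2 hε))

theorem tsupport_normed_sub_left_subset (φ : ContDiffBump (0 : E)) (x : E) :
    tsupport (fun t => φ.normed μ (x - t)) ⊆ Metric.closedBall x φ.rOut := by
  refine closure_minimal (fun t ht => ?_) Metric.isClosed_closedBall
  have ht' : x - t ∈ Metric.ball (0 : E) φ.rOut := φ.support_normed_eq (μ := μ) ▸ ht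
  rw [Metric.mem_closedBall, dist_comm, dist_eq_norm]
  exact (mem_ball_zero_iff.1 ht').le

variable [NormedSpace ℝ F]

theorem exists_lipschitzWith_convolution {ρ : E → ℝ} (hρ : ContDiff ℝ 1 ρ)
    (hρs : HasCompactSupport ρ) {v : E → F} (hv : LocallyIntegrable v μ)
    (hvs : HasCompactSupport v) :
    ∃ K : ℝ≥0, LipschitzWith K (ρ ⋆[ContinuousLinearMap.lsmul ℝ ℝ, μ] v) :=
  (hρs.contDiff_convolution_left _ hρ hv).lipschitzWith_of_hasCompactSupport
    (hρs.convolution _ hvs) one_ne_zero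

theorem exists_pos_forall_eLpNorm_convolution_sub_le [CompleteSpace F] (hp1 : 1 ≤ p) (hp : p ≠ ∞)
    {v : E → F} (hv : MemLp v p μ) {ε : ℝ≥0∞} (hε : ε ≠ 0) :
    ∃ η > 0, ∀ φ : ContDiffBump (0 : E), φ.rOut ≤ η →
      eLpNorm (fun x => (φ.normed μ ⋆[ContinuousLinearMap.lsmul ℝ ℝ, μ] v) x - v x) p μ ≤ ε := by
  obtain ⟨η, hη, htranslate⟩ := Metric.eventually_nhds_iff_ball.1
    (eventually_eLpNorm_translate_sub_le hp1 hp hv hε)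
  exact ⟨η, hη, fun φ hφ => eLpNorm_normed_convolution_sub_le hp1 hp φ hv
    fun h hh => htranslate h (Metric.ball_subset_ball hφ hh)⟩

variable [FiniteDimensional ℝ F] {Ω V : Set E} {u : E → F} {G : E → E →L[ℝ] F}

theorem IsWeakFDerivOn.lipschitzApproximable_of_isCompact (hp1 : 1 ≤ p) (hp : p ≠ ∞)
    (hΩ : IsOpen Ω) (hΩb : Bornology.IsBounded Ω) (hw : IsWeakFDerivOn μ Ω u G)
    (hu : MemLp u p (μ.restrict Ω)) (hG : MemLp G p (μ.restrict Ω)) (hV : IsCompact V)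
    (hVΩ : V ⊆ Ω) :
    LipschitzApproximable (μ.restrict V) p u G := by
  have := FiniteDimensional.complete ℝ F
  have hu' : MemLp (Ω.indicator u) p μ := (memLp_indicator_iff_restrict hΩ.measurableSet).2 hu
  have hG' : MemLp (Ω.indicator G) p μ :=
    (memLp_indicator_iff_restrict (ε := E →L[ℝ] F) hΩ.measurableSet).2 hG
  have hle : μ.restrict V ≤ μ.restrict Ω := Measure.restrict_mono hVΩ le_rfl
  refine ⟨hu.1.mono_measure hle, hG.1.mono_measure hle, fun ε hε => ?_⟩
  obtain ⟨δ, hδ, hδΩ⟩ := hV.exists_cthickening_subset_open hΩ hVΩ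
  obtain ⟨η₁, hη₁, happrox⟩ := exists_pos_forall_eLpNorm_convolution_sub_le hp1 hp hu' hε
  obtain ⟨η₂, hη₂, happrox'⟩ := exists_pos_forall_eLpNorm_convolution_sub_le hp1 hp hG' hε
  have hr : 0 < min δ (min η₁ η₂) := lt_min hδ (lt_min hη₁ hη₂)
  obtain ⟨φ, hφ⟩ : ∃ φ : ContDiffBump (0 : E), φ.rOut ≤ min δ (min η₁ η₂) :=
    ⟨⟨_, _, half_pos hr, half_lt_self hr⟩, le_rfl⟩
  simp only [le_min_iff] at hφ
  have hsupp x (hx : x ∈ V) : tsupport (fun t => φ.normed μ (x - t)) ⊆ Ω :=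
    calc tsupport (fun t => φ.normed μ (x - t)) ⊆ Metric.closedBall x φ.rOut :=
          tsupport_normed_sub_left_subset φ x
      _ ⊆ Metric.closedBall x δ := Metric.closedBall_subset_closedBall hφ.1
      _ ⊆ Ω := (Metric.closedBall_subset_cthickening hx δ).trans hδΩ
  obtain ⟨K, hK⟩ := exists_lipschitzWith_convolution (φ.contDiff_normed (μ := μ))
    φ.hasCompactSupport_normed (hu'.locallyIntegrable hp1)
    (HasCompactSupport.of_support_subset_isCompact hΩb.isCompact_closure
      (support_indicator_subset.trans subset_closure))
  refine ⟨_, K, hK, ?_, ?_⟩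
  · exact (eLpNorm_restrict_sub_le_of_eqOn hV.measurableSet (eqOn_refl _ _)
      fun x hx => (indicator_of_mem (hVΩ hx) u).symm).trans (happrox φ hφ.2.1)
  · refine (eLpNorm_restrict_sub_le_of_eqOn hV.measurableSet (fun x hx => ?_)
      fun x hx => (indicator_of_mem (hVΩ hx) G).symm).trans (happrox' φ hφ.2.2)
    exact hw.fderiv_convolution_indicator hΩ.measurableSet (hu'.locallyIntegrable hp1)
      (hG'.locallyIntegrable hp1) φ.contDiff_normed φ.hasCompactSupport_normed (hsupp x hx)

end InteriorApproximation

section ChartApproximation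

namespace LipschitzChart

section Geometry

variable {E : Type*} [NormedAddCommGroup E] [NormedSpace ℝ E] {Ω : Set E} {x : E}
  (c : LipschitzChart Ω x)

/-- The part of the model in the full ball of a chart: the image of `Ω ∩ source`. -/
def outerModel : Set E := Metric.ball (c.toFun x) (2 * c.radius) ∩ c.model

/-- The part of the model in the ball of half the size: the image of `Ω ∩ core`. -/
def innerModel : Set E := Metric.ball (c.toFun x) c.radius ∩ c.model

theorem isOpen_outerModel : IsOpen c.outerModel := Metric.isOpen_ball.inter c.isOpen_model

theorem isOpen_innerModel : IsOpen c.innerModel := Metric.isOpen_ball.inter c.isOpen_model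

theorem innerModel_subset_outerModel : c.innerModel ⊆ c.outerModel :=
  inter_subset_inter_left _ (Metric.ball_subset_ball (by linarith [c.radius_pos]))

theorem mapsTo_toFun_core_inter : MapsTo c.toFun (c.core ∩ Ω) c.innerModel :=
  fun y hy => ⟨hy.1.2, (c.mem_iff y hy.1.1).1 hy.2⟩

theorem isBounded_core : Bornology.IsBounded c.core :=
  (c.lipschitz_inv.isBounded_image (Metric.isBounded_ball (x := c.toFun x) (r := c.radius))).subset
    fun y hy => ⟨c.toFun y, hy.2, c.leftInvOn hy.1⟩

theorem smul_direction_add_mem_closedBall {s : ℝ} (hs : 0 < s) (hsr : s ≤ c.radius / 2) {z : E}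
    (hz : z ∈ Metric.ball (c.toFun x) c.radius) :
    s • c.direction + z ∈ Metric.closedBall (c.toFun x) (3 / 2 * c.radius) := by
  have hnorm : ‖s • c.direction‖ ≤ s := by
    rw [norm_smul, Real.norm_of_nonneg hs.le]
    exact mul_le_of_le_one_right hs.le c.norm_direction_le
  rw [Metric.mem_ball, dist_eq_norm] at hz
  rw [Metric.mem_closedBall, dist_eq_norm, add_sub_assoc]
  linarith [norm_add_le (s • c.direction) (z - c.toFun x)]

/-- The closed part of the outer model lying at least `s` away from the boundary of the model in
the transversal direction. -/
def shiftedModel (s : ℝ) : Set E :=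
  Metric.closedBall (c.toFun x) (3 / 2 * c.radius) ∩ (s • c.direction + ·) '' closure c.model

theorem shiftedModel_subset_outerModel {s : ℝ} (hs : 0 < s) :
    c.shiftedModel s ⊆ c.outerModel := by
  rintro _ ⟨hball, z, hz, rfl⟩
  refine ⟨Metric.closedBall_subset_ball (by linarith [c.radius_pos]) hball, ?_⟩
  simpa only [add_comm] using c.add_smul_mem_model z hz s hs

theorem isCompact_shiftedModel [FiniteDimensional ℝ E] (s : ℝ) : IsCompact (c.shiftedModel s) :=
  have := FiniteDimensional.proper ℝ E
  (isCompact_closedBall _ _).inter_right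
    ((Homeomorph.addLeft (s • c.direction)).isClosedMap _ isClosed_closure)

theorem smul_direction_add_mem_shiftedModel {s : ℝ} (hs : 0 < s) (hsr : s ≤ c.radius / 2) {z : E}
    (hz : z ∈ c.innerModel) : s • c.direction + z ∈ c.shiftedModel s :=
  ⟨c.smul_direction_add_mem_closedBall hs hsr hz.1, z, subset_closure hz.2, rfl⟩

end Geometry

variable {E F : Type*} [NormedAddCommGroup E] [NormedSpace ℝ E] [FiniteDimensional ℝ E]
  [MeasurableSpace E] [BorelSpace E] [NormedAddCommGroup F] {μ : Measure E} [μ.IsAddHaarMeasure]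
  {p : ℝ≥0∞} {Ω : Set E} {x : E} (c : LipschitzChart Ω x)

theorem hasBoundedPushforward_toFun :
    HasBoundedPushforward c.toFun (μ.restrict (c.core ∩ Ω)) (μ.restrict c.innerModel) :=
  hasBoundedPushforward_of_leftInvOn μ c.lipschitz.continuous.measurable c.lipschitz_inv
    c.mapsTo_toFun_core_inter (c.leftInvOn.mono fun _ hy => hy.1.1)

theorem hasBoundedPushforward_invFun :
    HasBoundedPushforward c.invFun (μ.restrict c.outerModel) (μ.restrict Ω) :=
  hasBoundedPushforward_of_leftInvOn μ c.lipschitz_inv.continuous.measurable c.lipschitz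
    (fun _ hz => c.invFun_mem hz) (c.rightInvOn.mono inter_subset_left)

theorem hasBoundedPushforward_invFun_translate {s : ℝ} (hs : 0 < s) (hsr : s ≤ c.radius / 2) :
    HasBoundedPushforward (fun z => c.invFun (s • c.direction + z)) (μ.restrict c.innerModel)
      (μ.restrict (c.invFun '' c.shiftedModel s)) := by
  refine hasBoundedPushforward_of_leftInvOn μ
    (g := fun y => c.toFun y - s • c.direction) (K := c.lipConst)
    (c.lipschitz_inv.continuous.measurable.comp (measurable_const_add _))
    (by simpa using c.lipschitz.sub (LipschitzWith.const (s • c.direction)))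
    (fun z hz => mem_image_of_mem _ (c.smul_direction_add_mem_shiftedModel hs hsr hz))
    fun z hz => ?_
  have hmem := c.shiftedModel_subset_outerModel hs (c.smul_direction_add_mem_shiftedModel hs hsr hz)
  simp only [c.rightInvOn hmem.1, add_sub_cancel_left]

theorem eventually_eLpNorm_translate_sub_le (hp1 : 1 ≤ p) (hp : p ≠ ∞) {v : E → F}
    (hv : MemLp v p (μ.restrict c.outerModel)) {ε : ℝ≥0∞} (hε : ε ≠ 0) :
    ∀ᶠ s in 𝓝[>] (0 : ℝ),
      eLpNorm (fun z => v (s • c.direction + z) - v z) p (μ.restrict c.innerModel) ≤ ε := by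
  have hv' : MemLp (c.outerModel.indicator v) p μ :=
    (memLp_indicator_iff_restrict c.isOpen_outerModel.measurableSet).2 hv
  have hlim : Tendsto (fun s : ℝ => s • c.direction) (𝓝[>] 0) (𝓝 0) := by
    have hcont : Continuous fun s : ℝ => s • c.direction := by fun_prop
    exact (hcont.tendsto' 0 0 (zero_smul ℝ c.direction)).mono_left nhdsWithin_le_nhds
  filter_upwards [hlim.eventually (_root_.eventually_eLpNorm_translate_sub_le hp1 hp hv' hε),
    Ioo_mem_nhdsGT (half_pos c.radius_pos)] with s htranslate hs
  refine (eLpNorm_restrict_sub_le_of_eqOn c.isOpen_innerModel.measurableSet (fun z hz => ?_)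
    fun z hz => (indicator_of_mem (c.innerModel_subset_outerModel hz) v).symm).trans htranslate
  exact (indicator_of_mem (c.shiftedModel_subset_outerModel hs.1
    (c.smul_direction_add_mem_shiftedModel hs.1 hs.2.le hz)) v).symm

variable [NormedSpace ℝ F] {u : E → F} {G : E → E →L[ℝ] F}

theorem memLp_pullback_fderiv (hp : p ≠ ∞) (hG : MemLp G p (μ.restrict Ω)) :
    MemLp (fun z => (G (c.invFun z)).comp (fderiv ℝ c.invFun z)) p
      (μ.restrict c.outerModel) := by
  have := FiniteDimensional.complete ℝ E
  have hG' := c.hasBoundedPushforward_invFun.memLp_comp hp hG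
  refine MemLp.of_le_mul (c := c.lipConst) hG'
    ((ContinuousLinearMap.compL ℝ E E F).aestronglyMeasurable_comp₂ hG'.1
      (measurable_fderiv ℝ c.invFun).stronglyMeasurable.aestronglyMeasurable)
    (ae_of_all _ fun z => ?_)
  rw [mul_comm]
  exact (ContinuousLinearMap.opNorm_comp_le _ _).trans (mul_le_mul_of_nonneg_left
    (norm_fderiv_le_of_lipschitz ℝ c.lipschitz_inv) (norm_nonneg _))

variable [FiniteDimensional ℝ F]

theorem lipschitzApproximable_pullback_translate (hp1 : 1 ≤ p) (hp : p ≠ ∞) (hΩ : IsOpen Ω)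
    (hΩb : Bornology.IsBounded Ω) (hw : IsWeakFDerivOn μ Ω u G) (hu : MemLp u p (μ.restrict Ω))
    (hG : MemLp G p (μ.restrict Ω)) {s : ℝ} (hs : 0 < s) (hsr : s ≤ c.radius / 2) :
    LipschitzApproximable (μ.restrict c.innerModel) p
      (fun z => u (c.invFun (s • c.direction + z))) fun z =>
        (G (c.invFun (s • c.direction + z))).comp (fderiv ℝ c.invFun (s • c.direction + z)) := by
  have hcompact : IsCompact (c.invFun '' c.shiftedModel s) :=
    (c.isCompact_shiftedModel s).image c.lipschitz_inv.continuous
  have hsubset : c.invFun '' c.shiftedModel s ⊆ Ω :=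
    image_subset_iff.2 fun z hz => c.invFun_mem (c.shiftedModel_subset_outerModel hs hz)
  have hlip : LipschitzWith c.lipConst fun z => c.invFun (s • c.direction + z) := by
    simpa [Function.comp_def] using c.lipschitz_inv.comp (isometry_add_left _).lipschitz
  simpa only [Function.comp_def, fderiv_comp_add_left] using
    (hw.lipschitzApproximable_of_isCompact hp1 hp hΩ hΩb hu hG hcompact hsubset).comp hp
      Measure.absolutelyContinuous_restrict Measure.absolutelyContinuous_restrict hlip
      (c.hasBoundedPushforward_invFun_translate hs hsr)

theorem lipschitzApproximable_pullback (hp1 : 1 ≤ p) (hp : p ≠ ∞) (hΩ : IsOpen Ω)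
    (hΩb : Bornology.IsBounded Ω) (hw : IsWeakFDerivOn μ Ω u G) (hu : MemLp u p (μ.restrict Ω))
    (hG : MemLp G p (μ.restrict Ω)) :
    LipschitzApproximable (μ.restrict c.innerModel) p (u ∘ c.invFun)
      fun z => (G (c.invFun z)).comp (fderiv ℝ c.invFun z) := by
  have hu' := c.hasBoundedPushforward_invFun.memLp_comp hp hu
  have hG' := c.memLp_pullback_fderiv hp hG
  have hle : μ.restrict c.innerModel ≤ μ.restrict c.outerModel :=
    Measure.restrict_mono c.innerModel_subset_outerModel le_rfl
  refine .of_forall_exists_eLpNorm_sub_le hp1 (hu'.1.mono_measure hle) (hG'.1.mono_measure hle)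
    fun ε hε => ?_
  obtain ⟨s, hsu, hsG, hs⟩ := ((c.eventually_eLpNorm_translate_sub_le hp1 hp hu' hε).and
    ((c.eventually_eLpNorm_translate_sub_le hp1 hp hG' hε).and
      (Ioo_mem_nhdsGT (half_pos c.radius_pos)))).exists
  exact ⟨_, _, c.lipschitzApproximable_pullback_translate hp1 hp hΩ hΩb hw hu hG hs.1 hs.2.le,
    hsu, hsG⟩

theorem fderiv_invFun_comp_fderiv_toFun_ae_eq (hΩ : IsOpen Ω) :
    ∀ᵐ y ∂μ.restrict (c.core ∩ Ω),
      (fderiv ℝ c.invFun (c.toFun y)).comp (fderiv ℝ c.toFun y) = .id ℝ E := by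
  have hinv : ∀ᵐ z ∂μ.restrict c.innerModel, DifferentiableAt ℝ c.invFun z :=
    ae_restrict_of_ae c.lipschitz_inv.ae_differentiableAt
  filter_upwards [ae_restrict_of_ae c.lipschitz.ae_differentiableAt,
    c.hasBoundedPushforward_toFun.quasiMeasurePreserving.ae hinv,
    ae_restrict_mem (c.isOpen_core.inter hΩ).measurableSet] with y hy hinvy hmem
  have hid : c.invFun ∘ c.toFun =ᶠ[𝓝 y] id :=
    eventuallyEq_of_mem (c.isOpen_source.mem_nhds hmem.1.1) fun _ hy => c.leftInvOn hy
  rw [← fderiv_comp y hinvy hy, hid.fderiv_eq, fderiv_id]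

theorem lipschitzApproximable_core (hp1 : 1 ≤ p) (hp : p ≠ ∞) (hΩ : IsOpen Ω)
    (hΩb : Bornology.IsBounded Ω) (hw : IsWeakFDerivOn μ Ω u G) (hu : MemLp u p (μ.restrict Ω))
    (hG : MemLp G p (μ.restrict Ω)) :
    LipschitzApproximable (μ.restrict (c.core ∩ Ω)) p u G := by
  refine ((c.lipschitzApproximable_pullback hp1 hp hΩ hΩb hw hu hG).comp hp
    Measure.absolutelyContinuous_restrict Measure.absolutelyContinuous_restrict c.lipschitz
    c.hasBoundedPushforward_toFun).congr_ae ?_ ?_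
  · filter_upwards [ae_restrict_mem (c.isOpen_core.inter hΩ).measurableSet] with y hy
    exact congrArg u (c.leftInvOn hy.1.1)
  · filter_upwards [c.fderiv_invFun_comp_fderiv_toFun_ae_eq hΩ,
      ae_restrict_mem (c.isOpen_core.inter hΩ).measurableSet] with y hid hy
    rw [ContinuousLinearMap.comp_assoc, hid, ContinuousLinearMap.comp_id, c.leftInvOn hy.1.1]

end LipschitzChart

open scoped Manifold in
theorem LipschitzApproximable.of_cover {E F ι : Type*} [NormedAddCommGroup E] [NormedSpace ℝ E]
    [FiniteDimensional ℝ E] [MeasurableSpace E] [BorelSpace E] [NormedAddCommGroup F]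
    [NormedSpace ℝ F] [FiniteDimensional ℝ F] [Finite ι] {μ : Measure E} [μ.IsAddHaarMeasure]
    {p : ℝ≥0∞} {u : E → F} {G : E → E →L[ℝ] F} {Ω : Set E} {V : ι → Set E} (hp : 1 ≤ p)
    (hΩ : IsOpen Ω) (hV : ∀ i, IsOpen (V i)) (hVb : ∀ i, Bornology.IsBounded (V i))
    (hcover : closure Ω ⊆ ⋃ i, V i)
    (h : ∀ i, LipschitzApproximable (μ.restrict (V i ∩ Ω)) p u G) :
    LipschitzApproximable (μ.restrict Ω) p u G := by
  have := FiniteDimensional.proper ℝ E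
  cases nonempty_fintype ι
  obtain ⟨χ, hχ⟩ :=
    SmoothPartitionOfUnity.exists_isSubordinate 𝓘(ℝ, E) isClosed_closure V hV hcover
  have hχ1 (i : ι) : ContDiff ℝ 1 (χ i) := (χ i).contMDiff.contDiff.of_le (by simp)
  have hχc (i : ι) : HasCompactSupport (χ i) :=
    Metric.isCompact_of_isClosed_isBounded (isClosed_tsupport _) ((hVb i).subset (hχ i))
  have hsum : ∀ x ∈ Ω, ∑ i, χ i x = 1 := fun x hx => by
    rw [← χ.sum_eq_one (subset_closure hx), finsum_eq_sum_of_fintype]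
  have hfderiv : ∀ x ∈ Ω, ∑ i, fderiv ℝ (χ i) x = 0 := fun x hx => by
    have hconst : (fun x => ∑ i, χ i x) =ᶠ[𝓝 x] fun _ => 1 :=
      eventuallyEq_of_mem (hΩ.mem_nhds hx) hsum
    rw [← fderiv_fun_sum fun i _ => ((hχ1 i).differentiable one_ne_zero).differentiableAt,
      hconst.fderiv_eq, fderiv_const_apply]
  have hlocal (i : ι) := smul_cutoff hp Measure.absolutelyContinuous_restrict
    (hV i).measurableSet (Measure.restrict_restrict (hV i).measurableSet ▸ h i)
    (hχ1 i) (hχc i) (hχ i)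
  refine (sum Finset.univ hp Measure.absolutelyContinuous_restrict fun i _ => hlocal i).congr_ae
    ?_ ?_ <;> filter_upwards [ae_restrict_mem hΩ.measurableSet] with x hx
  · rw [Finset.sum_apply, ← Finset.sum_smul, hsum x hx, one_smul]
  · have hsmulRight : ∑ i, (fderiv ℝ (χ i) x).smulRight (u x) =
        (∑ i, fderiv ℝ (χ i) x).smulRight (u x) := by
      ext v
      simp [Finset.sum_smul]
    rw [Finset.sum_apply, Finset.sum_add_distrib, ← Finset.sum_smul, hsum x hx, one_smul,
      hsmulRight, hfderiv x hx, ContinuousLinearMap.zero_smulRight, add_zero]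

theorem HasLipschitzCharts.exists_finite_cover {E : Type*} [NormedAddCommGroup E]
    [NormedSpace ℝ E] [ProperSpace E] {Ω : Set E} (hΩ : HasLipschitzCharts Ω)
    (hΩb : Bornology.IsBounded Ω) :
    ∃ (t : Finset (closure Ω)) (c : ∀ x : t, LipschitzChart Ω x),
      closure Ω ⊆ ⋃ x, (c x).core := by
  let c (x : E) (hx : x ∈ closure Ω) : LipschitzChart Ω x := (hΩ x hx).some
  obtain ⟨t, ht⟩ := hΩb.isCompact_closure.elim_nhds_subcover' (fun x hx => (c x hx).core)
    fun x hx => (c x hx).isOpen_core.mem_nhds (c x hx).mem_core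
  refine ⟨t, fun x => c x x.1.2, fun x hx => ?_⟩
  obtain ⟨y, hy, hxy⟩ := mem_iUnion₂.1 (ht hx)
  exact mem_iUnion.2 ⟨⟨y, hy⟩, hxy⟩

theorem IsWeakFDerivOn.lipschitzApproximable {E F : Type*} [NormedAddCommGroup E]
    [NormedSpace ℝ E] [FiniteDimensional ℝ E] [MeasurableSpace E] [BorelSpace E]
    [NormedAddCommGroup F] [NormedSpace ℝ F] [FiniteDimensional ℝ F] {μ : Measure E}
    [μ.IsAddHaarMeasure] {p : ℝ≥0∞} {u : E → F} {G : E → E →L[ℝ] F} {Ω : Set E}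
    (hw : IsWeakFDerivOn μ Ω u G) (hp1 : 1 ≤ p) (hp : p ≠ ∞) (hΩ : IsOpen Ω)
    (hΩb : Bornology.IsBounded Ω) (hcharts : HasLipschitzCharts Ω)
    (hu : MemLp u p (μ.restrict Ω)) (hG : MemLp G p (μ.restrict Ω)) :
    LipschitzApproximable (μ.restrict Ω) p u G := by
  have := FiniteDimensional.proper ℝ E
  obtain ⟨t, c, hcover⟩ := hcharts.exists_finite_cover hΩb
  exact .of_cover hp1 hΩ (fun x => (c x).isOpen_core) (fun x => (c x).isBounded_core) hcover
    fun x => (c x).lipschitzApproximable_core hp1 hp hΩ hΩb hw hu hG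

end ChartApproximation

section SegmentInequality

open Classical in
/-- The norm of the Fréchet derivative, with the value `∞` where `w` is not differentiable: this
convention makes the mean value inequality along a segment true without exception. -/
noncomputable def enormFDeriv {E F : Type*} [NormedAddCommGroup E] [NormedSpace ℝ E]
    [NormedAddCommGroup F] [NormedSpace ℝ F] (w : E → F) (x : E) : ℝ≥0∞ :=
  if DifferentiableAt ℝ w x then ‖fderiv ℝ w x‖ₑ else ∞

variable {E F : Type*} [NormedAddCommGroup E] [NormedSpace ℝ E] [NormedAddCommGroup F]
  [NormedSpace ℝ F]

theorem measurable_enormFDeriv [CompleteSpace F] [MeasurableSpace E] [OpensMeasurableSpace E]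
    (w : E → F) : Measurable (enormFDeriv w) := by
  classical
  exact Measurable.ite (measurableSet_of_differentiableAt ℝ w) (measurable_fderiv ℝ w).enorm
    measurable_const

theorem enorm_deriv_comp_segment_le (w : E → F) (g : StrongDual ℝ F) (hg : ‖g‖ ≤ 1) {x y : E}
    (hxy : y ≠ x) (t : ℝ) :
    ‖deriv (fun t : ℝ => g (w (x + t • (y - x)))) t‖ₑ ≤
      ‖y - x‖ₑ * enormFDeriv w (x + t • (y - x)) := by
  by_cases hw : DifferentiableAt ℝ w (x + t • (y - x))
  · have hseg : HasDerivAt (fun t : ℝ => x + t • (y - x)) (y - x) t := by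
      simpa using ((hasDerivAt_id t).smul_const (y - x)).const_add x
    have hderiv := g.hasFDerivAt.comp_hasDerivAt t (hw.hasFDerivAt.comp_hasDerivAt t hseg)
    have hg' : ‖g‖ₑ ≤ 1 := by
      simpa only [enorm_one] using enorm_le_iff_norm_le.2 (hg.trans_eq (norm_one (α := ℝ)).symm)
    rw [enormFDeriv, if_pos hw, mul_comm]
    calc ‖deriv (fun t : ℝ => g (w (x + t • (y - x)))) t‖ₑ
        = ‖g (fderiv ℝ w (x + t • (y - x)) (y - x))‖ₑ := congrArg _ hderiv.deriv
      _ ≤ ‖g‖ₑ * ‖fderiv ℝ w (x + t • (y - x)) (y - x)‖ₑ := g.le_opENorm _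
      _ ≤ 1 * (‖fderiv ℝ w (x + t • (y - x))‖ₑ * ‖y - x‖ₑ) :=
        mul_le_mul' hg' (ContinuousLinearMap.le_opENorm _ _)
      _ = ‖fderiv ℝ w (x + t • (y - x))‖ₑ * ‖y - x‖ₑ := one_mul _
  · have hne : ‖y - x‖ₑ ≠ 0 := by simpa [sub_eq_zero] using hxy
    rw [enormFDeriv, if_neg hw, ENNReal.mul_top hne]
    exact le_top

theorem enorm_sub_le_lintegral_enormFDeriv {w : E → F} {K : ℝ≥0} (hw : LipschitzWith K w)
    (x y : E) :
    ‖w y - w x‖ₑ ≤ ‖y - x‖ₑ * ∫⁻ t in Ioc (0 : ℝ) 1, enormFDeriv w (x + t • (y - x)) := by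
  obtain rfl | hxy := eq_or_ne y x
  · simp
  obtain ⟨g, hg, hgxy⟩ := exists_dual_vector'' ℝ (w y - w x)
  have hseg : LipschitzWith ‖y - x‖₊ fun t : ℝ => x + t • (y - x) := by
    refine .of_dist_le_mul fun s t => le_of_eq ?_
    rw [dist_add_left, dist_eq_norm, ← sub_smul, norm_smul, Real.dist_eq, Real.norm_eq_abs,
      coe_nnnorm, mul_comm]
  have hac : AbsolutelyContinuousOnInterval (fun t : ℝ => g (w (x + t • (y - x)))) 0 1 :=
    (g.lipschitz.comp (hw.comp hseg)).lipschitzOnWith.absolutelyContinuousOnInterval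
  have hftc := hac.integral_deriv_eq_sub
  simp only [one_smul, zero_smul, add_zero, add_sub_cancel, ← map_sub, hgxy] at hftc
  rw [intervalIntegral.integral_of_le zero_le_one] at hftc
  calc ‖w y - w x‖ₑ = ‖(‖w y - w x‖ : ℝ)‖ₑ := (enorm_norm _).symm
    _ = ‖∫ t in Ioc (0 : ℝ) 1, deriv (fun t : ℝ => g (w (x + t • (y - x)))) t‖ₑ := by
      rw [hftc]; rfl
    _ ≤ ∫⁻ t in Ioc (0 : ℝ) 1, ‖deriv (fun t : ℝ => g (w (x + t • (y - x)))) t‖ₑ :=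
      enorm_integral_le_lintegral_enorm _
    _ ≤ ∫⁻ t in Ioc (0 : ℝ) 1, ‖y - x‖ₑ * enormFDeriv w (x + t • (y - x)) :=
      lintegral_mono fun t => enorm_deriv_comp_segment_le w g hg hxy t
    _ = ‖y - x‖ₑ * ∫⁻ t in Ioc (0 : ℝ) 1, enormFDeriv w (x + t • (y - x)) :=
      lintegral_const_mul' _ _ enorm_ne_top

theorem enorm_sub_rpow_le_lintegral_enormFDeriv_rpow [CompleteSpace F] {w : E → F} {K : ℝ≥0}
    (hw : LipschitzWith K w) {q : ℝ} (hq : 1 ≤ q) (x y : E) :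
    ‖w y - w x‖ₑ ^ q ≤
      ‖y - x‖ₑ ^ q * ∫⁻ t in Ioc (0 : ℝ) 1, enormFDeriv w (x + t • (y - x)) ^ q := by
  have hq0 : 0 ≤ q := zero_le_one.trans hq
  have : IsProbabilityMeasure ((volume : Measure ℝ).restrict (Ioc (0 : ℝ) 1)) := ⟨by simp⟩
  borelize E
  have hmeas : Measurable fun t : ℝ => enormFDeriv w (x + t • (y - x)) :=
    (measurable_enormFDeriv w).comp (Continuous.measurable (by fun_prop))
  calc ‖w y - w x‖ₑ ^ q
      ≤ (‖y - x‖ₑ * ∫⁻ t in Ioc (0 : ℝ) 1, enormFDeriv w (x + t • (y - x))) ^ q :=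
        ENNReal.rpow_le_rpow (enorm_sub_le_lintegral_enormFDeriv hw x y) hq0
    _ = ‖y - x‖ₑ ^ q * (∫⁻ t in Ioc (0 : ℝ) 1, enormFDeriv w (x + t • (y - x))) ^ q :=
        ENNReal.mul_rpow_of_nonneg _ _ hq0
    _ ≤ ‖y - x‖ₑ ^ q * ∫⁻ t in Ioc (0 : ℝ) 1, enormFDeriv w (x + t • (y - x)) ^ q :=
        mul_le_mul' le_rfl (rpow_lintegral_le_lintegral_rpow _ hq hmeas.aemeasurable)

end SegmentInequality

section ConvexPoincare

variable {E : Type*} [NormedAddCommGroup E] [NormedSpace ℝ E] [FiniteDimensional ℝ E]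
  [MeasurableSpace E] [BorelSpace E] {μ : Measure E} [μ.IsAddHaarMeasure] {D : Set E}
  {h : E → ℝ≥0∞}

theorem setLIntegral_comp_add_smul_le (hD : MeasurableSet D) (hh : Measurable h) {a : ℝ}
    (ha : 1 / 2 ≤ a) {b : E} (hmaps : MapsTo (fun y => b + a • y) D D) :
    ∫⁻ y in D, h (b + a • y) ∂μ ≤ 2 ^ Module.finrank ℝ E * ∫⁻ y in D, h y ∂μ := by
  have ha0 : 0 < a := by linarith
  have hmeas : Measurable (D.indicator h) := hh.indicator hD
  have hscale : ENNReal.ofReal |(a ^ Module.finrank ℝ E)⁻¹| ≤ 2 ^ Module.finrank ℝ E := by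
    rw [abs_of_pos (by positivity), ← inv_pow, ENNReal.ofReal_pow (by positivity)]
    refine pow_le_pow_left₀ zero_le (ENNReal.ofReal_le_of_le_toReal ?_) _
    simpa using inv_anti₀ (by norm_num) ha
  calc ∫⁻ y in D, h (b + a • y) ∂μ = ∫⁻ y, D.indicator (fun y => h (b + a • y)) y ∂μ :=
        (lintegral_indicator hD _).symm
    _ ≤ ∫⁻ y, D.indicator h (b + a • y) ∂μ := lintegral_mono fun y =>
        indicator_le (fun z hz => (indicator_of_mem (hmaps hz) h).ge) y
    _ = ∫⁻ z, D.indicator h (b + z) ∂(μ.map (a • ·)) :=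
        (lintegral_map (hmeas.comp (measurable_const_add b)) (measurable_const_smul a)).symm
    _ = ENNReal.ofReal |(a ^ Module.finrank ℝ E)⁻¹| * ∫⁻ z in D, h z ∂μ := by
        rw [Measure.map_addHaar_smul μ ha0.ne', lintegral_smul_measure,
          lintegral_add_left_eq_self, lintegral_indicator hD, smul_eq_mul]
    _ ≤ 2 ^ Module.finrank ℝ E * ∫⁻ y in D, h y ∂μ := mul_le_mul' hscale le_rfl

/- The substitution is made in whichever of `x` and `y` carries the larger coefficient, so that the
Jacobian stays bounded for all `t`. -/
theorem setLIntegral_setLIntegral_segment_le (hD : MeasurableSet D) (hconv : Convex ℝ D)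
    (hh : Measurable h) {t : ℝ} (ht : t ∈ Icc (0 : ℝ) 1) :
    ∫⁻ x in D, ∫⁻ y in D, h (x + t • (y - x)) ∂μ ∂μ ≤
      2 ^ Module.finrank ℝ E * (∫⁻ y in D, h y ∂μ) * μ D := by
  have hmem {x y : E} (hx : x ∈ D) (hy : y ∈ D) : (1 - t) • x + t • y ∈ D :=
    hconv hx hy (sub_nonneg.2 ht.2) ht.1 (sub_add_cancel 1 t)
  have hseg (x y : E) : x + t • (y - x) = (1 - t) • x + t • y := by module
  simp_rw [hseg, ← setLIntegral_const D]
  obtain ht2 | ht2 := le_total (1 / 2) t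
  · exact setLIntegral_mono' hD fun x hx =>
      setLIntegral_comp_add_smul_le hD hh ht2 fun y hy => hmem hx hy
  · rw [lintegral_lintegral_swap (Measurable.aemeasurable (by fun_prop))]
    refine setLIntegral_mono' hD fun y hy => ?_
    simp_rw [add_comm _ (t • y)]
    refine setLIntegral_comp_add_smul_le hD hh (by linarith) fun x hx => ?_
    simpa only [add_comm] using hmem hx hy

theorem setLIntegral_setLIntegral_lintegral_segment_le (hD : MeasurableSet D)
    (hconv : Convex ℝ D) (hh : Measurable h) :
    ∫⁻ x in D, ∫⁻ y in D, (∫⁻ t in Ioc (0 : ℝ) 1, h (x + t • (y - x))) ∂μ ∂μ ≤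
      2 ^ Module.finrank ℝ E * (∫⁻ y in D, h y ∂μ) * μ D := by
  have hmeas : Measurable fun z : (E × ℝ) × E => h (z.1.1 + z.1.2 • (z.2 - z.1.1)) :=
    hh.comp (Continuous.measurable (by fun_prop))
  calc ∫⁻ x in D, ∫⁻ y in D, (∫⁻ t in Ioc (0 : ℝ) 1, h (x + t • (y - x))) ∂μ ∂μ
      = ∫⁻ x in D, (∫⁻ t in Ioc (0 : ℝ) 1, ∫⁻ y in D, h (x + t • (y - x)) ∂μ) ∂μ :=
        lintegral_congr fun x =>
          lintegral_lintegral_swap (hh.comp (Continuous.measurable (by fun_prop))).aemeasurable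
    _ = ∫⁻ t in Ioc (0 : ℝ) 1, ∫⁻ x in D, ∫⁻ y in D, h (x + t • (y - x)) ∂μ ∂μ :=
        lintegral_lintegral_swap hmeas.lintegral_prod_right'.aemeasurable
    _ ≤ ∫⁻ _ in Ioc (0 : ℝ) 1, 2 ^ Module.finrank ℝ E * (∫⁻ y in D, h y ∂μ) * μ D :=
        setLIntegral_mono' measurableSet_Ioc fun t ht =>
          setLIntegral_setLIntegral_segment_le hD hconv hh (Ioc_subset_Icc_self ht)
    _ = 2 ^ Module.finrank ℝ E * (∫⁻ y in D, h y ∂μ) * μ D := by simp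

variable {F : Type*} [NormedAddCommGroup F] [NormedSpace ℝ F] [FiniteDimensional ℝ F]

theorem setLIntegral_enormFDeriv_rpow {w : E → F} {K : ℝ≥0} (hw : LipschitzWith K w) (q : ℝ)
    (D : Set E) :
    ∫⁻ x in D, enormFDeriv w x ^ q ∂μ = ∫⁻ x in D, ‖fderiv ℝ w x‖ₑ ^ q ∂μ := by
  refine lintegral_congr_ae (ae_restrict_of_ae ?_)
  filter_upwards [hw.ae_differentiableAt (μ := μ)] with x hx
  rw [enormFDeriv, if_pos hx]

theorem setLIntegral_setLIntegral_enorm_sub_rpow_le (hD : MeasurableSet D) (hconv : Convex ℝ D)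
    (hDb : Bornology.IsBounded D) {w : E → F} {K : ℝ≥0} (hw : LipschitzWith K w) {q : ℝ}
    (hq : 1 ≤ q) :
    ∫⁻ x in D, ∫⁻ y in D, ‖w y - w x‖ₑ ^ q ∂μ ∂μ ≤
      Metric.ediam D ^ q * 2 ^ Module.finrank ℝ E * (∫⁻ x in D, ‖fderiv ℝ w x‖ₑ ^ q ∂μ) * μ D := by
  have := FiniteDimensional.complete ℝ F
  have hq0 : 0 ≤ q := zero_le_one.trans hq
  have hdiam : Metric.ediam D ^ q ≠ ∞ := ENNReal.rpow_ne_top_of_nonneg hq0 hDb.ediam_ne_top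
  have hpointwise : ∀ x ∈ D, ∀ y ∈ D, ‖w y - w x‖ₑ ^ q ≤
      Metric.ediam D ^ q * ∫⁻ t in Ioc (0 : ℝ) 1, enormFDeriv w (x + t • (y - x)) ^ q :=
    fun x hx y hy => (enorm_sub_rpow_le_lintegral_enormFDeriv_rpow hw hq x y).trans <|
      mul_le_mul' (ENNReal.rpow_le_rpow
        ((edist_eq_enorm_sub y x).symm.trans_le (Metric.edist_le_ediam_of_mem hy hx)) hq0) le_rfl
  calc ∫⁻ x in D, ∫⁻ y in D, ‖w y - w x‖ₑ ^ q ∂μ ∂μ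
      ≤ ∫⁻ x in D, ∫⁻ y in D, (Metric.ediam D ^ q *
          ∫⁻ t in Ioc (0 : ℝ) 1, enormFDeriv w (x + t • (y - x)) ^ q) ∂μ ∂μ :=
        setLIntegral_mono' hD fun x hx => setLIntegral_mono' hD fun y hy => hpointwise x hx y hy
    _ = Metric.ediam D ^ q * ∫⁻ x in D, ∫⁻ y in D,
          (∫⁻ t in Ioc (0 : ℝ) 1, enormFDeriv w (x + t • (y - x)) ^ q) ∂μ ∂μ := by
        simp_rw [lintegral_const_mul' _ _ hdiam]
    _ ≤ Metric.ediam D ^ q * (2 ^ Module.finrank ℝ E *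
          (∫⁻ x in D, enormFDeriv w x ^ q ∂μ) * μ D) :=
        mul_le_mul' le_rfl (setLIntegral_setLIntegral_lintegral_segment_le hD hconv
          ((measurable_enormFDeriv w).pow_const q))
    _ = Metric.ediam D ^ q * 2 ^ Module.finrank ℝ E *
          (∫⁻ x in D, ‖fderiv ℝ w x‖ₑ ^ q ∂μ) * μ D := by
        rw [setLIntegral_enormFDeriv_rpow hw]
        ring

end ConvexPoincare

section Poincare

/-- The Poincaré inequality for `F`-valued Lipschitz functions: up to a constant, such a function
is controlled in `Lᵖ(m)` by its derivative in `Lᵖ(m')`. -/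
def PoincareInequality {E : Type*} [NormedAddCommGroup E] [NormedSpace ℝ E] [MeasurableSpace E]
    (F : Type*) [NormedAddCommGroup F] [NormedSpace ℝ F] (p : ℝ≥0∞) (m m' : Measure E) : Prop :=
  ∃ C : ℝ≥0, ∀ (w : E → F) (K : ℝ≥0), LipschitzWith K w →
    ∃ a : F, eLpNorm (fun x => w x - a) p m ≤ C * eLpNorm (fderiv ℝ w) p m'

theorem exists_eLpNorm_const_le {α β : Type*} [MeasurableSpace α] [MeasurableSpace β]
    (F : Type*) [NormedAddCommGroup F] (m : Measure α) [IsFiniteMeasure m] {m' : Measure β}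
    [IsFiniteMeasure m'] (hm' : m' ≠ 0) {p : ℝ≥0∞} (hp : p ≠ 0) :
    ∃ C : ℝ≥0, ∀ a : F, eLpNorm (fun _ : α => a) p m ≤ C * eLpNorm (fun _ : β => a) p m' := by
  obtain rfl | hm := eq_or_ne m 0
  · exact ⟨0, fun a => by simp⟩
  have hpos : m' univ ^ (1 / p.toReal) ≠ 0 := by
    simp [ENNReal.rpow_eq_zero_iff, hm', measure_ne_top]
  have hfin : m' univ ^ (1 / p.toReal) ≠ ∞ := by finiteness
  lift m univ ^ (1 / p.toReal) / m' univ ^ (1 / p.toReal) to ℝ≥0 using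
    ENNReal.div_ne_top (by finiteness) hpos with C hC
  refine ⟨C, fun a => ?_⟩
  rw [eLpNorm_const a hp hm, eLpNorm_const a hp hm', hC, mul_left_comm,
    ENNReal.div_mul_cancel hpos hfin]

theorem eLpNorm_restrict_union_le {α F : Type*} [MeasurableSpace α] [NormedAddCommGroup F]
    {m : Measure α} {f : α → F} {p : ℝ≥0∞} (hf : AEStronglyMeasurable f m) (hp : 1 ≤ p)
    {A B : Set α} (hA : MeasurableSet A) (hB : MeasurableSet B) :
    eLpNorm f p (m.restrict (A ∪ B)) ≤
      eLpNorm f p (m.restrict A) + eLpNorm f p (m.restrict B) := by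
  rw [← eLpNorm_indicator_eq_eLpNorm_restrict (hA.union hB),
    ← eLpNorm_norm f (μ := m.restrict A), ← eLpNorm_norm f (μ := m.restrict B),
    ← eLpNorm_indicator_eq_eLpNorm_restrict hA, ← eLpNorm_indicator_eq_eLpNorm_restrict hB]
  refine (eLpNorm_mono_real fun x => ?_).trans
    (eLpNorm_add_le (hf.norm.indicator hA) (hf.norm.indicator hB) hp)
  by_cases hxA : x ∈ A <;> by_cases hxB : x ∈ B <;> simp [hxA, hxB]

theorem eLpNorm_const_le_eLpNorm_sub_of_integral_eq_zero {α F : Type*} [MeasurableSpace α]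
    [NormedAddCommGroup F] [NormedSpace ℝ F] [CompleteSpace F] {m : Measure α} [IsFiniteMeasure m]
    {p : ℝ≥0∞} (hp : 1 ≤ p) {u : α → F} (hu : Integrable u m) (hu0 : ∫ x, u x ∂m = 0) (a : F) :
    eLpNorm (fun _ => a) p m ≤ eLpNorm (fun x => u x - a) p m := by
  obtain rfl | hm := eq_or_ne m 0
  · simp
  have hpos : m univ ^ (1 - 1 / p.toReal) ≠ 0 := by
    simp [ENNReal.rpow_eq_zero_iff, hm, measure_ne_top]
  have hfin : m univ ^ (1 - 1 / p.toReal) ≠ ∞ :=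
    ENNReal.rpow_ne_top_of_ne_zero (by simpa using hm) (measure_ne_top m univ)
  have hmean : ∫ x, (u x - a) ∂m = -(m.real univ • a) := by
    rw [integral_sub hu (integrable_const a), hu0, integral_const, zero_sub]
  rw [← ENNReal.mul_le_mul_iff_left hpos hfin]
  calc eLpNorm (fun _ => a) p m * m univ ^ (1 - 1 / p.toReal)
      = ‖a‖ₑ * m univ := by
        rw [eLpNorm_const a (one_pos.trans_le hp).ne' hm, mul_assoc,
          ← ENNReal.rpow_add _ _ (by simpa using hm) (measure_ne_top m univ), add_sub_cancel,
          ENNReal.rpow_one]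
    _ = ‖∫ x, (u x - a) ∂m‖ₑ := by
        rw [hmean, enorm_neg, enorm_smul, Real.enorm_of_nonneg measureReal_nonneg,
          ofReal_measureReal, mul_comm]
    _ ≤ eLpNorm (fun x => u x - a) 1 m := by
        rw [eLpNorm_one_eq_lintegral_enorm]
        exact enorm_integral_le_lintegral_enorm _
    _ ≤ eLpNorm (fun x => u x - a) p m * m univ ^ (1 - 1 / p.toReal) := by
        have hmeas : AEStronglyMeasurable (fun x => u x - a) m :=
          hu.1.sub aestronglyMeasurable_const
        simpa using eLpNorm_le_eLpNorm_mul_rpow_measure_univ hp hmeas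

theorem iUnion_induction_of_isPreconnected {X ι : Type*} [TopologicalSpace X] [Finite ι]
    [Nonempty ι] {V : ι → Set X} (hV : ∀ i, IsOpen (V i)) (hVne : ∀ i, (V i).Nonempty)
    (hconn : IsPreconnected (⋃ i, V i)) {P : Set X → Prop} (hP : ∀ i, P (V i))
    (hunion : ∀ A i, IsOpen A → (A ∩ V i).Nonempty → P A → P (A ∪ V i)) :
    P (⋃ i, V i) := by
  classical
  cases nonempty_fintype ι
  let good : Finset (Finset ι) := {S | S.Nonempty ∧ P (⋃ i ∈ S, V i)}
  have hgood : good.Nonempty := by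
    obtain ⟨i⟩ := ‹Nonempty ι›
    exact ⟨{i}, by simpa [good] using hP i⟩
  obtain ⟨S, hS, hmax⟩ := good.exists_max_image Finset.card hgood
  obtain ⟨⟨i, hiS⟩, hPS⟩ : S.Nonempty ∧ P (⋃ i ∈ S, V i) := by simpa [good] using hS
  suffices hSuniv : S = Finset.univ by simpa [hSuniv] using hPS
  by_contra hne
  obtain ⟨j, hjS⟩ : ∃ j, j ∉ S := by simpa [Finset.eq_univ_iff_forall] using hne
  have hopen (I : Set ι) : IsOpen (⋃ i ∈ I, V i) := isOpen_biUnion fun i _ => hV i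
  obtain ⟨y, -, hyS, hyc⟩ := hconn (⋃ i ∈ (S : Set ι), V i) (⋃ i ∈ (S : Set ι)ᶜ, V i)
    (hopen _) (hopen _)
    (iUnion_subset fun k => (em (k ∈ S)).elim
      (fun hk => subset_union_of_subset_left (subset_biUnion_of_mem (u := V) hk) _)
      fun hk => subset_union_of_subset_right (subset_biUnion_of_mem (u := V) hk) _)
    ((hVne i).imp fun y hy => ⟨mem_iUnion_of_mem i hy, mem_biUnion hiS hy⟩)
    ((hVne j).imp fun y hy => ⟨mem_iUnion_of_mem j hy, mem_biUnion hjS hy⟩)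
  obtain ⟨k, hkS, hyk⟩ := mem_iUnion₂.1 hyc
  have hinsert : insert k S ∈ good := by
    refine Finset.mem_filter.2 ⟨Finset.mem_univ _, S.insert_nonempty k, ?_⟩
    rw [Finset.set_biUnion_insert, union_comm]
    exact hunion _ k (hopen _) ⟨y, hyS, hyk⟩ hPS
  exact absurd (hmax _ hinsert) (by simp [Finset.card_insert_of_notMem hkS])

namespace PoincareInequality

variable {E F : Type*} [NormedAddCommGroup E] [NormedSpace ℝ E] [MeasurableSpace E]
  [NormedAddCommGroup F] [NormedSpace ℝ F] {p : ℝ≥0∞}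

theorem union [SecondCountableTopology E] [OpensMeasurableSpace E] {m m' : Measure E}
    {A B : Set E} (hp : 1 ≤ p) (hA : PoincareInequality F p (m.restrict A) m')
    (hB : PoincareInequality F p (m.restrict B) m') (hAm : MeasurableSet A)
    (hBm : MeasurableSet B) (hBfin : m B ≠ ∞) (hAB : m (A ∩ B) ≠ 0) :
    PoincareInequality F p (m.restrict (A ∪ B)) m' := by
  obtain ⟨CA, hA⟩ := hA
  obtain ⟨CB, hB⟩ := hB
  have : IsFiniteMeasure (m.restrict B) := isFiniteMeasure_restrict.2 hBfin
  have : IsFiniteMeasure (m.restrict (A ∩ B)) :=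
    isFiniteMeasure_restrict.2 (measure_ne_top_of_subset inter_subset_right hBfin)
  obtain ⟨M, hM⟩ := exists_eLpNorm_const_le F (m.restrict B) (m' := m.restrict (A ∩ B))
    (by simpa [Measure.restrict_eq_zero] using hAB) (one_pos.trans_le hp).ne'
  refine ⟨CA + (CB + M * (CB + CA)), fun w K hw => ?_⟩
  obtain ⟨a, ha⟩ := hA w K hw
  obtain ⟨b, hb⟩ := hB w K hw
  set g := eLpNorm (fderiv ℝ w) p m'
  have hmeas (c : F) : AEStronglyMeasurable (fun x => w x - c) m :=
    (hw.continuous.sub continuous_const).aestronglyMeasurable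
  have hconst : eLpNorm (fun _ => b - a) p (m.restrict (A ∩ B)) ≤ CB * g + CA * g := by
    have hsub : (fun _ : E => b - a) = (fun x => w x - a) - fun x => w x - b := by ext; simp
    rw [hsub, add_comm]
    exact (eLpNorm_sub_le (hmeas a).restrict (hmeas b).restrict hp).trans (add_le_add
      ((eLpNorm_mono_measure _ (Measure.restrict_mono inter_subset_left le_rfl)).trans ha)
      ((eLpNorm_mono_measure _ (Measure.restrict_mono inter_subset_right le_rfl)).trans hb))
  have hwB : eLpNorm (fun x => w x - a) p (m.restrict B) ≤ CB * g + M * (CB * g + CA * g) := by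
    have hadd : (fun x => w x - a) = (fun x => w x - b) + fun _ => b - a := by ext; simp
    rw [hadd]
    exact (eLpNorm_add_le (hmeas b).restrict aestronglyMeasurable_const hp).trans
      (add_le_add hb ((hM _).trans (mul_le_mul' le_rfl hconst)))
  refine ⟨a, (eLpNorm_restrict_union_le (hmeas a) hp hAm hBm).trans
    ((add_le_add ha hwB).trans_eq ?_)⟩
  push_cast
  ring

variable [BorelSpace E] [FiniteDimensional ℝ E] {μ : Measure E} [μ.IsAddHaarMeasure]

theorem of_cover {ι : Type*} [Finite ι] {Ω : Set E} {m' : Measure E} {V : ι → Set E}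
    (hp : 1 ≤ p) (hΩ : IsConnected Ω) (hV : ∀ i, IsOpen (V i)) (hVne : ∀ i, (V i).Nonempty)
    (hVfin : ∀ i, μ (V i) ≠ ∞) (hcover : ⋃ i, V i = Ω)
    (h : ∀ i, PoincareInequality F p (μ.restrict (V i)) m') :
    PoincareInequality F p (μ.restrict Ω) m' := by
  have hι : Nonempty ι := by
    rw [← hcover, ← biUnion_univ] at hΩ
    exact (nonempty_biUnion.1 hΩ.nonempty).elim fun i _ => ⟨i⟩
  rw [← hcover] at hΩ ⊢
  refine iUnion_induction_of_isPreconnected hV hVne hΩ.isPreconnected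
    (P := fun A => PoincareInequality F p (μ.restrict A) m') h fun A i hA hAi hPA => ?_
  exact hPA.union hp (h i) hA.measurableSet (hV i).measurableSet (hVfin i)
    ((hA.inter (hV i)).measure_pos μ hAi).ne'

variable [FiniteDimensional ℝ F]

theorem of_convex {D : Set E} (hD : IsOpen D) (hconv : Convex ℝ D)
    (hDb : Bornology.IsBounded D) (hp1 : 1 ≤ p) (hp : p ≠ ∞) :
    PoincareInequality F p (μ.restrict D) (μ.restrict D) := by
  obtain rfl | hne := D.eq_empty_or_nonempty
  · exact ⟨0, fun w K _ => ⟨0, by simp⟩⟩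
  have hp0 : p ≠ 0 := (one_pos.trans_le hp1).ne'
  have hq : 1 ≤ p.toReal := by simpa using ENNReal.toReal_mono hp hp1
  have hq0 : 0 < p.toReal := one_pos.trans_le hq
  have hdiam : Metric.ediam D ^ p.toReal ≠ ∞ :=
    ENNReal.rpow_ne_top_of_nonneg hq0.le hDb.ediam_ne_top
  lift Metric.ediam D ^ p.toReal * 2 ^ Module.finrank ℝ E to ℝ≥0 using by finiteness with C hC
  refine ⟨C ^ p.toReal⁻¹, fun w K hw => ?_⟩
  have hdouble := setLIntegral_setLIntegral_enorm_sub_rpow_le (μ := μ) hD.measurableSet hconv hDb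
    hw hq
  have hmeas : Measurable fun x => ∫⁻ y in D, ‖w y - w x‖ₑ ^ p.toReal ∂μ := by
    have hcont : Continuous fun z : E × E => ‖w z.2 - w z.1‖ₑ := by
      have := hw.continuous
      fun_prop
    exact (hcont.measurable.pow_const _).lintegral_prod_right'
  -- The value of `w` at a point where the inner integral is at most its average will do.
  obtain ⟨x, -, hx⟩ := exists_le_setLAverage (hD.measure_pos μ hne).ne'
    hDb.measure_lt_top.ne hmeas.aemeasurable
  refine ⟨w x, (lintegral_rpow_enorm_le_iff_eLpNorm_le hp0 hp).1 ?_⟩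
  calc ∫⁻ y in D, ‖w y - w x‖ₑ ^ p.toReal ∂μ
      ≤ C * ∫⁻ y in D, ‖fderiv ℝ w y‖ₑ ^ p.toReal ∂μ := by
        rw [hC]
        exact hx.trans (by rw [setLAverage_eq]; exact ENNReal.div_le_of_le_mul hdouble)
    _ = (↑(C ^ p.toReal⁻¹) * eLpNorm (fderiv ℝ w) p (μ.restrict D)) ^ p.toReal := by
        rw [ENNReal.mul_rpow_of_nonneg _ _ hq0.le, lintegral_rpow_enorm_eq_rpow_eLpNorm' hq0,
          eLpNorm_eq_eLpNorm' hp0 hp, ENNReal.coe_rpow_of_nonneg _ (inv_nonneg.2 hq0.le),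
          ENNReal.rpow_inv_rpow hq0.ne']

theorem comp {m m' n n' : Measure E} (h : PoincareInequality F p m m') (hp : p ≠ ∞)
    (hm' : m' ≪ μ) (hn' : n' ≪ μ) {Φ Ψ : E → E} {L : ℝ≥0} (hΨ : LipschitzWith L Ψ)
    (hΦpush : HasBoundedPushforward Φ n m) (hΨpush : HasBoundedPushforward Ψ m' n')
    (hinv : ∀ᵐ y ∂n, Ψ (Φ y) = y) : PoincareInequality F p n n' := by
  have := FiniteDimensional.complete ℝ F
  obtain ⟨C, hC⟩ := h
  obtain ⟨CΦ, hCΦ⟩ := hΦpush.exists_eLpNorm_comp_le (F := F) hp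
  obtain ⟨CΨ, hCΨ⟩ := hΨpush.exists_eLpNorm_comp_le (F := E →L[ℝ] F) hp
  refine ⟨CΦ * (C * (L * CΨ)), fun w K hw => ?_⟩
  obtain ⟨a, ha⟩ := hC (w ∘ Ψ) _ (hw.comp hΨ)
  have hfderiv : ∀ᵐ z ∂m', ‖fderiv ℝ (w ∘ Ψ) z‖ ≤ L * ‖(fderiv ℝ w ∘ Ψ) z‖ := by
    have hdw : ∀ᵐ y ∂n', DifferentiableAt ℝ w y := hn' hw.ae_differentiableAt
    have hdΨ : ∀ᵐ z ∂m', DifferentiableAt ℝ Ψ z := hm' hΨ.ae_differentiableAt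
    filter_upwards [hΨpush.quasiMeasurePreserving.ae hdw, hdΨ] with z hwz hΨz
    rw [fderiv_comp z hwz hΨz, mul_comm]
    exact (ContinuousLinearMap.opNorm_comp_le _ _).trans
      (mul_le_mul_of_nonneg_left (norm_fderiv_le_of_lipschitz ℝ hΨ) (norm_nonneg _))
  refine ⟨a, ?_⟩
  calc eLpNorm (fun y => w y - a) p n
      = eLpNorm ((fun z => (w ∘ Ψ) z - a) ∘ Φ) p n := eLpNorm_congr_ae <| by
        filter_upwards [hinv] with y hy using by simp only [Function.comp_apply, hy]
    _ ≤ CΦ * eLpNorm (fun z => (w ∘ Ψ) z - a) p m := hCΦ _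
        ((hw.comp hΨ).continuous.sub continuous_const).aestronglyMeasurable
    _ ≤ CΦ * (C * (L * (CΨ * eLpNorm (fderiv ℝ w) p n'))) :=
        mul_le_mul' le_rfl <| ha.trans <| mul_le_mul' le_rfl <|
          (eLpNorm_le_nnreal_smul_eLpNorm_of_ae_le_mul hfderiv p).trans <|
            mul_le_mul' le_rfl <| hCΨ _ (measurable_fderiv ℝ w).aestronglyMeasurable
    _ = ↑(CΦ * (C * (L * CΨ))) * eLpNorm (fderiv ℝ w) p n' := by
        push_cast
        ring

theorem of_lipschitzChart {Ω : Set E} {x : E} (c : LipschitzChart Ω x) (hΩ : IsOpen Ω)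
    (hp1 : 1 ≤ p) (hp : p ≠ ∞) :
    PoincareInequality F p (μ.restrict (c.core ∩ Ω)) (μ.restrict Ω) := by
  have hmodel : PoincareInequality F p (μ.restrict c.innerModel) (μ.restrict c.innerModel) :=
    of_convex c.isOpen_innerModel ((convex_ball _ _).inter c.convex_model)
      (Metric.isBounded_ball.subset inter_subset_left) hp1 hp
  refine hmodel.comp hp Measure.absolutelyContinuous_restrict Measure.absolutelyContinuous_restrict
    c.lipschitz_inv c.hasBoundedPushforward_toFun
    (c.hasBoundedPushforward_invFun.mono_left
      (Measure.restrict_mono c.innerModel_subset_outerModel le_rfl)) ?_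
  filter_upwards [ae_restrict_mem (c.isOpen_core.inter hΩ).measurableSet] with y hy
  exact c.leftInvOn hy.1.1

theorem of_hasLipschitzCharts {Ω : Set E} (hΩ : IsOpen Ω) (hΩc : IsConnected Ω)
    (hΩb : Bornology.IsBounded Ω) (hcharts : HasLipschitzCharts Ω) (hp1 : 1 ≤ p) (hp : p ≠ ∞) :
    PoincareInequality F p (μ.restrict Ω) (μ.restrict Ω) := by
  have := FiniteDimensional.proper ℝ E
  obtain ⟨t, c, hcover⟩ := hcharts.exists_finite_cover hΩb
  refine of_cover (V := fun x => (c x).core ∩ Ω) hp1 hΩc (fun x => (c x).isOpen_core.inter hΩ)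
    (fun x => ?_) (fun x => (hΩb.subset inter_subset_right).measure_lt_top.ne) ?_
    fun x => of_lipschitzChart (c x) hΩ hp1 hp
  · exact mem_closure_iff.1 x.1.2 _ (c x).isOpen_core (c x).mem_core
  · rw [← iUnion_inter]
    exact inter_eq_right.2 (subset_closure.trans hcover)

theorem exists_eLpNorm_le_of_integral_eq_zero {m : Measure E} [IsFiniteMeasure m]
    (h : PoincareInequality F p m m) (hp : 1 ≤ p) :
    ∃ C : ℝ≥0, ∀ (u : E → F) (G : E → E →L[ℝ] F), LipschitzApproximable m p u G →
      Integrable u m → ∫ x, u x ∂m = 0 → eLpNorm u p m ≤ C * eLpNorm G p m := by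
  have := FiniteDimensional.complete ℝ F
  obtain ⟨C, hC⟩ := h
  refine ⟨2 * C, fun u G hu hint hmean => ENNReal.le_of_forall_pos_le_add fun δ hδ _ => ?_⟩
  set ε : ℝ≥0∞ := δ / (2 * (1 + C))
  have hε0 : ε ≠ 0 := (ENNReal.div_pos (by simpa using hδ.ne') (by finiteness)).ne'
  obtain ⟨w, K, hw, hwu, hwG⟩ := hu.exists_eLpNorm_sub_le ε hε0
  obtain ⟨a, ha⟩ := hC w K hw
  have hwmeas : AEStronglyMeasurable w m := hw.continuous.aestronglyMeasurable
  have hfderiv : eLpNorm (fderiv ℝ w) p m ≤ ε + eLpNorm G p m := by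
    have hadd : fderiv ℝ w = (fun x => fderiv ℝ w x - G x) + G := by ext; simp
    rw [hadd]
    exact (eLpNorm_add_le ((measurable_fderiv ℝ w).aestronglyMeasurable.sub
      hu.aestronglyMeasurable_fderiv) hu.aestronglyMeasurable_fderiv hp).trans
      (add_le_add hwG le_rfl)
  have hsub : eLpNorm (fun x => u x - a) p m ≤ ε + C * (ε + eLpNorm G p m) := by
    refine (eLpNorm_sub_le_eLpNorm_sub_add hint.1 hwmeas aestronglyMeasurable_const hp).trans
      (add_le_add ?_ (ha.trans (mul_le_mul' le_rfl hfderiv)))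
    exact (eLpNorm_sub_comm u w p m).trans_le hwu
  have hadd : u = (fun x => u x - a) + fun _ => a := by ext; simp
  calc eLpNorm u p m
      ≤ eLpNorm (fun x => u x - a) p m + eLpNorm (fun _ => a) p m := by
        conv_lhs => rw [hadd]
        exact eLpNorm_add_le (hint.1.sub aestronglyMeasurable_const) aestronglyMeasurable_const hp
    _ ≤ 2 * eLpNorm (fun x => u x - a) p m := by
        rw [two_mul]
        gcongr
        exact eLpNorm_const_le_eLpNorm_sub_of_integral_eq_zero hp hint hmean a
    _ ≤ 2 * (ε + C * (ε + eLpNorm G p m)) := mul_le_mul' le_rfl hsub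
    _ = ↑(2 * C) * eLpNorm G p m + 2 * (1 + C) * ε := by
        push_cast
        ring
    _ ≤ ↑(2 * C) * eLpNorm G p m + δ := add_le_add le_rfl ENNReal.mul_div_le

end PoincareInequality

theorem exists_eLpNorm_le_of_isWeakFDerivOn_of_integral_eq_zero {E F : Type*}
    [NormedAddCommGroup E] [NormedSpace ℝ E] [MeasurableSpace E] [BorelSpace E]
    [FiniteDimensional ℝ E] [NormedAddCommGroup F] [NormedSpace ℝ F] [FiniteDimensional ℝ F]
    {μ : Measure E} [μ.IsAddHaarMeasure] {p : ℝ≥0∞} {Ω : Set E} (hΩ : IsOpen Ω)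
    (hΩc : IsConnected Ω) (hΩb : Bornology.IsBounded Ω) (hcharts : HasLipschitzCharts Ω)
    (hp1 : 1 ≤ p) (hp : p ≠ ∞) :
    ∃ C : ℝ≥0, ∀ (u : E → F) (G : E → E →L[ℝ] F), IsWeakFDerivOn μ Ω u G →
      MemLp u p (μ.restrict Ω) → MemLp G p (μ.restrict Ω) → ∫ x in Ω, u x ∂μ = 0 →
      eLpNorm u p (μ.restrict Ω) ≤ C * eLpNorm G p (μ.restrict Ω) := by
  have : IsFiniteMeasure (μ.restrict Ω) := isFiniteMeasure_restrict.2 hΩb.measure_lt_top.ne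
  obtain ⟨C, hC⟩ := (PoincareInequality.of_hasLipschitzCharts (F := F) (μ := μ) hΩ hΩc hΩb hcharts
    hp1 hp).exists_eLpNorm_le_of_integral_eq_zero hp1
  exact ⟨C, fun u G hw hu hG hu0 => hC u G
    (hw.lipschitzApproximable hp1 hp hΩ hΩb hcharts hu hG) (hu.integrable hp1) hu0⟩

end Poincare

section MatrixFields

variable {ι κ : Type*} [Fintype ι] [Fintype κ]

/-- Matrices with the Frobenius norm as a Euclidean space. -/
noncomputable def matrixEuclideanEquiv (ι κ : Type*) [Fintype ι] [Fintype κ] :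
    (ι → κ → ℝ) ≃L[ℝ] EuclideanSpace ℝ (ι × κ) :=
  ((LinearEquiv.curry ℝ ℝ ι κ).symm ≪≫ₗ (WithLp.linearEquiv 2 ℝ _).symm).toContinuousLinearEquiv

theorem mdot_eq_inner (A B : ι → κ → ℝ) :
    mdot A B = ⟪matrixEuclideanEquiv ι κ A, matrixEuclideanEquiv ι κ B⟫ := by
  simp [mdot, matrixEuclideanEquiv, PiLp.inner_apply, Fintype.sum_prod_type, mul_comm]

theorem mnorm_eq_norm (A : ι → κ → ℝ) : mnorm A = ‖matrixEuclideanEquiv ι κ A‖ := by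
  rw [mnorm, mdot_eq_inner, real_inner_self_eq_norm_sq, Real.sqrt_sq (norm_nonneg _)]

theorem vnorm_eq_norm (v : ι → ℝ) : vnorm v = ‖(EuclideanSpace.equiv ι ℝ).symm v‖ := by
  simp [vnorm, EuclideanSpace.norm_eq]

/-- The linear map `ℝⁿ → ℝ^ι` with a given matrix, which translates between gradient matrices and
Fréchet derivatives. -/
noncomputable def gradientEquiv (ι : Type*) [Fintype ι] (n : ℕ) :
    (ι → Fin n → ℝ) ≃L[ℝ] (EVec n →L[ℝ] (ι → ℝ)) :=
  LinearEquiv.toContinuousLinearEquiv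
    { toFun := fun A => ContinuousLinearMap.pi fun a => ∑ i, A a i • EuclideanSpace.proj i
      invFun := fun T a i => T (EuclideanSpace.single i 1) a
      map_add' := fun A B => by ext; simp [add_mul, Finset.sum_add_distrib]
      map_smul' := fun c A => by ext; simp [mul_assoc, Finset.mul_sum]
      left_inv := fun A => by ext; simp
      right_inv := fun T => by
        ext v a
        conv_rhs => rw [← (EuclideanSpace.basisFun (Fin n) ℝ).sum_repr v]
        simp [mul_comm] }

theorem gradientEquiv_symm_apply {n : ℕ} (T : EVec n →L[ℝ] (ι → ℝ)) (a : ι) (i : Fin n) :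
    (gradientEquiv ι n).symm T a i = T (EuclideanSpace.single i 1) a := rfl

theorem exists_mnorm_gradientEquiv_symm_le (ι : Type*) [Fintype ι] (n : ℕ) :
    ∃ C > 0, ∀ T : EVec n →L[ℝ] (ι → ℝ), mnorm ((gradientEquiv ι n).symm T) ≤ C * ‖T‖ := by
  let S := (matrixEuclideanEquiv ι (Fin n)).toContinuousLinearMap.comp
    (gradientEquiv ι n).symm.toContinuousLinearMap
  refine ⟨‖S‖ + 1, by positivity, fun T => ?_⟩
  rw [mnorm_eq_norm]
  exact S.le_of_opNorm_le (le_add_of_nonneg_right zero_le_one) T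

theorem continuous_mnorm : Continuous (mnorm : (ι → κ → ℝ) → ℝ) := by
  simpa only [← mnorm_eq_norm] using (matrixEuclideanEquiv ι κ).continuous.norm

theorem mnorm_nonneg (A : ι → κ → ℝ) : 0 ≤ mnorm A := Real.sqrt_nonneg _

theorem abs_mnorm_sub_mnorm_le (A B : ι → κ → ℝ) : |mnorm A - mnorm B| ≤ mnorm (A - B) := by
  simpa only [mnorm_eq_norm, map_sub] using abs_norm_sub_norm_le _ _

theorem abs_mdot_le (A B : ι → κ → ℝ) : |mdot A B| ≤ mnorm A * mnorm B := by
  simpa only [mdot_eq_inner, mnorm_eq_norm] using abs_real_inner_le_norm _ _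

theorem mdot_sub (A B C : ι → κ → ℝ) : mdot A (B - C) = mdot A B - mdot A C := by
  simp only [mdot_eq_inner, map_sub, inner_sub_right]

theorem integrable_mnorm {α : Type*} {mα : MeasurableSpace α} {m : Measure α}
    {G : α → ι → κ → ℝ} (hG : Integrable G m) : Integrable (fun x => mnorm (G x)) m := by
  simpa only [mnorm_eq_norm] using ((matrixEuclideanEquiv ι κ).integrable_comp_iff.2 hG).norm

theorem aestronglyMeasurable_mdot {α : Type*} {mα : MeasurableSpace α} {m : Measure α}
    {G H : α → ι → κ → ℝ} (hG : AEStronglyMeasurable G m) (hH : AEStronglyMeasurable H m) :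
    AEStronglyMeasurable (fun x => mdot (G x) (H x)) m := by
  let e := matrixEuclideanEquiv ι κ
  simpa only [mdot_eq_inner] using (e.continuous.comp_aestronglyMeasurable hG).inner
    (e.continuous.comp_aestronglyMeasurable hH)

end MatrixFields

section SobolevFields

variable {n : ℕ} {ι : Type*} [Fintype ι] {Ω : Set (EVec n)} {u : EVec n → ι → ℝ}
  {Du : EVec n → ι → Fin n → ℝ}

theorem IsLipschitzDomain.hasLipschitzCharts (hΩ : IsLipschitzDomain Ω) :
    HasLipschitzCharts Ω := by
  obtain ⟨hopen, -, -, hfrontier⟩ := hΩ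
  intro x hx
  by_cases hxΩ : x ∈ Ω
  · exact exists_lipschitzChart_of_mem hopen hxΩ
  · obtain ⟨U, h, hinv, K, e, he, hU, hxU, hh, hhinv, hleft, himage⟩ :=
      hfrontier x (hopen.frontier_eq ▸ ⟨hx, hxΩ⟩)
    exact exists_lipschitzChart_of_flattening he hU hxU hh hhinv hleft himage

theorem HasWeakDerivOn.isWeakFDerivOn (h : HasWeakDerivOn Ω u Du) :
    IsWeakFDerivOn volume Ω u fun x => gradientEquiv ι n (Du x) := by
  obtain ⟨hu, hDu, hweak⟩ := h
  intro φ hφ hφc hφs v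
  have hφ' : Continuous (fderiv ℝ φ) := hφ.continuous_fderiv one_ne_zero
  obtain ⟨B, hB⟩ := hφc.exists_bound_of_continuous hφ.continuous
  obtain ⟨B', hB'⟩ := (hφc.fderiv ℝ).exists_bound_of_continuous hφ'
  have hint : Integrable (fun x => (fderiv ℝ φ x).smulRight (u x)) (volume.restrict Ω) :=
    (ContinuousLinearMap.smulRightL ℝ (EVec n) (ι → ℝ)).integrable_of_bilin_of_bdd_left B'
      hφ'.aestronglyMeasurable (ae_of_all _ hB') hu
  have hint' : Integrable (fun x => φ x • gradientEquiv ι n (Du x)) (volume.restrict Ω) :=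
    ((gradientEquiv ι n).integrable_comp_iff.2 hDu).bdd_smul B hφ.continuous.aestronglyMeasurable
      (ae_of_all _ hB)
  suffices hclm : ∫ x in Ω, (fderiv ℝ φ x).smulRight (u x) =
      -∫ x in Ω, φ x • gradientEquiv ι n (Du x) by
    have happly := congrArg (fun T : EVec n →L[ℝ] (ι → ℝ) => T v) hclm
    simpa only [neg_apply, ContinuousLinearMap.integral_apply hint,
      ContinuousLinearMap.integral_apply hint', ContinuousLinearMap.smulRight_apply,
      smul_apply] using happly
  refine (gradientEquiv ι n).symm.injective ?_
  ext a i
  let entry : (EVec n →L[ℝ] (ι → ℝ)) →L[ℝ] ℝ :=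
    (ContinuousLinearMap.proj (R := ℝ) (φ := fun _ : ι => ℝ) a).comp
      (ContinuousLinearMap.apply ℝ (ι → ℝ) (EuclideanSpace.single i 1 : EVec n))
  have hentry (x : EVec n) : entry (gradientEquiv ι n (Du x)) = Du x a i :=
    congrFun (congrFun ((gradientEquiv ι n).symm_apply_apply (Du x)) a) i
  calc entry (∫ x in Ω, (fderiv ℝ φ x).smulRight (u x))
      = ∫ x in Ω, u x a * fderiv ℝ φ x (EuclideanSpace.single i 1) := by
        rw [← entry.integral_comp_comm hint]
        exact integral_congr_ae (ae_of_all _ fun x => mul_comm _ _)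
    _ = -∫ x in Ω, Du x a i * φ x := hweak φ hφ hφc hφs a i
    _ = entry (-∫ x in Ω, φ x • gradientEquiv ι n (Du x)) := by
        rw [map_neg, ← entry.integral_comp_comm hint']
        simp only [map_smul, hentry, smul_eq_mul, mul_comm]

theorem integral_mul_fderiv_eq_neg_integral_fderiv_mul {E : Type*} [NormedAddCommGroup E]
    [NormedSpace ℝ E] [FiniteDimensional ℝ E] [MeasurableSpace E] [BorelSpace E] {μ : Measure E}
    [μ.IsAddHaarMeasure] {w φ : E → ℝ} {K : ℝ≥0} (hw : LipschitzWith K w) (hφ : ContDiff ℝ 1 φ)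
    (hφc : HasCompactSupport φ) (v : E) :
    ∫ x, w x * fderiv ℝ φ x v ∂μ = -∫ x, fderiv ℝ w x v * φ x ∂μ := by
  obtain ⟨D, hD⟩ := hφ.lipschitzWith_of_hasCompactSupport hφc one_ne_zero
  have hparts := hw.integral_lineDeriv_mul_eq (μ := μ) hD hφc v
  have hfderiv : ∫ x, fderiv ℝ w x v * φ x ∂μ = ∫ x, lineDeriv ℝ w x v * φ x ∂μ := by
    refine integral_congr_ae ?_
    filter_upwards [hw.ae_differentiableAt (μ := μ)] with x hx
    rw [hx.lineDeriv_eq_fderiv]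
  rw [hfderiv, hparts, ← integral_neg]
  congr with x
  rw [((hφ.differentiable one_ne_zero) x).lineDeriv_eq_fderiv, map_neg]
  ring

theorem memW12_iff_memLp_two (h : HasWeakDerivOn Ω u Du) :
    MemW12 Ω u Du ↔ MemLp u 2 (volume.restrict Ω) ∧ MemLp Du 2 (volume.restrict Ω) := by
  let v := (EuclideanSpace.equiv ι ℝ).symm
  let T := matrixEuclideanEquiv ι (Fin n)
  have hvu : AEStronglyMeasurable (fun x => v (u x)) (volume.restrict Ω) :=
    v.continuous.comp_aestronglyMeasurable h.1.1
  have hTDu : AEStronglyMeasurable (fun x => T (Du x)) (volume.restrict Ω) :=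
    T.continuous.comp_aestronglyMeasurable h.2.1.1
  simp only [MemW12, h, true_and, vnorm_eq_norm, mnorm_eq_norm, IntegrableOn]
  rw [← memLp_two_iff_integrable_sq_norm hvu, ← memLp_two_iff_integrable_sq_norm hTDu]
  exact and_congr
    (v.lipschitz.memLp_comp_iff_of_antilipschitz v.antilipschitz (map_zero v))
    (T.lipschitz.memLp_comp_iff_of_antilipschitz T.antilipschitz (map_zero T))

theorem memLp_of_lipschitzWith {K : ℝ≥0} (hΩ : MeasurableSet Ω) (hΩb : Bornology.IsBounded Ω)
    (hu : LipschitzWith K u) (p : ℝ≥0∞) : MemLp u p (volume.restrict Ω) := by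
  obtain ⟨B, hB⟩ := (hu.isBounded_image hΩb).exists_norm_le
  have := isFiniteMeasure_restrict.2 (hΩb.measure_lt_top (μ := volume)).ne
  exact MemLp.of_bound hu.continuous.aestronglyMeasurable B
    (ae_restrict_of_forall_mem hΩ fun x hx => hB _ (mem_image_of_mem u hx))

theorem memLp_gradient_of_lipschitzWith {K : ℝ≥0} (hΩb : Bornology.IsBounded Ω)
    (hu : LipschitzWith K u) (p : ℝ≥0∞) :
    MemLp (fun x => (gradientEquiv ι n).symm (fderiv ℝ u x)) p (volume.restrict Ω) := by
  have := isFiniteMeasure_restrict.2 (hΩb.measure_lt_top (μ := volume)).ne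
  exact (gradientEquiv ι n).symm.toContinuousLinearMap.comp_memLp' <| MemLp.of_bound
    (measurable_fderiv ℝ u).aestronglyMeasurable K (ae_of_all _ fun _ =>
      norm_fderiv_le_of_lipschitz ℝ hu)

theorem integral_mul_fderiv_eq_neg_of_lipschitzWith {K : ℝ≥0} (hu : LipschitzWith K u)
    {φ : EVec n → ℝ} (hφ : ContDiff ℝ 1 φ) (hφc : HasCompactSupport φ) (hφs : tsupport φ ⊆ Ω)
    (a : ι) (i : Fin n) :
    ∫ x in Ω, u x a * fderiv ℝ φ x (EuclideanSpace.single i 1) =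
      -∫ x in Ω, (gradientEquiv ι n).symm (fderiv ℝ u x) a i * φ x := by
  have hφ_zero (x : EVec n) (hx : x ∉ Ω) : φ x = 0 :=
    image_eq_zero_of_notMem_tsupport fun h => hx (hφs h)
  have hfderiv_zero (x : EVec n) (hx : x ∉ Ω) : fderiv ℝ φ x = 0 :=
    image_eq_zero_of_notMem_tsupport fun h => hx (hφs (tsupport_fderiv_subset ℝ h))
  have hua : LipschitzWith (1 * K) fun x => u x a := (LipschitzWith.eval a).comp hu
  have hcomponent : ∀ᵐ x, fderiv ℝ (fun y => u y a) x (EuclideanSpace.single i 1) =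
      (gradientEquiv ι n).symm (fderiv ℝ u x) a i := by
    filter_upwards [hu.ae_differentiableAt] with x hx
    rw [gradientEquiv_symm_apply, ((hasFDerivAt_pi'.1 hx.hasFDerivAt) a).fderiv]
    rfl
  rw [setIntegral_eq_integral_of_forall_compl_eq_zero
      fun x hx => by rw [hfderiv_zero x hx, zero_apply, mul_zero],
    setIntegral_eq_integral_of_forall_compl_eq_zero fun x hx => by rw [hφ_zero x hx, mul_zero],
    integral_mul_fderiv_eq_neg_integral_fderiv_mul hua hφ hφc]
  exact congrArg Neg.neg (integral_congr_ae (hcomponent.mono fun x hx => congrArg (· * φ x) hx))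

theorem memW12_of_lipschitzWith {K : ℝ≥0} (hΩ : MeasurableSet Ω) (hΩb : Bornology.IsBounded Ω)
    (hu : LipschitzWith K u) :
    MemW12 Ω u fun x => (gradientEquiv ι n).symm (fderiv ℝ u x) := by
  have hweak : HasWeakDerivOn Ω u fun x => (gradientEquiv ι n).symm (fderiv ℝ u x) :=
    ⟨memLp_one_iff_integrable.1 (memLp_of_lipschitzWith hΩ hΩb hu 1),
      memLp_one_iff_integrable.1 (memLp_gradient_of_lipschitzWith hΩb hu 1),
      fun _ hφ hφc hφs => integral_mul_fderiv_eq_neg_of_lipschitzWith hu hφ hφc hφs⟩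
  exact (memW12_iff_memLp_two hweak).2
    ⟨memLp_of_lipschitzWith hΩ hΩb hu 2, memLp_gradient_of_lipschitzWith hΩb hu 2⟩

theorem HasWeakDerivOn.exists_memW12_integral_mnorm_sub_le (h : HasWeakDerivOn Ω u Du)
    (hΩ : IsLipschitzDomain Ω) (hΩb : Bornology.IsBounded Ω) {ε : ℝ} (hε : 0 < ε) :
    ∃ w Dw, MemW12 Ω w Dw ∧ ∫ x in Ω, mnorm (Dw x - Du x) ≤ ε := by
  obtain ⟨C, hC, hmnorm⟩ := exists_mnorm_gradientEquiv_symm_le ι n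
  have hDu : Integrable (fun x => gradientEquiv ι n (Du x)) (volume.restrict Ω) :=
    (gradientEquiv ι n).integrable_comp_iff.2 h.2.1
  have happrox := h.isWeakFDerivOn.lipschitzApproximable le_rfl ENNReal.one_ne_top hΩ.1 hΩb
    hΩ.hasLipschitzCharts (memLp_one_iff_integrable.2 h.1) (memLp_one_iff_integrable.2 hDu)
  obtain ⟨w, K, hw, -, hclose⟩ := happrox.exists_eLpNorm_sub_le (ENNReal.ofReal (ε / C))
    (ENNReal.ofReal_pos.2 (by positivity)).ne'
  have hw' := memW12_of_lipschitzWith hΩ.1.measurableSet hΩb hw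
  refine ⟨w, _, hw', ?_⟩
  have hmeas : AEStronglyMeasurable (fun x => fderiv ℝ w x - gradientEquiv ι n (Du x))
      (volume.restrict Ω) := (measurable_fderiv ℝ w).aestronglyMeasurable.sub hDu.1
  have hint : Integrable (fun x => fderiv ℝ w x - gradientEquiv ι n (Du x))
      (volume.restrict Ω) :=
    memLp_one_iff_integrable.1 ⟨hmeas, hclose.trans_lt ENNReal.ofReal_lt_top⟩
  calc ∫ x in Ω, mnorm ((gradientEquiv ι n).symm (fderiv ℝ w x) - Du x)
      ≤ ∫ x in Ω, C * ‖fderiv ℝ w x - gradientEquiv ι n (Du x)‖ := by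
        refine integral_mono (integrable_mnorm (hw'.1.2.1.sub h.2.1)) (hint.norm.const_mul _)
          fun x => ?_
        simpa using hmnorm (fderiv ℝ w x - gradientEquiv ι n (Du x))
    _ ≤ C * (ε / C) := by
        rw [integral_const_mul, integral_norm_eq_lintegral_enorm hmeas,
          ← eLpNorm_one_eq_lintegral_enorm]
        gcongr
        exact ENNReal.toReal_le_of_le_ofReal (by positivity) hclose
    _ = ε := mul_div_cancel₀ ε hC.ne'

end SobolevFields

section PoincareFields

theorem eLpNorm_clm_comp_le {α E F : Type*} {_ : MeasurableSpace α} {m : Measure α}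
    [NormedAddCommGroup E] [NormedSpace ℝ E] [NormedAddCommGroup F] [NormedSpace ℝ F]
    (T : E →L[ℝ] F) (g : α → E) (p : ℝ≥0∞) :
    eLpNorm (fun x => T (g x)) p m ≤ ‖T‖₊ * eLpNorm g p m :=
  eLpNorm_le_nnreal_smul_eLpNorm_of_ae_le_mul (ae_of_all _ fun x => T.le_opNNNorm (g x)) p

theorem integral_norm_rpow_le_of_eLpNorm_le {α E F : Type*} {mα : MeasurableSpace α}
    {m : Measure α} [NormedAddCommGroup E] [NormedAddCommGroup F] {p : ℝ≥0∞} (hp0 : p ≠ 0)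
    (hp : p ≠ ∞) {g : α → E} {h : α → F} (hg : MemLp g p m) (hh : MemLp h p m) {C : ℝ≥0}
    (hle : eLpNorm g p m ≤ C * eLpNorm h p m) :
    ∫ x, ‖g x‖ ^ p.toReal ∂m ≤ (C : ℝ) ^ p.toReal * ∫ x, ‖h x‖ ^ p.toReal ∂m := by
  have hp_pos : 0 < p.toReal := ENNReal.toReal_pos hp0 hp
  have hg_nonneg : 0 ≤ ∫ x, ‖g x‖ ^ p.toReal ∂m := by positivity
  have hh_nonneg : 0 ≤ ∫ x, ‖h x‖ ^ p.toReal ∂m := by positivity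
  rw [hg.eLpNorm_eq_integral_rpow_norm hp0 hp, hh.eLpNorm_eq_integral_rpow_norm hp0 hp,
    ← ENNReal.ofReal_coe_nnreal, ← ENNReal.ofReal_mul C.coe_nonneg,
    ENNReal.ofReal_le_ofReal_iff (by positivity)] at hle
  have hpow := Real.rpow_le_rpow (by positivity) hle hp_pos.le
  rwa [Real.mul_rpow C.coe_nonneg (by positivity), Real.rpow_inv_rpow hg_nonneg hp_pos.ne',
    Real.rpow_inv_rpow hh_nonneg hp_pos.ne'] at hpow

theorem exists_integral_vnorm_rpow_le_of_zeroMean {n : ℕ} {Ω : Set (EVec n)}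
    (hΩ : IsLipschitzDomain Ω) (hΩb : Bornology.IsBounded Ω) (ι : Type*) [Fintype ι] {p : ℝ≥0∞}
    (hp1 : 1 ≤ p) (hp : p ≠ ∞) :
    ∃ C ≥ (0 : ℝ), ∀ (u : EVec n → ι → ℝ) Du, HasWeakDerivOn Ω u Du →
      MemLp u p (volume.restrict Ω) → MemLp Du p (volume.restrict Ω) → ZeroMean Ω u →
      ∫ x in Ω, vnorm (u x) ^ p.toReal ≤ C * ∫ x in Ω, mnorm (Du x) ^ p.toReal := by
  obtain ⟨C, hC⟩ := exists_eLpNorm_le_of_isWeakFDerivOn_of_integral_eq_zero (μ := volume)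
    (F := ι → ℝ) hΩ.1 hΩ.2.2.1 hΩb hΩ.hasLipschitzCharts hp1 hp
  let v : (ι → ℝ) →L[ℝ] EuclideanSpace ℝ ι := (EuclideanSpace.equiv ι ℝ).symm
  let A : (ι → Fin n → ℝ) →L[ℝ] EuclideanSpace ℝ (ι × Fin n) := matrixEuclideanEquiv ι (Fin n)
  let G : EuclideanSpace ℝ (ι × Fin n) →L[ℝ] EVec n →L[ℝ] (ι → ℝ) :=
    (gradientEquiv ι n).toContinuousLinearMap.comp
      (matrixEuclideanEquiv ι (Fin n)).symm.toContinuousLinearMap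
  refine ⟨(‖v‖₊ * C * ‖G‖₊ : ℝ≥0) ^ p.toReal, by positivity, fun u Du hw hu hDu hmean => ?_⟩
  have hG (x : EVec n) : G (A (Du x)) = gradientEquiv ι n (Du x) := by simp [G, A]
  have hpoincare := hC u (fun x => gradientEquiv ι n (Du x)) hw.isWeakFDerivOn hu
    ((gradientEquiv ι n).toContinuousLinearMap.comp_memLp' hDu)
    (funext fun a => by rw [eval_integral fun b => hw.1.eval b]; exact hmean a)
  simp only [vnorm_eq_norm, mnorm_eq_norm]
  refine integral_norm_rpow_le_of_eLpNorm_le (by positivity) hp (v.comp_memLp' hu)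
    (A.comp_memLp' hDu) ?_
  calc eLpNorm (fun x => v (u x)) p (volume.restrict Ω)
      ≤ ‖v‖₊ * eLpNorm u p (volume.restrict Ω) := eLpNorm_clm_comp_le v u p
    _ ≤ ‖v‖₊ * (C * eLpNorm (fun x => G (A (Du x))) p (volume.restrict Ω)) := by
        simp only [hG]
        gcongr
    _ ≤ ‖v‖₊ * (C * (‖G‖₊ * eLpNorm (fun x => A (Du x)) p (volume.restrict Ω))) := by
        gcongr
        exact eLpNorm_clm_comp_le G _ p
    _ = (‖v‖₊ * C * ‖G‖₊ : ℝ≥0) * eLpNorm (fun x => A (Du x)) p (volume.restrict Ω) := by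
        push_cast
        ring

end PoincareFields

section ConvexLinearGrowth

variable {f : ℝ → ℝ} {a L M : ℝ}

theorem monotoneOn_of_convexOn_of_hasDerivWithinAt_zero (hf : ConvexOn ℝ (Ici a) f)
    (hf' : HasDerivWithinAt f 0 (Ici a) a) : MonotoneOn f (Ici a) := by
  have hmin (t : ℝ) (ht : t ∈ Ici a) : f a ≤ f t := by
    rcases (mem_Ici.1 ht).eq_or_lt with rfl | hat
    · rfl
    · have hslope := hf.le_slope_of_hasDerivWithinAt self_mem_Ici ht hat hf'
      rw [slope_def_field, le_div_iff₀ (sub_pos.2 hat)] at hslope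
      linarith
  intro s hs t ht hst
  exact (hf.le_max_of_mem_Icc self_mem_Ici ht ⟨hs, hst⟩).trans (max_le (hmin t ht) le_rfl)

theorem sub_le_mul_sub_of_convexOn_of_le_affine (hf : ConvexOn ℝ (Ici a) f)
    (hgrowth : ∀ t ∈ Ici a, f t ≤ L * t + M) {s t : ℝ} (hs : s ∈ Ici a) (hst : s < t) :
    f t - f s ≤ L * (t - s) := by
  by_contra! hlt
  have ht : t ∈ Ici a := le_trans hs hst.le
  obtain ⟨q, hq⟩ : ∃ q, (f t - f s) / (t - s) = q := ⟨_, rfl⟩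
  have hLq : 0 < q - L := by rwa [← hq, sub_pos, lt_div_iff₀ (sub_pos.2 hst)]
  obtain ⟨r, hlarge, htr⟩ := (((tendsto_id.const_mul_atTop hLq).eventually_gt_atTop
    (M - f s + q * s)).and (eventually_gt_atTop t)).exists
  have hr : r ∈ Ici a := le_trans ht htr.le
  have hsecant := hf.secant_mono hs ht hr hst.ne' (hst.trans htr).ne' htr.le
  rw [hq, le_div_iff₀ (by linarith)] at hsecant
  have := hgrowth r hr
  simp only [id] at hlarge
  linarith

theorem lipschitzOnWith_of_convexOn_of_monotoneOn_of_le_affine (hf : ConvexOn ℝ (Ici a) f)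
    (hmono : MonotoneOn f (Ici a)) (hgrowth : ∀ t ∈ Ici a, f t ≤ L * t + M) :
    LipschitzOnWith L.toNNReal f (Ici a) := by
  refine LipschitzOnWith.of_le_add_mul _ fun t ht s hs => ?_
  rcases le_or_gt t s with hts | hst
  · exact (hmono ht hs hts).trans (le_add_of_nonneg_right (by positivity))
  · have hslope := sub_le_mul_sub_of_convexOn_of_le_affine hf hgrowth hs hst
    rw [Real.dist_eq, abs_of_pos (sub_pos.2 hst)]
    have := mul_le_mul_of_nonneg_right (Real.le_coe_toNNReal L) (sub_pos.2 hst).le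
    linarith

theorem exists_mul_sub_le_of_tendsto_div {m b : ℝ} (hf : ContinuousOn f (Ici 0))
    (hb : Tendsto (fun t => f t / t) atTop (𝓝 b)) (hm : m < b) :
    ∃ C, ∀ t ∈ Ici (0 : ℝ), m * t - C ≤ f t := by
  obtain ⟨R, hR⟩ := ((hb.eventually_const_lt hm).and (eventually_gt_atTop 0)).exists_forall_of_atTop
  have hcont : ContinuousOn (fun t => m * t - f t) (Icc 0 R) :=
    (by fun_prop : ContinuousOn (fun t => m * t) _).sub (hf.mono Icc_subset_Ici_self)
  obtain ⟨C, hC⟩ := isCompact_Icc.exists_bound_of_continuousOn hcont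
  refine ⟨max C 0, fun t ht => ?_⟩
  rcases le_total t R with htR | hRt
  · have := (le_abs_self _).trans (hC t ⟨ht, htR⟩)
    linarith [le_max_left C 0]
  · obtain ⟨hmt, ht_pos⟩ := hR t hRt
    rw [lt_div_iff₀ ht_pos] at hmt
    linarith [le_max_right C 0]

end ConvexLinearGrowth

section VanishingRegularisation

variable {X ι : Type*} {A B : Set X} {F Q : X → ℝ} {l : Filter ι} {τ : ι → ℝ}
  {x : ι → X}

theorem tendsto_regularised_sInf_image [l.NeBot] (hBA : B ⊆ A) (hbdd : BddBelow (F '' A))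
    (hdense : ∀ a ∈ A, ∀ ε > 0, ∃ b ∈ B, F b ≤ F a + ε) (hQ : ∀ b ∈ B, 0 ≤ Q b)
    (hτ_nonneg : ∀ k, 0 ≤ τ k) (hτ : Tendsto τ l (𝓝 0)) (hx : ∀ᶠ k in l, x k ∈ B)
    (hmin : ∀ᶠ k in l, ∀ b ∈ B, F (x k) + τ k * Q (x k) ≤ F b + τ k * Q b) :
    Tendsto (fun k => F (x k) + τ k * Q (x k)) l (𝓝 (sInf (F '' A))) := by
  refine tendsto_order.2 ⟨fun c hc => ?_, fun c hc => ?_⟩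
  · filter_upwards [hx] with k hk
    have := csInf_le hbdd (mem_image_of_mem F (hBA hk))
    have := mul_nonneg (hτ_nonneg k) (hQ _ hk)
    linarith
  · obtain ⟨k₀, hk₀⟩ := hx.exists
    obtain ⟨_, ⟨a, ha, rfl⟩, hac⟩ := exists_lt_of_csInf_lt ⟨_, mem_image_of_mem F (hBA hk₀)⟩ hc
    obtain ⟨b, hb, hba⟩ := hdense a ha ((c - F a) / 2) (by linarith)
    have hlim : Tendsto (fun k => F b + τ k * Q b) l (𝓝 (F b)) := by
      simpa using (hτ.mul_const (Q b)).const_add (F b)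
    filter_upwards [hmin, hlim.eventually_lt_const (by linarith : F b < c)] with k hk hbk
    exact (hk b hb).trans_lt hbk

theorem tendsto_sInf_image_of_le (hbdd : BddBelow (F '' A)) (hx : ∀ᶠ k in l, x k ∈ A)
    {R : ι → ℝ} (hle : ∀ᶠ k in l, F (x k) ≤ R k) (hR : Tendsto R l (𝓝 (sInf (F '' A)))) :
    Tendsto (fun k => F (x k)) l (𝓝 (sInf (F '' A))) :=
  tendsto_of_tendsto_of_tendsto_of_le_of_le' tendsto_const_nhds hR
    (hx.mono fun _ hk => csInf_le hbdd (mem_image_of_mem F hk)) hle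

end VanishingRegularisation

section Functional

variable {n N : ℕ} {Ω : Set (EVec n)} {f : ℝ → ℝ} {K : ℝ≥0} {M : ℝ}
  {T₀ D D' : EVec n → Fin N → Fin n → ℝ}

theorem exists_lt_ae_mnorm_le_of_linfNormOn_lt {b : ℝ} (h : linfNormOn Ω T₀ < ENNReal.ofReal b) :
    ∃ M ≥ 0, M < b ∧ ∀ᵐ x ∂volume.restrict Ω, mnorm (T₀ x) ≤ M := by
  refine ⟨(linfNormOn Ω T₀).toReal, ENNReal.toReal_nonneg, ENNReal.toReal_lt_of_lt_ofReal h, ?_⟩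
  filter_upwards [ENNReal.ae_le_essSup fun x => ENNReal.ofReal (mnorm (T₀ x))] with x hx
  exact (ENNReal.ofReal_le_iff_le_toReal h.ne_top).1 hx

theorem abs_integrand_sub_le {ι κ : Type*} [Fintype ι] [Fintype κ] {S : ι → κ → ℝ}
    (hf : LipschitzOnWith K f (Ici 0)) (hS : mnorm S ≤ M) (A B : ι → κ → ℝ) :
    |(f (mnorm A) - mdot S A) - (f (mnorm B) - mdot S B)| ≤ (K + M) * mnorm (A - B) := by
  have hfAB : |f (mnorm A) - f (mnorm B)| ≤ K * mnorm (A - B) :=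
    (hf.dist_le_mul _ (mnorm_nonneg A) _ (mnorm_nonneg B)).trans
      (mul_le_mul_of_nonneg_left (abs_mnorm_sub_mnorm_le A B) K.coe_nonneg)
  have hSAB : |mdot S (A - B)| ≤ M * mnorm (A - B) :=
    (abs_mdot_le S _).trans (mul_le_mul_of_nonneg_right hS (mnorm_nonneg _))
  calc |(f (mnorm A) - mdot S A) - (f (mnorm B) - mdot S B)|
      = |(f (mnorm A) - f (mnorm B)) - mdot S (A - B)| := by
        rw [mdot_sub]
        ring_nf
    _ ≤ |f (mnorm A) - f (mnorm B)| + |mdot S (A - B)| := abs_sub _ _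
    _ ≤ (K + M) * mnorm (A - B) := by linarith

theorem integrable_integrand (hΩb : Bornology.IsBounded Ω) (hf : LipschitzOnWith K f (Ici 0))
    (hT : AEStronglyMeasurable T₀ (volume.restrict Ω))
    (hM : ∀ᵐ x ∂volume.restrict Ω, mnorm (T₀ x) ≤ M) (hD : IntegrableOn D Ω) :
    IntegrableOn (fun x => f (mnorm (D x)) - mdot (T₀ x) (D x)) Ω := by
  have : IsFiniteMeasure (volume.restrict Ω) :=
    isFiniteMeasure_restrict.2 hΩb.measure_lt_top.ne
  have hcont : Continuous fun A : Fin N → Fin n → ℝ => f (mnorm A) :=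
    hf.continuousOn.comp_continuous continuous_mnorm mnorm_nonneg
  have hbound : Integrable (fun x => |f 0| + (K + M) * mnorm (D x)) (volume.restrict Ω) :=
    (integrable_const _).add ((integrable_mnorm hD).const_mul _)
  refine hbound.mono' ((hcont.comp_aestronglyMeasurable hD.1).sub
    (aestronglyMeasurable_mdot hT hD.1)) ?_
  filter_upwards [hM] with x hx
  have hlip := abs_integrand_sub_le hf hx (D x) 0
  have hzero : f (mnorm (0 : Fin N → Fin n → ℝ)) - mdot (T₀ x) 0 = f 0 := by simp [mnorm, mdot]
  rw [hzero, sub_zero] at hlip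
  rw [Real.norm_eq_abs]
  linarith [abs_sub_abs_le_abs_sub (f (mnorm (D x)) - mdot (T₀ x) (D x)) (f 0)]

theorem FF_le_FF_add (hΩb : Bornology.IsBounded Ω) (hf : LipschitzOnWith K f (Ici 0))
    (hT : AEStronglyMeasurable T₀ (volume.restrict Ω))
    (hM : ∀ᵐ x ∂volume.restrict Ω, mnorm (T₀ x) ≤ M) (hD : IntegrableOn D Ω)
    (hD' : IntegrableOn D' Ω) :
    FF Ω f T₀ D ≤ FF Ω f T₀ D' + (K + M) * ∫ x in Ω, mnorm (D x - D' x) := by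
  have hint := integrable_integrand hΩb hf hT hM hD
  have hint' := integrable_integrand hΩb hf hT hM hD'
  have hdiff : IntegrableOn (fun x => (K + M) * mnorm (D x - D' x)) Ω :=
    (integrable_mnorm (hD.sub hD')).const_mul _
  rw [FF, FF, ← integral_const_mul, ← integral_add hint' hdiff]
  refine integral_mono_ae hint (hint'.add hdiff) ?_
  filter_upwards [hM] with x hx
  exact sub_le_iff_le_add'.1 ((le_abs_self _).trans (abs_integrand_sub_le hf hx (D x) (D' x)))

theorem exists_coercive_FF {b : ℝ} (hΩb : Bornology.IsBounded Ω)
    (hf : LipschitzOnWith K f (Ici 0)) (hb : Tendsto (fun t => f t / t) atTop (𝓝 b))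
    (hT : AEStronglyMeasurable T₀ (volume.restrict Ω))
    (hM : ∀ᵐ x ∂volume.restrict Ω, mnorm (T₀ x) ≤ M) (hMb : M < b) :
    ∃ c > 0, ∃ C, ∀ D : EVec n → Fin N → Fin n → ℝ, IntegrableOn D Ω →
      c * ∫ x in Ω, mnorm (D x) ≤ FF Ω f T₀ D + C := by
  obtain ⟨m, hMm, hmb⟩ := exists_between hMb
  obtain ⟨C, hC⟩ := exists_mul_sub_le_of_tendsto_div hf.continuousOn hb hmb
  have : IsFiniteMeasure (volume.restrict Ω) :=
    isFiniteMeasure_restrict.2 hΩb.measure_lt_top.ne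
  refine ⟨m - M, sub_pos.2 hMm, ∫ _ in Ω, C, fun D hD => ?_⟩
  have hint := integrable_integrand hΩb hf hT hM hD
  rw [FF, ← integral_const_mul, ← integral_add hint (integrable_const C)]
  refine integral_mono_ae ((integrable_mnorm hD).const_mul _) (hint.add (integrable_const C)) ?_
  filter_upwards [hM] with x hx
  have hfD := hC _ (mnorm_nonneg (D x))
  have hTD := (le_abs_self _).trans (abs_mdot_le (T₀ x) (D x))
  have := mul_le_mul_of_nonneg_right hx (mnorm_nonneg (D x))
  linarith

/-- The weak gradients of the functions in `W^{1,1}(Ω; ℝ^N)`. -/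
def w11Gradients (Ω : Set (EVec n)) (N : ℕ) : Set (EVec n → Fin N → Fin n → ℝ) :=
  {Dw | ∃ w, HasWeakDerivOn Ω w Dw}

/-- The weak gradients of the functions in `W^{1,2}(Ω; ℝ^N)`. -/
def w12Gradients (Ω : Set (EVec n)) (N : ℕ) : Set (EVec n → Fin N → Fin n → ℝ) :=
  {Dw | ∃ w, MemW12 Ω w Dw}

theorem w12Gradients_subset_w11Gradients : w12Gradients Ω N ⊆ w11Gradients Ω N :=
  fun _ ⟨w, hw⟩ => ⟨w, hw.1⟩

theorem zero_mem_w12Gradients : 0 ∈ w12Gradients Ω N :=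
  ⟨0, by simp [MemW12, HasWeakDerivOn, vnorm, mnorm, mdot, IntegrableOn]⟩

theorem integrableOn_of_mem_w11Gradients (hD : D ∈ w11Gradients Ω N) : IntegrableOn D Ω :=
  hD.choose_spec.2.1

theorem exists_mem_w12Gradients_FF_le (hΩ : IsLipschitzDomain Ω) (hΩb : Bornology.IsBounded Ω)
    (hf : LipschitzOnWith K f (Ici 0)) (hT : AEStronglyMeasurable T₀ (volume.restrict Ω))
    (hM : ∀ᵐ x ∂volume.restrict Ω, mnorm (T₀ x) ≤ M) (hM0 : 0 ≤ M) (hD : D ∈ w11Gradients Ω N)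
    {ε : ℝ} (hε : 0 < ε) : ∃ D' ∈ w12Gradients Ω N, FF Ω f T₀ D' ≤ FF Ω f T₀ D + ε := by
  obtain ⟨w, hw⟩ := hD
  obtain ⟨w', D', hw', hclose⟩ := hw.exists_memW12_integral_mnorm_sub_le hΩ hΩb
    (by positivity : 0 < ε / (K + M + 1))
  refine ⟨D', ⟨w', hw'⟩, (FF_le_FF_add hΩb hf hT hM hw'.1.2.1 hw.2.1).trans ?_⟩
  have hεle : (K + M) * (ε / (K + M + 1)) ≤ ε := by
    rw [mul_div_assoc', div_le_iff₀ (by positivity)]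
    linarith
  gcongr
  exact (mul_le_mul_of_nonneg_left hclose (by positivity)).trans hεle

theorem exists_poincare_bound_of_memW12 (hΩ : IsLipschitzDomain Ω)
    (hΩb : Bornology.IsBounded Ω) (N : ℕ) :
    ∃ C ≥ 0, ∀ (u : EVec n → Fin N → ℝ) Du, MemW12 Ω u Du → ZeroMean Ω u →
      ∫ x in Ω, vnorm (u x) ≤ C * ∫ x in Ω, mnorm (Du x) ∧
      ∫ x in Ω, vnorm (u x) ^ 2 ≤ C * ∫ x in Ω, mnorm (Du x) ^ 2 := by
  obtain ⟨C₁, hC₁, hpoincare₁⟩ := exists_integral_vnorm_rpow_le_of_zeroMean hΩ hΩb (Fin N)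
    le_rfl ENNReal.one_ne_top
  obtain ⟨C₂, -, hpoincare₂⟩ := exists_integral_vnorm_rpow_le_of_zeroMean hΩ hΩb (Fin N)
    one_le_two ENNReal.ofNat_ne_top
  simp only [ENNReal.toReal_one, Real.rpow_one] at hpoincare₁
  simp only [ENNReal.toReal_ofNat, Real.rpow_ofNat] at hpoincare₂
  refine ⟨max C₁ C₂, hC₁.trans (le_max_left _ _), fun u Du hu hmean => ⟨?_, ?_⟩⟩
  · refine (hpoincare₁ u Du hu.1 (memLp_one_iff_integrable.2 hu.1.1)
      (memLp_one_iff_integrable.2 hu.1.2.1) hmean).trans ?_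
    exact mul_le_mul_of_nonneg_right (le_max_left _ _) (integral_nonneg fun _ => mnorm_nonneg _)
  · obtain ⟨hu₂, hDu₂⟩ := (memW12_iff_memLp_two hu.1).1 hu
    refine (hpoincare₂ u Du hu.1 hu₂ hDu₂ hmean).trans ?_
    exact mul_le_mul_of_nonneg_right (le_max_right _ _) (integral_nonneg fun _ => sq_nonneg _)

theorem exists_bound_of_FFk_le {c C : ℝ} (hΩ : IsLipschitzDomain Ω)
    (hΩb : Bornology.IsBounded Ω) (hc : 0 < c)
    (hcoercive : ∀ D : EVec n → Fin N → Fin n → ℝ, IntegrableOn D Ω →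
      c * ∫ x in Ω, mnorm (D x) ≤ FF Ω f T₀ D + C) (E : ℝ) :
    ∃ B : ℝ, ∀ (k : ℕ) (u : EVec n → Fin N → ℝ) Du, MemW12 Ω u Du → ZeroMean Ω u →
      FFk Ω f T₀ k Du ≤ E →
      ((∫ x in Ω, vnorm (u x)) + ∫ x in Ω, mnorm (Du x)) +
        (k : ℝ)⁻¹ * ((∫ x in Ω, vnorm (u x) ^ 2) + ∫ x in Ω, mnorm (Du x) ^ 2) ≤ B := by
  obtain ⟨P, hP, hpoincare⟩ := exists_poincare_bound_of_memW12 hΩ hΩb N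
  refine ⟨(P + 1) * ((E + C) / c + 2 * (E + C)), fun k u Du hu hmean hE => ?_⟩
  obtain ⟨hu₁, hu₂⟩ := hpoincare u Du hu hmean
  have hcoe := hcoercive Du hu.1.2.1
  have hI : 0 ≤ ∫ x in Ω, mnorm (Du x) := integral_nonneg fun _ => mnorm_nonneg _
  have hJ : 0 ≤ (k : ℝ)⁻¹ * ∫ x in Ω, mnorm (Du x) ^ 2 :=
    mul_nonneg (by positivity) (integral_nonneg fun _ => sq_nonneg _)
  have hI' : 0 ≤ c * ∫ x in Ω, mnorm (Du x) := mul_nonneg hc.le hI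
  rw [FFk, mul_inv, mul_assoc] at hE
  have hgrad₁ : ∫ x in Ω, mnorm (Du x) ≤ (E + C) / c := by
    rw [le_div_iff₀' hc]
    linarith
  have hgrad₂ : (k : ℝ)⁻¹ * ∫ x in Ω, mnorm (Du x) ^ 2 ≤ 2 * (E + C) := by linarith
  calc ((∫ x in Ω, vnorm (u x)) + ∫ x in Ω, mnorm (Du x)) +
        (k : ℝ)⁻¹ * ((∫ x in Ω, vnorm (u x) ^ 2) + ∫ x in Ω, mnorm (Du x) ^ 2)
      ≤ (P * (∫ x in Ω, mnorm (Du x)) + ∫ x in Ω, mnorm (Du x)) +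
        (k : ℝ)⁻¹ * (P * (∫ x in Ω, mnorm (Du x) ^ 2) + ∫ x in Ω, mnorm (Du x) ^ 2) := by
        gcongr
    _ = (P + 1) * ((∫ x in Ω, mnorm (Du x)) + (k : ℝ)⁻¹ * ∫ x in Ω, mnorm (Du x) ^ 2) := by ring
    _ ≤ (P + 1) * ((E + C) / c + 2 * (E + C)) := by gcongr

theorem tendsto_FFk_sInf_image {C : ℝ} (hlower : ∀ D ∈ w11Gradients Ω N, -C ≤ FF Ω f T₀ D)
    (hdense : ∀ D ∈ w11Gradients Ω N, ∀ ε > 0,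
      ∃ D' ∈ w12Gradients Ω N, FF Ω f T₀ D' ≤ FF Ω f T₀ D + ε)
    {Du : ℕ → EVec n → Fin N → Fin n → ℝ} (hDu : ∀ k, 0 < k → Du k ∈ w12Gradients Ω N)
    (hmin : ∀ k, 0 < k → ∀ D ∈ w12Gradients Ω N, FFk Ω f T₀ k (Du k) ≤ FFk Ω f T₀ k D) :
    Tendsto (fun k => FFk Ω f T₀ k (Du k)) atTop (𝓝 (sInf (FF Ω f T₀ '' w11Gradients Ω N))) ∧
    Tendsto (fun k => FF Ω f T₀ (Du k)) atTop (𝓝 (sInf (FF Ω f T₀ '' w11Gradients Ω N))) := by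
  have hbdd : BddBelow (FF Ω f T₀ '' w11Gradients Ω N) := ⟨-C, forall_mem_image.2 hlower⟩
  have hτ_nonneg (k : ℕ) : 0 ≤ (2 * (k : ℝ))⁻¹ := by positivity
  have hτ : Tendsto (fun k : ℕ => (2 * (k : ℝ))⁻¹) atTop (𝓝 0) :=
    (tendsto_natCast_atTop_atTop.const_mul_atTop two_pos).inv_tendsto_atTop
  have hpos : ∀ᶠ k : ℕ in atTop, 0 < k := eventually_gt_atTop 0
  have henergy (D : EVec n → Fin N → Fin n → ℝ) : 0 ≤ ∫ x in Ω, mnorm (D x) ^ 2 :=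
    integral_nonneg fun _ => sq_nonneg _
  have hFFk : Tendsto (fun k => FFk Ω f T₀ k (Du k)) atTop
      (𝓝 (sInf (FF Ω f T₀ '' w11Gradients Ω N))) :=
    tendsto_regularised_sInf_image (x := Du) w12Gradients_subset_w11Gradients hbdd hdense
      (fun D _ => henergy D) hτ_nonneg hτ (hpos.mono hDu) (hpos.mono hmin)
  have hle (k : ℕ) : FF Ω f T₀ (Du k) ≤ FFk Ω f T₀ k (Du k) :=
    le_add_of_nonneg_right (mul_nonneg (hτ_nonneg k) (henergy _))
  exact ⟨hFFk, tendsto_sInf_image_of_le hbdd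
    (hpos.mono fun k hk => w12Gradients_subset_w11Gradients (hDu k hk)) (.of_forall hle) hFFk⟩

end Functional

theorem approximate_minimising_sequence_general {n N : ℕ} (Ω : Set (EVec n))
    (hΩ : IsLipschitzDomain Ω) (hΩbdd : Bornology.IsBounded Ω) {K : ℝ≥0} (f : ℝ → ℝ)
    (hf : LipschitzOnWith K f (Ici 0)) (finf : ℝ)
    (hfinf : Tendsto (fun t => f t / t) atTop (𝓝 finf)) (T₀ : EVec n → Fin N → Fin n → ℝ)
    (hTmeas : AEStronglyMeasurable T₀ (volume.restrict Ω))
    (hTsmall : linfNormOn Ω T₀ < ENNReal.ofReal finf)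
    (u : ℕ → EVec n → Fin N → ℝ) (Du : ℕ → EVec n → Fin N → Fin n → ℝ)
    (hmem : ∀ k, 0 < k → MemW12 Ω (u k) (Du k)) (hzero : ∀ k, 0 < k → ZeroMean Ω (u k))
    (hmin : ∀ k, 0 < k →
      ∀ (w : EVec n → Fin N → ℝ) (Dw : EVec n → Fin N → Fin n → ℝ),
        MemW12 Ω w Dw → FFk Ω f T₀ k (Du k) ≤ FFk Ω f T₀ k Dw) :
    Tendsto (fun k => FF Ω f T₀ (Du k)) atTop
      (𝓝 (sInf {r : ℝ | ∃ (w : EVec n → Fin N → ℝ) (Dw : EVec n → Fin N → Fin n → ℝ),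
        HasWeakDerivOn Ω w Dw ∧ r = FF Ω f T₀ Dw})) ∧
    Tendsto (fun k => sInf {r : ℝ | ∃ (w : EVec n → Fin N → ℝ)
        (Dw : EVec n → Fin N → Fin n → ℝ), MemW12 Ω w Dw ∧ r = FFk Ω f T₀ k Dw}) atTop
      (𝓝 (sInf {r : ℝ | ∃ (w : EVec n → Fin N → ℝ) (Dw : EVec n → Fin N → Fin n → ℝ),
        HasWeakDerivOn Ω w Dw ∧ r = FF Ω f T₀ Dw})) ∧
    Tendsto (fun k : ℕ => (k : ℝ)⁻¹ * ∫ x in Ω, mnorm (Du k x) ^ 2) atTop (𝓝 0) ∧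
    ∃ C : ℝ, ∀ k, 0 < k →
      ((∫ x in Ω, vnorm (u k x)) + ∫ x in Ω, mnorm (Du k x)) +
        (k : ℝ)⁻¹ * ((∫ x in Ω, vnorm (u k x) ^ 2) + ∫ x in Ω, mnorm (Du k x) ^ 2) ≤ C := by
  obtain ⟨M, hM0, hMfinf, hM⟩ := exists_lt_ae_mnorm_le_of_linfNormOn_lt hTsmall
  obtain ⟨c, hc, C, hcoercive⟩ := exists_coercive_FF hΩbdd hf hfinf hTmeas hM hMfinf
  have hlower : ∀ D ∈ w11Gradients Ω N, -C ≤ FF Ω f T₀ D := fun D hD => by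
    have := hcoercive D (integrableOn_of_mem_w11Gradients hD)
    have : 0 ≤ c * ∫ x in Ω, mnorm (D x) :=
      mul_nonneg hc.le (integral_nonneg fun _ => mnorm_nonneg _)
    linarith
  have hDu (k : ℕ) (hk : 0 < k) : Du k ∈ w12Gradients Ω N := ⟨u k, hmem k hk⟩
  have hmin' (k : ℕ) (hk : 0 < k) : ∀ D ∈ w12Gradients Ω N,
      FFk Ω f T₀ k (Du k) ≤ FFk Ω f T₀ k D := fun D ⟨w, hw⟩ => hmin k hk w D hw
  obtain ⟨hFFk, hFF⟩ := tendsto_FFk_sInf_image hlower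
    (fun D hD ε hε => exists_mem_w12Gradients_FF_le hΩ hΩbdd hf hTmeas hM hM0 hD hε) hDu hmin'
  have hinf : {r : ℝ | ∃ (w : EVec n → Fin N → ℝ) (Dw : EVec n → Fin N → Fin n → ℝ),
      HasWeakDerivOn Ω w Dw ∧ r = FF Ω f T₀ Dw} = FF Ω f T₀ '' w11Gradients Ω N := by
    ext r
    simp only [w11Gradients, mem_ofPred_eq, mem_image]
    grind
  rw [hinf]
  refine ⟨hFF, hFFk.congr' ?_, ?_, ?_⟩
  · filter_upwards [eventually_gt_atTop 0] with k hk
    refine Eq.symm (IsLeast.csInf_eq ⟨⟨u k, Du k, hmem k hk, rfl⟩, ?_⟩)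
    rintro _ ⟨w, Dw, hw, rfl⟩
    exact hmin k hk w Dw hw
  · have hdiff := (hFFk.sub hFF).const_mul 2
    rw [sub_self, mul_zero] at hdiff
    refine hdiff.congr fun k => ?_
    rw [FFk, mul_inv]
    ring
  · obtain ⟨B, hB⟩ := exists_bound_of_FFk_le hΩ hΩbdd hc hcoercive (FF Ω f T₀ 0)
    refine ⟨B, fun k hk => hB k (u k) (Du k) (hmem k hk) (hzero k hk) ?_⟩
    exact (hmin' k hk 0 zero_mem_w12Gradients).trans_eq (by simp [FFk, mnorm, mdot])

/-- **Corollary 3.2.** The minimisers `u_k` of the regularised functionals `𝔉_k` (with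
zero mean) form a minimising sequence for `𝔉` in `W^{1,1}(Ω;ℝ^N)`, with
`lim_k inf 𝔉_k = inf 𝔉`; moreover `k^{-1/2}∇u_k → 0` in `L²(Ω;ℝ^{N×n})` and
`sup_k (‖u_k‖_{W^{1,1}} + k⁻¹‖u_k‖²_{W^{1,2}}) < ∞`. -/
theorem approximate_minimising_sequence
    {n N : ℕ} (Ω : Set (EVec n))
    (hΩ : IsLipschitzDomain Ω) (hΩbdd : Bornology.IsBounded Ω)
    (ν L : ℝ) (hν : 0 < ν) (hνL : ν ≤ L)
    (f f' : ℝ → ℝ)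
    (hderiv : ∀ t ∈ Set.Ici (0:ℝ), HasDerivWithinAt f (f' t) (Set.Ici 0) t)
    (hf'cont : ContinuousOn f' (Set.Ici 0))
    (hconv : ConvexOn ℝ (Set.Ici 0) f)
    (hf0 : f 0 = 0) (hf'0 : f' 0 = 0)
    (hgrowth : ∀ t ∈ Set.Ici (0:ℝ), ν * t - L ≤ f t ∧ f t ≤ L * (t + 1))
    (finf : ℝ) (hfinf : Filter.Tendsto (fun t => f t / t) Filter.atTop (nhds finf))
    (T₀ : EVec n → Fin N → Fin n → ℝ)
    (hTmeas : AEStronglyMeasurable T₀ (volume.restrict Ω))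
    (hTsmall : linfNormOn Ω T₀ < ENNReal.ofReal finf)
    (u : ℕ → EVec n → Fin N → ℝ) (Du : ℕ → EVec n → Fin N → Fin n → ℝ)
    (hmem : ∀ k, 0 < k → MemW12 Ω (u k) (Du k))
    (hzero : ∀ k, 0 < k → ZeroMean Ω (u k))
    (hmin : ∀ k, 0 < k →
      ∀ (w : EVec n → Fin N → ℝ) (Dw : EVec n → Fin N → Fin n → ℝ),
        MemW12 Ω w Dw → FFk Ω f T₀ k (Du k) ≤ FFk Ω f T₀ k Dw) :
    Filter.Tendsto (fun k => FF Ω f T₀ (Du k)) Filter.atTop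
      (nhds (sInf {r : ℝ | ∃ (w : EVec n → Fin N → ℝ)
        (Dw : EVec n → Fin N → Fin n → ℝ),
        HasWeakDerivOn Ω w Dw ∧ r = FF Ω f T₀ Dw})) ∧
    Filter.Tendsto (fun k => sInf {r : ℝ | ∃ (w : EVec n → Fin N → ℝ)
        (Dw : EVec n → Fin N → Fin n → ℝ), MemW12 Ω w Dw ∧ r = FFk Ω f T₀ k Dw})
      Filter.atTop
      (nhds (sInf {r : ℝ | ∃ (w : EVec n → Fin N → ℝ)
        (Dw : EVec n → Fin N → Fin n → ℝ),
        HasWeakDerivOn Ω w Dw ∧ r = FF Ω f T₀ Dw})) ∧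
    Filter.Tendsto (fun k : ℕ => (k : ℝ)⁻¹ * ∫ x in Ω, mnorm (Du k x) ^ 2)
      Filter.atTop (nhds 0) ∧
    ∃ C : ℝ, ∀ k, 0 < k →
      ((∫ x in Ω, vnorm (u k x)) + ∫ x in Ω, mnorm (Du k x)) +
        (k : ℝ)⁻¹ * ((∫ x in Ω, vnorm (u k x) ^ 2) + ∫ x in Ω, mnorm (Du k x) ^ 2)
          ≤ C := by
  have hmono : MonotoneOn f (Ici 0) :=
    monotoneOn_of_convexOn_of_hasDerivWithinAt_zero hconv
      (by simpa only [hf'0] using hderiv 0 self_mem_Ici)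
  have hlip : LipschitzOnWith L.toNNReal f (Ici 0) :=
    lipschitzOnWith_of_convexOn_of_monotoneOn_of_le_affine hconv hmono
      fun t ht => (hgrowth t ht).2.trans_eq (mul_add_one L t)
  exact approximate_minimising_sequence_general Ω hΩ hΩbdd f hlip finf hfinf T₀ hTmeas hTsmall
    u Du hmem hzero hmin
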